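/- (Regret decomposition.) Fix δ ∈ (0,1) and suppose the constant c_b > 0 in the Q-EarlySettled-Advantage algorithm is sufficiently large. Then with probability at least 1 − δ: Σ_{k=1}^{K} ( V_1^k(s_1^k) − V_1^{π^k}(s_1^k) ) ≤ R_1 + R_2 + R_3, where R_1 = Σ_{h=1}^{H} (1+1/H)^{h−1} ( H·S·A + 8·c_b·H²·(SA)^{3/4}·K^{1/4}·log(SAT/δ) + Σ_{k=1}^{K} (P_{h,s_h^k,a_h^k} − P_h^k)(V_{h+1}^* − V_{h+1}^{π^k}) ); R_2 = Σ_{h=1}^{H} (1+1/H)^{h−1} Σ_{k=1}^{K} B_h^{R,k}(s_h^k, a_h^k); R_3 = Σ_{h=1}^{H} Σ_{k=1}^{K} λ_h^k · ( (P_h^k − P_{h,s_h^k,a_h^k})(V_{h+1}^* − V_{h+1}^{R,k}) + (1/N_h^k(s_h^k,a_h^k)) · Σ_{i=1}^{N_h^k(s_h^k,a_h^k)} ( V_{h+1}^{R,k_h^i(s_h^k,a_h^k)}(s_{h+1}^{k_h^i(s_h^k,a_h^k)}) − P_{h,s_h^k,a_h^k} V_{h+1}^{R,k} ) ); and λ_h^k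 = (1+1/H)^{h−1} · Σ_{n=N_h^k(s_h^k,a_h^k)}^{N_h^{K−1}(s_h^k,a_h^k)} η_{N_h^k(s_h^k,a_h^k)}^{n}. -/

import Mathlib

open MeasureTheory Finset

/-- A finite-horizon MDP with horizon `H`, non-stationary transition kernels `P h s a ·`,
and deterministic rewards `r h s a ∈ [0,1]`. -/
structure MDP (S A : Type) [Fintype S] [Fintype A] where
  H : ℕ
  P : ℕ → S → A → S → ℝ
  r : ℕ → S → A → ℝ
  H_pos : 1 ≤ H
  P_nonneg : ∀ h s a s', 0 ≤ P h s a s'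
  P_sum_one : ∀ h s a, ∑ s', P h s a s' = 1
  r_nonneg : ∀ h s a, 0 ≤ r h s a
  r_le_one : ∀ h s a, r h s a ≤ 1

namespace MDP

variable {S A : Type} [Fintype S] [Fintype A] [Nonempty S] [Nonempty A]

/-- Optimal Q-function, defined by backward induction on the remaining number of steps
(`Qstar` below instantiates the fuel as `H + 1 - h`, so that values at step `H + 1`
vanish and the Bellman optimality equation holds for `1 ≤ h ≤ H`). -/
noncomputable def QstarAux (M : MDP S A) : ℕ → ℕ → S → A → ℝ
  | 0, _, _, _ => 0
  | (fuel + 1), h, s, a =>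
      M.r h s a + ∑ s' : S, M.P h s a s' *
        (Finset.univ.sup' Finset.univ_nonempty fun a' => QstarAux M fuel (h + 1) s' a')

/-- The optimal Q-function `Q_h^⋆`. -/
noncomputable def Qstar (M : MDP S A) (h : ℕ) (s : S) (a : A) : ℝ :=
  QstarAux M (M.H + 1 - h) h s a

/-- The optimal value function `V_h^⋆`. -/
noncomputable def Vstar (M : MDP S A) (h : ℕ) (s : S) : ℝ :=
  Finset.univ.sup' Finset.univ_nonempty fun a => M.Qstar h s a

/-- Value function `V_h^π` of a deterministic policy `π`, by backward induction. -/
noncomputable def VpolAux (M : MDP S A) (π : ℕ → S → A) : ℕ → ℕ → S → ℝ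
  | 0, _, _ => 0
  | (fuel + 1), h, s =>
      M.r h s (π h s) + ∑ s' : S, M.P h s (π h s) s' * VpolAux M π fuel (h + 1) s'

/-- The value function `V_h^π` of a deterministic policy `π`. -/
noncomputable def Vpol (M : MDP S A) (π : ℕ → S → A) (h : ℕ) (s : S) : ℝ :=
  VpolAux M π (M.H + 1 - h) h s

/-- Conditional variance `Var_{h,s,a}(V) = P_{h,s,a}(V²) - (P_{h,s,a} V)²`. -/
noncomputable def varP (M : MDP S A) (h : ℕ) (s : S) (a : A) (V : S → ℝ) : ℝ :=
  (∑ s' : S, M.P h s a s' * (V s') ^ 2) - (∑ s' : S, M.P h s a s' * V s') ^ 2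

end MDP

/-- The Q-learning rate `η_n = (H+1)/(H+n)`. -/
noncomputable def lr (H n : ℕ) : ℝ := (H + 1 : ℝ) / (H + n)

/-- `η_n^N`: equal to `η_n ∏_{i=n+1}^N (1 - η_i)` for `1 ≤ n ≤ N` (hence `η_n` for `N = n`),
`0` for `N < n`, and `η_0^N = ∏_{i=1}^N (1 - η_i)` (which is `1` if `N = 0` and `0` otherwise,
since `1 - η_1 = 0`). -/
noncomputable def lrProd (H n N : ℕ) : ℝ :=
  if N < n then 0
  else (if n = 0 then 1 else lr H n) * ∏ i ∈ Finset.Icc (n + 1) N, (1 - lr H i)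

/-- The log factor `log(SAT/δ)` with `T = KH`. -/
noncomputable def iota (S A : Type) [Fintype S] [Fintype A] (K H : ℕ) (δ : ℝ) : ℝ :=
  Real.log ((Fintype.card S : ℝ) * (Fintype.card A) * (K * H) / δ)

/-- The trajectory `(s_h^k, a_h^k)` is generated by online interaction with the MDP `M`:
states and actions are adapted to the filtration `𝓕` (with time index `(k-1)H + h`
corresponding to step `h` of episode `k`), and conditionally on the history,
`s_{h+1}^k ∼ P_h(· | s_h^k, a_h^k)`. -/
def IsMDPTrajectory {S A : Type} [Fintype S] [Fintype A] [DecidableEq S]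
    [MeasurableSpace S] [MeasurableSpace A]
    {Ω : Type} [m0 : MeasurableSpace Ω] (μ : Measure Ω)
    (M : MDP S A) (K : ℕ) (𝓕 : Filtration ℕ m0)
    (st : ℕ → ℕ → Ω → S) (ac : ℕ → ℕ → Ω → A) : Prop :=
  (∀ k ∈ Finset.Icc 1 K, ∀ h ∈ Finset.Icc 1 (M.H + 1),
      Measurable[𝓕 ((k - 1) * M.H + h)] (st k h)) ∧
  (∀ k ∈ Finset.Icc 1 K, ∀ h ∈ Finset.Icc 1 M.H,
      Measurable[𝓕 ((k - 1) * M.H + h)] (ac k h)) ∧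
  (∀ k ∈ Finset.Icc 1 K, ∀ h ∈ Finset.Icc 1 M.H, ∀ s' : S,
      μ[(fun ω => if st k (h + 1) ω = s' then (1 : ℝ) else 0) | 𝓕 ((k - 1) * M.H + h)]
        =ᵐ[μ] fun ω => M.P h (st k h ω) (ac k h ω) s')

/-- The **Q-EarlySettled-Advantage** algorithm (Algorithms 1–2 of the paper), run for `K`
episodes on the MDP `M` with bonus constant `cb` and failure probability `δ`.
The fields record the trajectory `(s_h^k, a_h^k)`, the greedy policies `π^k`, the visit
counters, all Q/value estimates and auxiliary statistics, together with the initialization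
and update equations defining the algorithm.  A quantity carrying episode index `k`
denotes its value at the *beginning* of episode `k` (`N k` is the counter at the *end*
of episode `k`, with `N 0 = 0`); `kvis n h s a` is the episode of the `n`-th visit of
`(s,a)` at step `h`. -/
structure QLAlg {S A : Type} [Fintype S] [Fintype A] [Nonempty S] [Nonempty A]
    [DecidableEq S] [DecidableEq A] (M : MDP S A) (K : ℕ) (cb δ : ℝ) where
  /-- `s_h^k` : the state visited at step `h` of episode `k` -/
  st : ℕ → ℕ → S
  /-- `a_h^k` : the action taken at step `h` of episode `k` -/
  ac : ℕ → ℕ → A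
  /-- `π^k` : the greedy policy executed during episode `k` -/
  pol : ℕ → ℕ → S → A
  /-- `N_h^k(s,a)` : number of visits of `(s,a)` at step `h` by the end of episode `k` -/
  N : ℕ → ℕ → S → A → ℕ
  /-- the combined Q-estimate `Q_h^k` -/
  Q : ℕ → ℕ → S → A → ℝ
  /-- the Hoeffding-bonus optimistic estimate `Q_h^{UCB,k}` -/
  QUCB : ℕ → ℕ → S → A → ℝ
  /-- the pessimistic estimate `Q_h^{LCB,k}` -/
  QLCB : ℕ → ℕ → S → A → ℝ
  /-- the reference-advantage estimate `Q_h^{R,k}` -/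
  QR : ℕ → ℕ → S → A → ℝ
  /-- `V_h^k` -/
  V : ℕ → ℕ → S → ℝ
  /-- `V_h^{LCB,k}` -/
  VLCB : ℕ → ℕ → S → ℝ
  /-- the reference value `V_h^{R,k}` -/
  VR : ℕ → ℕ → S → ℝ
  /-- the flag `u_ref^k` governing the final reference update -/
  uref : ℕ → ℕ → S → Prop
  /-- running mean `μ_h^{ref,k}` of the reference -/
  muRef : ℕ → ℕ → S → A → ℝ
  /-- running second moment `σ_h^{ref,k}` of the reference -/
  sigRef : ℕ → ℕ → S → A → ℝ
  /-- running weighted mean `μ_h^{adv,k}` of the advantage -/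
  muAdv : ℕ → ℕ → S → A → ℝ
  /-- running weighted second moment `σ_h^{adv,k}` of the advantage -/
  sigAdv : ℕ → ℕ → S → A → ℝ
  /-- the aggregated bonus `B_h^{R,k}` -/
  BR : ℕ → ℕ → S → A → ℝ
  /-- the bonus difference `δ_h^{R,k}` -/
  dR : ℕ → ℕ → S → A → ℝ
  /-- `bR k h` : the exploration bonus `b_h^R` computed at step `h` of episode `k` -/
  bR : ℕ → ℕ → ℝ
  /-- `kvis n h s a = k_h^n(s,a)` : the episode of the `n`-th visit of `(s,a)` at step `h` -/
  kvis : ℕ → ℕ → S → A → ℕ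
  greedy : ∀ k h s a, Q k h s a ≤ Q k h s (pol k h s)
  act_eq : ∀ k h, ac k h = pol k h (st k h)
  N_init : ∀ h s a, N 0 h s a = 0
  N_upd : ∀ k ∈ Icc 1 K, ∀ h ∈ Icc 1 M.H, ∀ s a,
    N k h s a = N (k - 1) h s a + (if s = st k h ∧ a = ac k h then 1 else 0)
  Q_init : ∀ h ∈ Icc 1 M.H, ∀ s a, Q 1 h s a = M.H
  QUCB_init : ∀ h ∈ Icc 1 M.H, ∀ s a, QUCB 1 h s a = M.H
  QR_init : ∀ h ∈ Icc 1 M.H, ∀ s a, QR 1 h s a = M.H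
  QLCB_init : ∀ h ∈ Icc 1 M.H, ∀ s a, QLCB 1 h s a = 0
  V_init : ∀ h ∈ Icc 1 M.H, ∀ s, V 1 h s = M.H
  VR_init : ∀ h ∈ Icc 1 M.H, ∀ s, VR 1 h s = M.H
  VLCB_init : ∀ h ∈ Icc 1 M.H, ∀ s, VLCB 1 h s = 0
  uref_init : ∀ h s, uref 1 h s
  mom_init : ∀ h s a, muRef 1 h s a = 0 ∧ sigRef 1 h s a = 0 ∧ muAdv 1 h s a = 0 ∧
    sigAdv 1 h s a = 0 ∧ BR 1 h s a = 0 ∧ dR 1 h s a = 0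
  V_terminal : ∀ k s, V k (M.H + 1) s = 0 ∧ VR k (M.H + 1) s = 0 ∧ VLCB k (M.H + 1) s = 0
  QUCB_upd : ∀ k ∈ Icc 1 K, ∀ h ∈ Icc 1 M.H, ∀ s a,
    QUCB (k + 1) h s a =
      if s = st k h ∧ a = ac k h then
        (1 - lr M.H (N k h s a)) * QUCB k h s a
          + lr M.H (N k h s a) *
            (M.r h s a + V k (h + 1) (st k (h + 1))
              + cb * Real.sqrt ((M.H : ℝ) ^ 3 * iota S A K M.H δ / (N k h s a)))
      else QUCB k h s a
  QLCB_upd : ∀ k ∈ Icc 1 K, ∀ h ∈ Icc 1 M.H, ∀ s a,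
    QLCB (k + 1) h s a =
      if s = st k h ∧ a = ac k h then
        (1 - lr M.H (N k h s a)) * QLCB k h s a
          + lr M.H (N k h s a) *
            (M.r h s a + VLCB k (h + 1) (st k (h + 1))
              - cb * Real.sqrt ((M.H : ℝ) ^ 3 * iota S A K M.H δ / (N k h s a)))
      else QLCB k h s a
  muRef_upd : ∀ k ∈ Icc 1 K, ∀ h ∈ Icc 1 M.H, ∀ s a,
    muRef (k + 1) h s a =
      if s = st k h ∧ a = ac k h then
        (1 - 1 / (N k h s a : ℝ)) * muRef k h s a
          + (1 / (N k h s a : ℝ)) * VR k (h + 1) (st k (h + 1))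
      else muRef k h s a
  sigRef_upd : ∀ k ∈ Icc 1 K, ∀ h ∈ Icc 1 M.H, ∀ s a,
    sigRef (k + 1) h s a =
      if s = st k h ∧ a = ac k h then
        (1 - 1 / (N k h s a : ℝ)) * sigRef k h s a
          + (1 / (N k h s a : ℝ)) * (VR k (h + 1) (st k (h + 1))) ^ 2
      else sigRef k h s a
  muAdv_upd : ∀ k ∈ Icc 1 K, ∀ h ∈ Icc 1 M.H, ∀ s a,
    muAdv (k + 1) h s a =
      if s = st k h ∧ a = ac k h then
        (1 - lr M.H (N k h s a)) * muAdv k h s a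
          + lr M.H (N k h s a) * (V k (h + 1) (st k (h + 1)) - VR k (h + 1) (st k (h + 1)))
      else muAdv k h s a
  sigAdv_upd : ∀ k ∈ Icc 1 K, ∀ h ∈ Icc 1 M.H, ∀ s a,
    sigAdv (k + 1) h s a =
      if s = st k h ∧ a = ac k h then
        (1 - lr M.H (N k h s a)) * sigAdv k h s a
          + lr M.H (N k h s a) *
              (V k (h + 1) (st k (h + 1)) - VR k (h + 1) (st k (h + 1))) ^ 2
      else sigAdv k h s a
  BR_upd : ∀ k ∈ Icc 1 K, ∀ h ∈ Icc 1 M.H, ∀ s a,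
    BR (k + 1) h s a =
      if s = st k h ∧ a = ac k h then
        cb * Real.sqrt (iota S A K M.H δ / (N k h s a)) *
          (Real.sqrt (sigRef (k + 1) h s a - (muRef (k + 1) h s a) ^ 2)
            + Real.sqrt (M.H) * Real.sqrt (sigAdv (k + 1) h s a - (muAdv (k + 1) h s a) ^ 2))
      else BR k h s a
  dR_upd : ∀ k ∈ Icc 1 K, ∀ h ∈ Icc 1 M.H, ∀ s a,
    dR (k + 1) h s a =
      if s = st k h ∧ a = ac k h then BR (k + 1) h s a - BR k h s a else dR k h s a
  bR_def : ∀ k ∈ Icc 1 K, ∀ h ∈ Icc 1 M.H,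
    bR k h = BR (k + 1) h (st k h) (ac k h)
      + (1 - lr M.H (N k h (st k h) (ac k h))) * dR (k + 1) h (st k h) (ac k h)
          / lr M.H (N k h (st k h) (ac k h))
      + cb * (M.H : ℝ) ^ 2 * iota S A K M.H δ
          / (N k h (st k h) (ac k h) : ℝ) ^ ((3 : ℝ) / 4)
  QR_upd : ∀ k ∈ Icc 1 K, ∀ h ∈ Icc 1 M.H, ∀ s a,
    QR (k + 1) h s a =
      if s = st k h ∧ a = ac k h then
        (1 - lr M.H (N k h s a)) * QR k h s a
          + lr M.H (N k h s a) *
            (M.r h s a + V k (h + 1) (st k (h + 1)) - VR k (h + 1) (st k (h + 1))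
              + muRef (k + 1) h s a + bR k h)
      else QR k h s a
  Q_upd : ∀ k ∈ Icc 1 K, ∀ h ∈ Icc 1 M.H, ∀ s a,
    Q (k + 1) h s a =
      if s = st k h ∧ a = ac k h then
        min (QR (k + 1) h s a) (min (QUCB (k + 1) h s a) (Q k h s a))
      else Q k h s a
  V_upd : ∀ k ∈ Icc 1 K, ∀ h ∈ Icc 1 M.H, ∀ s,
    V (k + 1) h s =
      if s = st k h then Finset.univ.sup' Finset.univ_nonempty (fun a => Q (k + 1) h s a)
      else V k h s
  VLCB_upd : ∀ k ∈ Icc 1 K, ∀ h ∈ Icc 1 M.H, ∀ s,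
    VLCB (k + 1) h s =
      if s = st k h then
        max (Finset.univ.sup' Finset.univ_nonempty (fun a => QLCB (k + 1) h s a)) (VLCB k h s)
      else VLCB k h s
  VR_upd_pos : ∀ k ∈ Icc 1 K, ∀ h ∈ Icc 1 M.H,
    (1 < V (k + 1) h (st k h) - VLCB (k + 1) h (st k h) ∨ uref k h (st k h)) →
      VR (k + 1) h (st k h) = V (k + 1) h (st k h)
  VR_upd_neg : ∀ k ∈ Icc 1 K, ∀ h ∈ Icc 1 M.H,
    ¬(1 < V (k + 1) h (st k h) - VLCB (k + 1) h (st k h) ∨ uref k h (st k h)) →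
      VR (k + 1) h (st k h) = VR k h (st k h)
  VR_upd_other : ∀ k ∈ Icc 1 K, ∀ h ∈ Icc 1 M.H, ∀ s, s ≠ st k h →
    VR (k + 1) h s = VR k h s
  uref_upd_pos : ∀ k ∈ Icc 1 K, ∀ h ∈ Icc 1 M.H,
    1 < V (k + 1) h (st k h) - VLCB (k + 1) h (st k h) → uref (k + 1) h (st k h)
  uref_upd_neg : ∀ k ∈ Icc 1 K, ∀ h ∈ Icc 1 M.H,
    ¬(1 < V (k + 1) h (st k h) - VLCB (k + 1) h (st k h)) → ¬uref (k + 1) h (st k h)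
  uref_upd_other : ∀ k ∈ Icc 1 K, ∀ h ∈ Icc 1 M.H, ∀ s, s ≠ st k h →
    (uref (k + 1) h s ↔ uref k h s)
  kvis_spec : ∀ h ∈ Icc 1 M.H, ∀ s a n, 1 ≤ n → n ≤ N K h s a →
    kvis n h s a ∈ Icc 1 K ∧ N (kvis n h s a) h s a = n ∧
      st (kvis n h s a) h = s ∧ ac (kvis n h s a) h = a

section RegretTerms

variable {S A : Type} [Fintype S] [Fintype A] [Nonempty S] [Nonempty A]
  [DecidableEq S] [DecidableEq A]

/-- The term `R₁` of the regret decomposition (eq. (41a) of the paper):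
`R₁ = ∑_{h=1}^H (1+1/H)^{h-1} (HSA + 8 c_b H² (SA)^{3/4} K^{1/4} log(SAT/δ)
      + ∑_{k=1}^K (P_{h,s_h^k,a_h^k} - P_h^k)(V⋆_{h+1} - V^{π^k}_{h+1}))`. -/
noncomputable def regR1 (M : MDP S A) (K : ℕ) (cb δ : ℝ) (al : QLAlg M K cb δ) : ℝ :=
  ∑ h ∈ Icc 1 M.H, (1 + 1 / (M.H : ℝ)) ^ (h - 1) *
    ((M.H : ℝ) * (Fintype.card S) * (Fintype.card A)
      + 8 * cb * (M.H : ℝ) ^ 2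
          * ((Fintype.card S : ℝ) * (Fintype.card A : ℝ)) ^ ((3 : ℝ) / 4)
          * (K : ℝ) ^ ((1 : ℝ) / 4) * iota S A K M.H δ
      + ∑ k ∈ Icc 1 K,
          ((∑ s', M.P h (al.st k h) (al.ac k h) s'
              * (M.Vstar (h + 1) s' - M.Vpol (al.pol k) (h + 1) s'))
            - (M.Vstar (h + 1) (al.st k (h + 1))
                - M.Vpol (al.pol k) (h + 1) (al.st k (h + 1)))))

/-- The term `R₂` of the regret decomposition (eq. (41b) of the paper):
`R₂ = ∑_{h=1}^H (1+1/H)^{h-1} ∑_{k=1}^K B_h^{R,k}(s_h^k, a_h^k)`. -/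
noncomputable def regR2 (M : MDP S A) (K : ℕ) (cb δ : ℝ) (al : QLAlg M K cb δ) : ℝ :=
  ∑ h ∈ Icc 1 M.H, (1 + 1 / (M.H : ℝ)) ^ (h - 1) *
    ∑ k ∈ Icc 1 K, al.BR k h (al.st k h) (al.ac k h)

/-- The weight `λ_h^k = (1+1/H)^{h-1} ∑_{n=N_h^k(s_h^k,a_h^k)}^{N_h^{K-1}(s_h^k,a_h^k)}
η_{N_h^k(s_h^k,a_h^k)}^n` of the paper. -/
noncomputable def regLambda (M : MDP S A) (K : ℕ) (cb δ : ℝ) (al : QLAlg M K cb δ)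
    (h k : ℕ) : ℝ :=
  (1 + 1 / (M.H : ℝ)) ^ (h - 1) *
    ∑ n ∈ Icc (al.N k h (al.st k h) (al.ac k h)) (al.N (K - 1) h (al.st k h) (al.ac k h)),
      lrProd M.H (al.N k h (al.st k h) (al.ac k h)) n

/-- The term `R₃` of the regret decomposition (eq. (41c) of the paper):
`R₃ = ∑_{h=1}^H ∑_{k=1}^K λ_h^k ((P_h^k - P_{h,s_h^k,a_h^k})(V⋆_{h+1} - V^{R,k}_{h+1})
  + (1/N_h^k) ∑_{i=1}^{N_h^k} (V^{R,k_h^i}_{h+1}(s_{h+1}^{k_h^i}) - P_{h,s_h^k,a_h^k} V^{R,k}_{h+1}))`. -/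
noncomputable def regR3 (M : MDP S A) (K : ℕ) (cb δ : ℝ) (al : QLAlg M K cb δ) : ℝ :=
  ∑ h ∈ Icc 1 M.H, ∑ k ∈ Icc 1 K,
    regLambda M K cb δ al h k *
      (((M.Vstar (h + 1) (al.st k (h + 1)) - al.VR k (h + 1) (al.st k (h + 1)))
          - ∑ s', M.P h (al.st k h) (al.ac k h) s'
              * (M.Vstar (h + 1) s' - al.VR k (h + 1) s'))
        + (∑ i ∈ Icc 1 (al.N k h (al.st k h) (al.ac k h)),
            (al.VR (al.kvis i h (al.st k h) (al.ac k h)) (h + 1)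
                (al.st (al.kvis i h (al.st k h) (al.ac k h)) (h + 1))
              - ∑ s', M.P h (al.st k h) (al.ac k h) s' * al.VR k (h + 1) s'))
            / (al.N k h (al.st k h) (al.ac k h) : ℝ))

end RegretTerms

/-!
Averaging a test function over the visits to `(s, a)` at step `h` and subtracting its conditional
expectations gives a sum of martingale differences.  Scaled to `|Y_k| ≤ 1/2`, these satisfy
`E exp ∑ (Y_k - Y_k ^ 2) ≤ 1`, since `exp (x - x ^ 2) ≤ 1 + x`; so, off an event of probability
at most `exp (-7ι)`, `∑ Y_k ≤ ∑ Y_k ^ 2 + 7ι`.  Taking the scale from a grid indexed by `m ≤ K`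
turns this into Freedman's inequality with the *observed* second moment, and comparing second
moments with the running statistics of the algorithm gives exactly the bonus `B_h^R`.

On the intersection of these events the estimates are optimistic, by induction on the episode and
backwards on the step.  Optimism and the update rules bound the regret at step `h` by the weighted
reference-advantage errors, the bonuses and `1 + 1/H` times the regret at step `h + 1`, and
unrolling this recursion over `h` gives `R₁ + R₂ + R₃`.
-/

section LearningRate

lemma one_sub_lr_succ (H n : ℕ) : 1 - lr H (n + 1) = n / (H + n + 1) := by
  have : (H + n + 1 : ℝ) ≠ 0 := by positivity
  simp only [lr, Nat.cast_add, Nat.cast_one, ← add_assoc]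
  field_simp
  ring

lemma lr_one (H : ℕ) : lr H 1 = 1 := by
  have h := one_sub_lr_succ H 0
  simp only [zero_add, Nat.cast_zero, zero_div] at h
  exact (sub_eq_zero.1 h).symm

lemma lr_pos (H : ℕ) {n : ℕ} (hn : 1 ≤ n) : 0 < lr H n := by
  unfold lr
  positivity

lemma lrProd_self (H : ℕ) {n : ℕ} (hn : 1 ≤ n) : lrProd H n n = lr H n := by
  simp [lrProd, Nat.ne_of_gt hn]

lemma lrProd_zero_zero (H : ℕ) : lrProd H 0 0 = 1 := by
  simp [lrProd]

lemma lrProd_of_lt (H : ℕ) {n N : ℕ} (h : N < n) : lrProd H n N = 0 :=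
  if_pos h

lemma lrProd_succ (H : ℕ) {n N : ℕ} (hn : n ≤ N) :
    lrProd H n (N + 1) = (1 - lr H (N + 1)) * lrProd H n N := by
  unfold lrProd
  rw [if_neg (show ¬N + 1 < n by omega), if_neg (show ¬N < n by omega),
    prod_Icc_succ_top (by omega)]
  ring

lemma lrProd_zero_of_pos (H : ℕ) {N : ℕ} (hN : 1 ≤ N) : lrProd H 0 N = 0 := by
  induction N, hN using Nat.le_induction with
  | base => rw [lrProd_succ H le_rfl, lr_one, sub_self, zero_mul]
  | succ N _ ih => rw [lrProd_succ H (Nat.zero_le N), ih, mul_zero]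

lemma lrProd_nonneg (H n N : ℕ) : 0 ≤ lrProd H n N := by
  rcases lt_or_ge N n with h | h
  · exact (lrProd_of_lt H h).ge
  induction N, h using Nat.le_induction with
  | base =>
    rcases Nat.eq_zero_or_pos n with rfl | hn
    · exact (lrProd_zero_zero H).symm ▸ zero_le_one
    · exact (lrProd_self H hn).symm ▸ (lr_pos H hn).le
  | succ N hN ih =>
    rw [lrProd_succ H hN, one_sub_lr_succ]
    positivity

lemma sum_lrProd_succ_mul (H N : ℕ) (b : ℕ → ℝ) :
    ∑ n ∈ Icc 1 (N + 1), lrProd H n (N + 1) * b n =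
      (1 - lr H (N + 1)) * ∑ n ∈ Icc 1 N, lrProd H n N * b n + lr H (N + 1) * b (N + 1) := by
  rw [sum_Icc_succ_top (by omega), lrProd_self H (by omega), mul_sum]
  congr 1
  refine sum_congr rfl fun n hn => ?_
  rw [lrProd_succ H (mem_Icc.1 hn).2, mul_assoc]

lemma sum_lrProd (H : ℕ) {N : ℕ} (hN : 1 ≤ N) : ∑ n ∈ Icc 1 N, lrProd H n N = 1 := by
  induction N, hN using Nat.le_induction with
  | base => simp [lrProd_self, lr_one]
  | succ N _ ih =>
    have h := sum_lrProd_succ_mul H N fun _ => 1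
    simp only [mul_one, ih] at h
    rw [h]
    ring

lemma lrProd_zero_add_sum (H N : ℕ) : lrProd H 0 N + ∑ n ∈ Icc 1 N, lrProd H n N = 1 := by
  rcases Nat.eq_zero_or_pos N with rfl | hN
  · simp [lrProd_zero_zero]
  · rw [lrProd_zero_of_pos H hN, sum_lrProd H hN, zero_add]

lemma lrProd_le {H n N : ℕ} (hH : 1 ≤ H) (hn : 1 ≤ n) (hnN : n ≤ N) :
    lrProd H n N ≤ 2 * H / N := by
  have hH' : (1 : ℝ) ≤ H := by exact_mod_cast hH
  induction N, hnN using Nat.le_induction with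
  | base =>
    rw [lrProd_self H hn, lr, div_le_div_iff₀ (by positivity) (by positivity)]
    nlinarith [(Nat.one_le_cast (α := ℝ)).2 hn]
  | succ N hN ih =>
    have hN' : (1 : ℝ) ≤ N := by exact_mod_cast hn.trans hN
    rw [lrProd_succ H hN, one_sub_lr_succ]
    calc (N : ℝ) / (H + N + 1) * lrProd H n N
        ≤ N / (H + N + 1) * (2 * H / N) := by gcongr
      _ = 2 * H / (H + N + 1) := by field_simp
      _ ≤ 2 * H / (N + 1 : ℕ) := by
        push_cast
        gcongr
        linarith

lemma sum_lrProd_mul_le {H N : ℕ} (hH : 1 ≤ H) (hN : 1 ≤ N) {b : ℕ → ℝ} (hb : ∀ n, 0 ≤ b n)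
    (hmono : Monotone fun n : ℕ => n * b n) :
    ∑ n ∈ Icc 1 N, lrProd H n N * b n ≤ 2 * b N := by
  have hH' : (1 : ℝ) ≤ H := by exact_mod_cast hH
  induction N, hN using Nat.le_induction with
  | base =>
    simp only [Icc_self, sum_singleton, lrProd_self H le_rfl, lr_one]
    linarith [hb 1]
  | succ N hN ih =>
    have hstep : N * b N ≤ (N + 1) * b (N + 1) := by simpa using hmono N.le_succ
    rw [sum_lrProd_succ_mul, one_sub_lr_succ, lr]
    push_cast
    calc (N : ℝ) / (H + N + 1) * ∑ n ∈ Icc 1 N, lrProd H n N * b n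
          + (H + 1) / (H + (N + 1)) * b (N + 1)
        ≤ N / (H + N + 1) * (2 * b N) + (H + 1) / (H + (N + 1)) * b (N + 1) := by gcongr
      _ = (2 * (N * b N) + (H + 1) * b (N + 1)) / (H + N + 1) := by ring
      _ ≤ 2 * b (N + 1) := by
        rw [div_le_iff₀ (by positivity)]
        nlinarith [hb (N + 1)]

lemma le_sum_lrProd_mul (H : ℕ) {N : ℕ} (hN : 1 ≤ N) {b : ℕ → ℝ}
    (hb : ∀ n ∈ Icc 1 N, b N ≤ b n) : b N ≤ ∑ n ∈ Icc 1 N, lrProd H n N * b n :=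
  calc b N = ∑ n ∈ Icc 1 N, lrProd H n N * b N := by rw [← sum_mul, sum_lrProd H hN, one_mul]
    _ ≤ _ := sum_le_sum fun n hn => mul_le_mul_of_nonneg_left (hb n hn) (lrProd_nonneg H n N)

lemma sum_Icc_lrProd_add {H n M : ℕ} (hH : 1 ≤ H) (hn : 1 ≤ n) (hM : n ≤ M) :
    ∑ N ∈ Icc n M, lrProd H n N + lrProd H n M * (M / H) = 1 + 1 / H := by
  have : (0 : ℝ) < H := by exact_mod_cast hH
  induction M, hM using Nat.le_induction with
  | base =>
    have : (0 : ℝ) < n := by exact_mod_cast hn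
    rw [Icc_self, sum_singleton, lrProd_self H hn, lr]
    field_simp
  | succ M hM ih =>
    rw [sum_Icc_succ_top (by omega), ← ih, lrProd_succ H hM, one_sub_lr_succ]
    push_cast
    field_simp
    ring

lemma sum_Icc_lrProd_le {H n : ℕ} (M : ℕ) (hH : 1 ≤ H) (hn : 1 ≤ n) :
    ∑ N ∈ Icc n M, lrProd H n N ≤ 1 + 1 / H := by
  rcases le_or_gt n M with hM | hM
  · have hlast : 0 ≤ lrProd H n M * ((M : ℝ) / H) :=
      mul_nonneg (lrProd_nonneg H n M) (by positivity)
    linarith [sum_Icc_lrProd_add hH hn hM]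
  · rw [Icc_eq_empty hM.not_ge, sum_empty]
    positivity

end LearningRate

section PowerSums

lemma mul_rpow_sub_one_le_rpow_sub_rpow {p : ℝ} (hp₀ : 0 ≤ p) (hp₁ : p ≤ 1) (n : ℕ) :
    p * (n + 1 : ℝ) ^ (p - 1) ≤ (n + 1 : ℝ) ^ p - (n : ℝ) ^ p := by
  have hn : (0 : ℝ) < n + 1 := by positivity
  have hbernoulli : ((n : ℝ) / (n + 1)) ^ p ≤ 1 - p / (n + 1) := by
    have h := rpow_one_add_le_one_add_mul_self (s := -1 / (n + 1 : ℝ))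
      (by rw [le_div_iff₀ hn]; linarith [n.cast_nonneg (α := ℝ)]) hp₀ hp₁
    convert h using 1
    · congr 1
      field_simp
      ring
    · ring
  rw [Real.div_rpow n.cast_nonneg hn.le, div_le_iff₀ (by positivity)] at hbernoulli
  rw [Real.rpow_sub_one hn.ne']
  calc p * ((n + 1 : ℝ) ^ p / (n + 1)) = (n + 1 : ℝ) ^ p - (1 - p / (n + 1)) * (n + 1 : ℝ) ^ p := by
        ring
    _ ≤ _ := by gcongr

lemma mul_sum_rpow_sub_one_add_le {p : ℝ} (hp₀ : 0 ≤ p) (hp₁ : p ≤ 1) {N : ℕ} (hN : 1 ≤ N) :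
    p * ∑ n ∈ Icc 1 N, (n : ℝ) ^ (p - 1) + (1 - p) ≤ (N : ℝ) ^ p := by
  induction N, hN using Nat.le_induction with
  | base => simp
  | succ N _ ih =>
    have hstep := mul_rpow_sub_one_le_rpow_sub_rpow hp₀ hp₁ N
    rw [sum_Icc_succ_top (by omega), mul_add]
    push_cast
    linarith

lemma sum_rpow_le_card_rpow_mul_rpow_sum {ι : Type*} (t : Finset ι) {x : ι → ℝ}
    (hx : ∀ i ∈ t, 0 ≤ x i) {p : ℝ} (hp₀ : 0 < p) (hp₁ : p ≤ 1) :
    ∑ i ∈ t, x i ^ p ≤ (#t : ℝ) ^ (1 - p) * (∑ i ∈ t, x i) ^ p := by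
  have hx' : ∀ i ∈ t, |x i ^ p| ^ p⁻¹ = x i := fun i hi => by
    rw [abs_of_nonneg (Real.rpow_nonneg (hx i hi) p), Real.rpow_rpow_inv (hx i hi) hp₀.ne']
  have h := Real.rpow_sum_le_const_mul_sum_rpow t (fun i => x i ^ p) ((one_le_inv₀ hp₀).2 hp₁)
  rw [sum_congr rfl hx',
    sum_congr rfl fun i hi => abs_of_nonneg (Real.rpow_nonneg (hx i hi) p)] at h
  have hsum : 0 ≤ ∑ i ∈ t, x i ^ p := sum_nonneg fun i hi => Real.rpow_nonneg (hx i hi) p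
  calc ∑ i ∈ t, x i ^ p = ((∑ i ∈ t, x i ^ p) ^ p⁻¹) ^ p := (Real.rpow_inv_rpow hsum hp₀.ne').symm
    _ ≤ ((#t : ℝ) ^ (p⁻¹ - 1) * ∑ i ∈ t, x i) ^ p := by gcongr
    _ = _ := by
      rw [Real.mul_rpow (by positivity) (sum_nonneg hx), ← Real.rpow_mul (by positivity)]
      congr 2
      field_simp

end PowerSums

section WeightedAverage

variable {ι : Type*} {s : Finset ι} {w d : ι → ℝ} {c : ℝ}

/-- The variance of the values `X i`, `i ∈ s`, under the weights `w i`; the weights are meant to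
sum to one. -/
noncomputable def weightedVariance (s : Finset ι) (w X : ι → ℝ) : ℝ :=
  ∑ i ∈ s, w i * X i ^ 2 - (∑ i ∈ s, w i * X i) ^ 2

lemma sum_mul_le_of_le (hw₀ : ∀ i ∈ s, 0 ≤ w i) (hw₁ : ∑ i ∈ s, w i = 1)
    (hd : ∀ i ∈ s, d i ≤ c) : ∑ i ∈ s, w i * d i ≤ c :=
  calc ∑ i ∈ s, w i * d i ≤ ∑ i ∈ s, w i * c :=
        sum_le_sum fun i hi => mul_le_mul_of_nonneg_left (hd i hi) (hw₀ i hi)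
    _ = c := by rw [← sum_mul, hw₁, one_mul]

lemma abs_sum_mul_le_of_abs_le (hw₀ : ∀ i ∈ s, 0 ≤ w i) (hw₁ : ∑ i ∈ s, w i = 1)
    (hd : ∀ i ∈ s, |d i| ≤ c) : |∑ i ∈ s, w i * d i| ≤ c :=
  calc |∑ i ∈ s, w i * d i| ≤ ∑ i ∈ s, |w i * d i| := abs_sum_le_sum_abs _ _
    _ = ∑ i ∈ s, w i * |d i| :=
        sum_congr rfl fun i hi => by rw [abs_mul, abs_of_nonneg (hw₀ i hi)]
    _ ≤ c := sum_mul_le_of_le hw₀ hw₁ hd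

lemma sum_mul_sq_le_of_abs_le (hw₀ : ∀ i ∈ s, 0 ≤ w i) (hw₁ : ∑ i ∈ s, w i = 1)
    (hd : ∀ i ∈ s, |d i| ≤ c) : ∑ i ∈ s, w i * d i ^ 2 ≤ c ^ 2 :=
  sum_mul_le_of_le hw₀ hw₁ fun i hi => sq_le_sq' (abs_le.1 (hd i hi)).1 (abs_le.1 (hd i hi)).2

lemma weightedVariance_nonneg (hw₀ : ∀ i ∈ s, 0 ≤ w i) (hw₁ : ∑ i ∈ s, w i = 1) (X : ι → ℝ) :
    0 ≤ weightedVariance s w X :=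
  sub_nonneg.2 (Real.pow_arith_mean_le_arith_mean_pow_of_even s w X hw₀ hw₁ even_two)

lemma weightedVariance_congr {X Y : ι → ℝ} (h : ∀ i ∈ s, X i = Y i) :
    weightedVariance s w X = weightedVariance s w Y := by
  unfold weightedVariance
  congr 1
  · exact sum_congr rfl fun i hi => by rw [h i hi]
  · exact congrArg (· ^ 2) (sum_congr rfl fun i hi => by rw [h i hi])

end WeightedAverage

section Freedman

variable {ι : Type*} {s : Finset ι} {w d X p : ι → ℝ} {K : ℕ} {a b c v x y ω : ℝ}

lemma le_sqrt_of_le_one (hy₀ : 0 ≤ y) (hy₁ : y ≤ 1) : y ≤ √y :=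
  Real.le_sqrt_of_sq_le (by nlinarith)

lemma sqrt_add_le (ha : 0 ≤ a) (hb : 0 ≤ b) : √(a + b) ≤ √a + √b := by
  rw [Real.sqrt_le_left (by positivity)]
  nlinarith [Real.sq_sqrt ha, Real.sq_sqrt hb, mul_nonneg (Real.sqrt_nonneg a) (Real.sqrt_nonneg b)]

-- The upper bound is minimised over `m` near `r = v / (4 c² y)`; take `m = ⌊r⌋ + 1`.
lemma le_two_mul_sqrt_add_of_forall_le (hc : 0 < c) (hy : 0 < y) (hv₀ : 0 ≤ v) (hv : v ≤ c ^ 2)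
    (hK : 1 < 4 * K * y) (ha : ∀ m ∈ Icc 1 K, a ≤ v / (2 * c * √m) + 2 * c * √m * y) :
    a ≤ 2 * √(v * y) + 2 * c * y := by
  obtain ⟨r, hr⟩ : ∃ r, r = v / (4 * c ^ 2 * y) := ⟨_, rfl⟩
  have hvr : v = 4 * c ^ 2 * y * r := by rw [hr]; field_simp
  have hr₀ : 0 ≤ r := hr ▸ by positivity
  have hrK : r < K := by
    rw [hr, div_lt_iff₀ (by positivity)]
    nlinarith [mul_pos (pow_pos hc 2) (sub_pos.2 hK)]
  have hm₁ : r ≤ (⌊r⌋₊ + 1 : ℕ) := by exact_mod_cast (Nat.lt_floor_add_one r).le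
  have hm₂ : ((⌊r⌋₊ + 1 : ℕ) : ℝ) ≤ r + 1 := by
    push_cast
    linarith [Nat.floor_le hr₀]
  have hmK : ⌊r⌋₊ + 1 ∈ Icc 1 K := mem_Icc.2 ⟨by omega, (Nat.floor_lt hr₀).2 hrK⟩
  have hm := ha _ hmK
  generalize hmdef : ((⌊r⌋₊ + 1 : ℕ) : ℝ) = m at hm hm₁ hm₂
  have hm₀ : 0 < m := hmdef ▸ by positivity
  have hsqrt : √(v * y) = 2 * c * y * √r := by
    rw [hvr, show 4 * c ^ 2 * y * r * y = (2 * c * y) ^ 2 * r by ring,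
      Real.sqrt_mul (by positivity), Real.sqrt_sq (by positivity)]
  have hleft : v / (2 * c * √m) ≤ √(v * y) := by
    rw [div_le_iff₀ (by positivity), hsqrt]
    calc v = 4 * c ^ 2 * y * (√r * √r) := by rw [Real.mul_self_sqrt hr₀, hvr]
      _ ≤ 4 * c ^ 2 * y * (√r * √m) := by gcongr
      _ = _ := by ring
  have hright : 2 * c * √m * y ≤ √(v * y) + 2 * c * y := by
    have hsqrt_le : √m ≤ √r + 1 := by
      simpa using (Real.sqrt_le_sqrt hm₂).trans (sqrt_add_le hr₀ zero_le_one)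
    rw [hsqrt]
    nlinarith [mul_le_mul_of_nonneg_left hsqrt_le (by positivity : 0 ≤ 2 * c * y)]
  linarith

lemma freedman_of_forall_exponential (hc : 0 < c) (hω : 0 < ω) (hx : 0 < x)
    (hK : 1 < 4 * K * (ω * x)) (hw₀ : ∀ i ∈ s, 0 ≤ w i) (hw₁ : ∑ i ∈ s, w i = 1)
    (hwω : ∀ i ∈ s, w i ≤ ω) (hd : ∀ i ∈ s, |d i| ≤ c)
    (hexp : ∀ m ∈ Icc 1 K, ∑ i ∈ s, 1 / (2 * c * ω * √m) * w i * d i ≤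
      ∑ i ∈ s, (1 / (2 * c * ω * √m) * w i * d i) ^ 2 + x) :
    ∑ i ∈ s, w i * d i ≤ 2 * √((∑ i ∈ s, w i * d i ^ 2) * (ω * x)) + 2 * c * (ω * x) := by
  refine le_two_mul_sqrt_add_of_forall_le hc (by positivity)
    (sum_nonneg fun i hi => mul_nonneg (hw₀ i hi) (sq_nonneg _))
    (sum_mul_sq_le_of_abs_le hw₀ hw₁ hd) hK fun m hm => ?_
  have hm₀ : (0 : ℝ) < m := by exact_mod_cast (mem_Icc.1 hm).1
  have hexp_m := hexp m hm
  obtain ⟨l, hl⟩ : ∃ l, l = 1 / (2 * c * ω * √m) := ⟨_, rfl⟩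
  have hl₀ : 0 < l := hl ▸ by positivity
  have hsum : ∑ i ∈ s, l * w i * d i = l * ∑ i ∈ s, w i * d i := by
    simp only [mul_sum, mul_assoc]
  have hsum_sq : ∑ i ∈ s, (l * w i * d i) ^ 2 ≤ l * (l * ω * ∑ i ∈ s, w i * d i ^ 2) := by
    rw [mul_sum, mul_sum]
    refine sum_le_sum fun i hi => ?_
    have := mul_le_mul_of_nonneg_right (hwω i hi) (mul_nonneg (hw₀ i hi) (sq_nonneg (d i)))
    nlinarith [mul_le_mul_of_nonneg_left this (sq_nonneg l)]
  rw [← hl, hsum] at hexp_m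
  refine le_of_mul_le_mul_left ?_ hl₀
  calc l * ∑ i ∈ s, w i * d i
      ≤ l * (l * ω * ∑ i ∈ s, w i * d i ^ 2) + x := hexp_m.trans (by gcongr)
    _ = l * ((∑ i ∈ s, w i * d i ^ 2) / (2 * c * √m) + 2 * c * √m * (ω * x)) := by
      rw [hl]
      field_simp

lemma hoeffding_of_freedman (hc : 0 ≤ c) (hy : 0 ≤ y) (hw₀ : ∀ i ∈ s, 0 ≤ w i)
    (hw₁ : ∑ i ∈ s, w i = 1) (hd : ∀ i ∈ s, |d i| ≤ c)
    (hfreedman : ∑ i ∈ s, w i * d i ≤ 2 * √((∑ i ∈ s, w i * d i ^ 2) * y) + 2 * c * y) :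
    ∑ i ∈ s, w i * d i ≤ 4 * c * √y := by
  rcases le_total y 1 with hy₁ | hy₁
  · have hvar : √((∑ i ∈ s, w i * d i ^ 2) * y) ≤ c * √y := by
      calc √((∑ i ∈ s, w i * d i ^ 2) * y) ≤ √(c ^ 2 * y) := by
            gcongr
            exact sum_mul_sq_le_of_abs_le hw₀ hw₁ hd
        _ = c * √y := by rw [Real.sqrt_mul (sq_nonneg c), Real.sqrt_sq hc]
    nlinarith [le_sqrt_of_le_one hy hy₁]
  · nlinarith [(abs_le.1 (abs_sum_mul_le_of_abs_le hw₀ hw₁ hd)).2, Real.one_le_sqrt.2 hy₁]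

lemma sum_mul_sub_sq_le_weightedVariance_add (hw₀ : ∀ i ∈ s, 0 ≤ w i) (hw₁ : ∑ i ∈ s, w i = 1)
    (hX : ∀ i ∈ s, |X i| ≤ b)
    (hoeffding : |∑ i ∈ s, w i * (X i - p i)| ≤ 8 * b * √y)
    (hoeffding_mul : -∑ i ∈ s, w i * (p i * (X i - p i)) ≤ 8 * b ^ 2 * √y) :
    ∑ i ∈ s, w i * (X i - p i) ^ 2 ≤ weightedVariance s w X + 32 * b ^ 2 * √y := by
  have hp : ∑ i ∈ s, w i * p i = ∑ i ∈ s, w i * X i - ∑ i ∈ s, w i * (X i - p i) := by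
    rw [← sum_sub_distrib]
    exact sum_congr rfl fun i _ => by ring
  have hjensen := weightedVariance_nonneg hw₀ hw₁ p
  have hexpand : ∑ i ∈ s, w i * (X i - p i) ^ 2 = ∑ i ∈ s, w i * X i ^ 2
      - ∑ i ∈ s, w i * p i ^ 2 - 2 * ∑ i ∈ s, w i * (p i * (X i - p i)) := by
    rw [mul_sum, ← sum_sub_distrib, ← sum_sub_distrib]
    exact sum_congr rfl fun i _ => by ring
  have hcross : (∑ i ∈ s, w i * X i) * ∑ i ∈ s, w i * (X i - p i) ≤ b * (8 * b * √y) := by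
    have hXb := abs_sum_mul_le_of_abs_le hw₀ hw₁ hX
    refine (le_abs_self _).trans ((abs_mul _ _).trans_le ?_)
    exact mul_le_mul hXb hoeffding (abs_nonneg _) ((abs_nonneg _).trans hXb)
  rw [weightedVariance, hp] at hjensen
  rw [weightedVariance]
  nlinarith [sq_nonneg (∑ i ∈ s, w i * (X i - p i))]

lemma empirical_freedman (hb : 0 ≤ b) (hy : 0 ≤ y) (hw₀ : ∀ i ∈ s, 0 ≤ w i)
    (hw₁ : ∑ i ∈ s, w i = 1) (hX : ∀ i ∈ s, |X i| ≤ b) (hp : ∀ i ∈ s, |p i| ≤ b)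
    (hfreedman : -∑ i ∈ s, w i * (X i - p i) ≤
      2 * √((∑ i ∈ s, w i * (X i - p i) ^ 2) * y) + 4 * b * y)
    (hoeffding : |∑ i ∈ s, w i * (X i - p i)| ≤ 8 * b * √y)
    (hoeffding_mul : -∑ i ∈ s, w i * (p i * (X i - p i)) ≤ 8 * b ^ 2 * √y) :
    -∑ i ∈ s, w i * (X i - p i) ≤
      2 * √(y * weightedVariance s w X) + 16 * b * √(y * √y) := by
  rcases le_total y 1 with hy₁ | hy₁
  · have hvar := sum_mul_sub_sq_le_weightedVariance_add hw₀ hw₁ hX hoeffding hoeffding_mul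
    have hsqrt : √((∑ i ∈ s, w i * (X i - p i) ^ 2) * y) ≤
        √(y * weightedVariance s w X) + 6 * b * √(y * √y) := by
      calc √((∑ i ∈ s, w i * (X i - p i) ^ 2) * y)
          ≤ √(y * weightedVariance s w X + (6 * b) ^ 2 * (y * √y)) := by
            apply Real.sqrt_le_sqrt
            have : 0 ≤ b ^ 2 * (y * √y) := by positivity
            nlinarith [mul_le_mul_of_nonneg_right hvar hy]
        _ ≤ √(y * weightedVariance s w X) + √((6 * b) ^ 2 * (y * √y)) :=
            sqrt_add_le (mul_nonneg hy (weightedVariance_nonneg hw₀ hw₁ X)) (by positivity)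
        _ = _ := by rw [Real.sqrt_mul (sq_nonneg _), Real.sqrt_sq (by positivity)]
    have hy_le : y ≤ √(y * √y) :=
      Real.le_sqrt_of_sq_le (by nlinarith [le_sqrt_of_le_one hy hy₁])
    nlinarith
  · have habs : ∀ i ∈ s, |X i - p i| ≤ 2 * b := fun i hi => by
      linarith [abs_sub (X i) (p i), hX i hi, hp i hi]
    have hsqrt : 1 ≤ √(y * √y) := Real.one_le_sqrt.2 (by nlinarith [Real.one_le_sqrt.2 hy₁])
    nlinarith [(abs_le.1 (abs_sum_mul_le_of_abs_le hw₀ hw₁ habs)).1,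
      Real.sqrt_nonneg (y * weightedVariance s w X)]

end Freedman

namespace MDP

section Expectation

variable {S A : Type} [Fintype S] [Fintype A] (M : MDP S A) (h : ℕ) (s : S) (a : A)

/-- The one-step expectation `P_{h,s,a} f`. -/
noncomputable def expect (f : S → ℝ) : ℝ :=
  ∑ s', M.P h s a s' * f s'

lemma expect_const (c : ℝ) : M.expect h s a (fun _ => c) = c := by
  rw [expect, ← sum_mul, M.P_sum_one, one_mul]

lemma expect_mono {f g : S → ℝ} (hfg : ∀ x, f x ≤ g x) : M.expect h s a f ≤ M.expect h s a g :=
  sum_le_sum fun x _ => mul_le_mul_of_nonneg_left (hfg x) (M.P_nonneg _ _ _ _)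

lemma expect_sub (f g : S → ℝ) :
    M.expect h s a (fun x => f x - g x) = M.expect h s a f - M.expect h s a g := by
  simp only [expect, mul_sub, sum_sub_distrib]

lemma expect_mul (c : ℝ) (f : S → ℝ) :
    M.expect h s a (fun x => c * f x) = c * M.expect h s a f := by
  simp only [expect, mul_sum, mul_left_comm]

lemma le_expect {f : S → ℝ} {c : ℝ} (hf : ∀ x, c ≤ f x) : c ≤ M.expect h s a f :=
  (M.expect_const h s a c).symm.trans_le (M.expect_mono h s a hf)

lemma expect_le {f : S → ℝ} {c : ℝ} (hf : ∀ x, f x ≤ c) : M.expect h s a f ≤ c :=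
  (M.expect_mono h s a hf).trans_eq (M.expect_const h s a c)

lemma abs_expect_le {f : S → ℝ} {c : ℝ} (hf : ∀ x, |f x| ≤ c) : |M.expect h s a f| ≤ c :=
  abs_le.2 ⟨M.le_expect h s a fun x => (abs_le.1 (hf x)).1,
    M.expect_le h s a fun x => (abs_le.1 (hf x)).2⟩

lemma expect_of_subsingleton [Subsingleton S] (f : S → ℝ) (x : S) : M.expect h s a f = f x := by
  rw [← M.expect_const h s a (f x)]
  exact congrArg _ (funext fun y => congrArg f (Subsingleton.elim y x))

end Expectation

section Bellman

variable {S A : Type} [Fintype S] [Fintype A] [Nonempty A] (M : MDP S A)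

lemma QstarAux_mem_Icc (n h : ℕ) (s : S) (a : A) : M.QstarAux n h s a ∈ Set.Icc (0 : ℝ) n := by
  induction n generalizing h s a with
  | zero => simp [QstarAux]
  | succ n ih =>
    have hnonneg := M.le_expect h s a fun s' => (ih (h + 1) s' (Classical.arbitrary A)).1.trans
      (le_sup' (fun a' => M.QstarAux n (h + 1) s' a') (mem_univ _))
    have hle := M.expect_le h s a fun s' =>
      sup'_le univ_nonempty _ fun a' _ => (ih (h + 1) s' a').2
    rw [Set.mem_Icc, Nat.cast_succ, add_comm (n : ℝ)]
    exact ⟨add_nonneg (M.r_nonneg h s a) hnonneg, add_le_add (M.r_le_one h s a) hle⟩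

lemma Qstar_mem_Icc {h : ℕ} (hh : 1 ≤ h) (s : S) (a : A) :
    M.Qstar h s a ∈ Set.Icc (0 : ℝ) M.H := by
  obtain ⟨hnonneg, hle⟩ := M.QstarAux_mem_Icc (M.H + 1 - h) h s a
  exact ⟨hnonneg, hle.trans (by exact_mod_cast (by omega : M.H + 1 - h ≤ M.H))⟩

lemma Vstar_mem_Icc {h : ℕ} (hh : 1 ≤ h) (s : S) : M.Vstar h s ∈ Set.Icc (0 : ℝ) M.H :=
  ⟨(M.Qstar_mem_Icc hh s (Classical.arbitrary A)).1.trans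
      (le_sup' (fun a => M.Qstar h s a) (mem_univ _)),
    sup'_le _ _ fun a _ => (M.Qstar_mem_Icc hh s a).2⟩

lemma Vstar_terminal (s : S) : M.Vstar (M.H + 1) s = 0 := by
  simp [Vstar, Qstar, QstarAux]

lemma Qstar_bellman {h : ℕ} (hh : h ∈ Icc 1 M.H) (s : S) (a : A) :
    M.Qstar h s a = M.r h s a + M.expect h s a (M.Vstar (h + 1)) := by
  have hfuel : M.H + 1 - h = M.H + 1 - (h + 1) + 1 := by
    have := (mem_Icc.1 hh).2
    omega
  rw [Qstar, hfuel]
  rfl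

end Bellman

section PolicyValue

variable {S A : Type} [Fintype S] [Fintype A] (M : MDP S A)

lemma Vpol_bellman (π : ℕ → S → A) {h : ℕ} (hh : h ∈ Icc 1 M.H) (s : S) :
    M.Vpol π h s = M.r h s (π h s) + M.expect h s (π h s) (M.Vpol π (h + 1)) := by
  have hfuel : M.H + 1 - h = M.H + 1 - (h + 1) + 1 := by
    have := (mem_Icc.1 hh).2
    omega
  rw [Vpol, hfuel]
  rfl

lemma Vpol_terminal (π : ℕ → S → A) (s : S) : M.Vpol π (M.H + 1) s = 0 := by
  simp [Vpol, VpolAux]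

lemma VpolAux_le [Nonempty A] (π : ℕ → S → A) (n h : ℕ) (s : S) :
    M.VpolAux π n h s ≤ univ.sup' univ_nonempty fun a => M.QstarAux n h s a := by
  induction n generalizing h s with
  | zero => simp [QstarAux, VpolAux]
  | succ n ih =>
    refine le_trans ?_ (le_sup' (fun a => M.QstarAux (n + 1) h s a) (mem_univ (π h s)))
    exact add_le_add_right (M.expect_mono h s (π h s) fun x => ih (h + 1) x) _

lemma Vpol_le_Vstar [Nonempty A] (π : ℕ → S → A) (h : ℕ) (s : S) : M.Vpol π h s ≤ M.Vstar h s :=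
  M.VpolAux_le π _ _ _

end PolicyValue

end MDP

lemma eq_or_mem_Icc_of_mem_Icc_succ {m n : ℕ} (hm : m ∈ Icc 1 (n + 1)) :
    m = n + 1 ∨ m ∈ Icc 1 n := by
  simp only [mem_Icc] at hm ⊢
  omega

namespace QLAlg

variable {S A : Type} [Fintype S] [Fintype A] [Nonempty S] [Nonempty A]
  [DecidableEq S] [DecidableEq A] {M : MDP S A} {K : ℕ} {cb δ : ℝ} (al : QLAlg M K cb δ)
  {h k : ℕ} {s : S} {a : A}

/-- Episode `k` visits `(s, a)` at step `h`. -/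
abbrev Visits (k h : ℕ) (s : S) (a : A) : Prop := s = al.st k h ∧ a = al.ac k h

section Visits

lemma N_of_visits (hh : h ∈ Icc 1 M.H) (hk : k ∈ Icc 1 K) (hv : al.Visits k h s a) :
    al.N k h s a = al.N (k - 1) h s a + 1 := by
  rw [al.N_upd k hk h hh s a, if_pos hv]

lemma N_of_not_visits (hh : h ∈ Icc 1 M.H) (hk : k ∈ Icc 1 K) (hv : ¬al.Visits k h s a) :
    al.N k h s a = al.N (k - 1) h s a := by
  rw [al.N_upd k hk h hh s a, if_neg hv, add_zero]

lemma N_pred_le (hh : h ∈ Icc 1 M.H) (hk : k ∈ Icc 1 K) (s : S) (a : A) :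
    al.N (k - 1) h s a ≤ al.N k h s a :=
  Nat.le.intro (al.N_upd k hk h hh s a).symm

lemma N_mono (hh : h ∈ Icc 1 M.H) (s : S) (a : A) {j : ℕ} (hjk : j ≤ k) (hk : k ≤ K) :
    al.N j h s a ≤ al.N k h s a := by
  induction k, hjk using Nat.le_induction with
  | base => exact le_rfl
  | succ k _ ih => exact (ih (by omega)).trans (al.N_pred_le hh (mem_Icc.2 ⟨by omega, hk⟩) s a)

lemma N_lt_of_visits (hh : h ∈ Icc 1 M.H) (hk : k ∈ Icc 1 K) (hv : al.Visits k h s a) {j : ℕ}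
    (hj : j < k) : al.N j h s a < al.N k h s a := by
  rw [al.N_of_visits hh hk hv, Nat.lt_succ_iff]
  have := mem_Icc.1 hk
  exact al.N_mono hh s a (by omega) (by omega)

lemma one_le_N (hh : h ∈ Icc 1 M.H) (hk : k ∈ Icc 1 K) (hv : al.Visits k h s a) :
    1 ≤ al.N k h s a := by
  rw [al.N_of_visits hh hk hv]
  exact Nat.le_add_left 1 _

lemma visits_kvis (hh : h ∈ Icc 1 M.H) {n : ℕ} (hn : 1 ≤ n) (hnK : n ≤ al.N K h s a) :
    al.Visits (al.kvis n h s a) h s a :=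
  have hspec := al.kvis_spec h hh s a n hn hnK
  ⟨hspec.2.2.1.symm, hspec.2.2.2.symm⟩

lemma kvis_N (hh : h ∈ Icc 1 M.H) (hk : k ∈ Icc 1 K) (hv : al.Visits k h s a) :
    al.kvis (al.N k h s a) h s a = k := by
  have hpos := al.one_le_N hh hk hv
  have hle := al.N_mono hh s a (mem_Icc.1 hk).2 le_rfl
  obtain ⟨hmem, hN, -⟩ := al.kvis_spec h hh s a _ hpos hle
  rcases lt_trichotomy (al.kvis (al.N k h s a) h s a) k with hlt | heq | hgt
  · exact absurd hN (al.N_lt_of_visits hh hk hv hlt).ne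
  · exact heq
  · exact absurd hN (al.N_lt_of_visits hh hmem (al.visits_kvis hh hpos hle) hgt).ne'

lemma kvis_le (hh : h ∈ Icc 1 M.H) (hk : k ≤ K) {n : ℕ} (hn : 1 ≤ n) (hnk : n ≤ al.N k h s a) :
    al.kvis n h s a ≤ k := by
  have hnK := hnk.trans (al.N_mono hh s a hk le_rfl)
  obtain ⟨hmem, hN, -⟩ := al.kvis_spec h hh s a n hn hnK
  by_contra! hlt
  have := al.N_lt_of_visits hh hmem (al.visits_kvis hh hn hnK) hlt
  omega

lemma kvis_mono (hh : h ∈ Icc 1 M.H) {i n : ℕ} (hi : 1 ≤ i) (hin : i ≤ n)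
    (hn : n ≤ al.N K h s a) : al.kvis i h s a ≤ al.kvis n h s a := by
  obtain ⟨hmem, hN, -⟩ := al.kvis_spec h hh s a n (hi.trans hin) hn
  exact al.kvis_le hh (mem_Icc.1 hmem).2 hi (hin.trans_eq hN.symm)

lemma visit_induction (hh : h ∈ Icc 1 M.H) (s : S) (a : A) {p : ℕ → ℕ → Prop} (zero : p 0 0)
    (visit : ∀ k N, k + 1 ∈ Icc 1 K → al.Visits (k + 1) h s a → al.N (k + 1) h s a = N + 1 →
      al.kvis (N + 1) h s a = k + 1 → p k N → p (k + 1) (N + 1))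
    (other : ∀ k N, k + 1 ∈ Icc 1 K → ¬al.Visits (k + 1) h s a → p k N → p (k + 1) N)
    (hk : k ≤ K) : p k (al.N k h s a) := by
  induction k with
  | zero => rwa [al.N_init]
  | succ k ih =>
    have hk' : k + 1 ∈ Icc 1 K := mem_Icc.2 ⟨by omega, hk⟩
    by_cases hv : al.Visits (k + 1) h s a
    · have hN : al.N (k + 1) h s a = al.N k h s a + 1 := al.N_of_visits hh hk' hv
      have hkvis := al.kvis_N hh hk' hv
      rw [hN] at hkvis ⊢
      exact visit k _ hk' hv hN hkvis (ih (by omega))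
    · rw [al.N_of_not_visits hh hk' hv]
      exact other k _ hk' hv (ih (by omega))

lemma sum_visits_eq (hh : h ∈ Icc 1 M.H) (s : S) (a : A) (φ : ℕ → ℕ → ℝ) (hk : k ≤ K) :
    ∑ j ∈ Icc 1 k, (if al.Visits j h s a then φ (al.N j h s a) j else 0) =
      ∑ n ∈ Icc 1 (al.N k h s a), φ n (al.kvis n h s a) := by
  refine al.visit_induction hh s a (p := fun k N =>
    ∑ j ∈ Icc 1 k, (if al.Visits j h s a then φ (al.N j h s a) j else 0) =
      ∑ n ∈ Icc 1 N, φ n (al.kvis n h s a)) (by simp)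
    (fun k N _ hv hN hkvis ih => ?_) (fun k N _ hv ih => ?_) hk
  · rw [sum_Icc_succ_top (by omega), sum_Icc_succ_top (by omega), ih, if_pos hv, hN, hkvis]
  · rw [sum_Icc_succ_top (by omega), ih, if_neg hv, add_zero]

lemma eq_sum_lrProd_of_lr_update (hh : h ∈ Icc 1 M.H) (s : S) (a : A) (F X : ℕ → ℝ)
    (hF : ∀ k ∈ Icc 1 K, F (k + 1) = if s = al.st k h ∧ a = al.ac k h then
      (1 - lr M.H (al.N k h s a)) * F k + lr M.H (al.N k h s a) * X k else F k)
    (hk : k ≤ K) :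
    F (k + 1) = lrProd M.H 0 (al.N k h s a) * F 1
      + ∑ n ∈ Icc 1 (al.N k h s a), lrProd M.H n (al.N k h s a) * X (al.kvis n h s a) := by
  refine al.visit_induction hh s a (p := fun k N => F (k + 1) = lrProd M.H 0 N * F 1
    + ∑ n ∈ Icc 1 N, lrProd M.H n N * X (al.kvis n h s a)) (by simp [lrProd_zero_zero])
    (fun k N hk hv hN hkvis ih => ?_) (fun k N hk hv ih => ?_) hk
  · rw [hF (k + 1) hk, if_pos hv, ih, hN, sum_lrProd_succ_mul, lrProd_succ _ N.zero_le, hkvis]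
    ring
  · rw [hF (k + 1) hk, if_neg hv, ih]

lemma mul_eq_sum_of_mean_update (hh : h ∈ Icc 1 M.H) (s : S) (a : A) (F X : ℕ → ℝ)
    (hF : ∀ k ∈ Icc 1 K, F (k + 1) = if s = al.st k h ∧ a = al.ac k h then
      (1 - 1 / (al.N k h s a : ℝ)) * F k + 1 / (al.N k h s a : ℝ) * X k else F k)
    (hk : k ≤ K) :
    (al.N k h s a : ℝ) * F (k + 1) = ∑ n ∈ Icc 1 (al.N k h s a), X (al.kvis n h s a) := by
  refine al.visit_induction hh s a (p := fun k N => (N : ℝ) * F (k + 1) =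
    ∑ n ∈ Icc 1 N, X (al.kvis n h s a)) (by simp)
    (fun k N hk hv hN hkvis ih => ?_) (fun k N hk hv ih => ?_) hk
  · rw [hF (k + 1) hk, if_pos hv, hN, sum_Icc_succ_top (by omega), ← ih, hkvis]
    have : ((N + 1 : ℕ) : ℝ) ≠ 0 := by positivity
    field_simp
    push_cast
    ring
  · rw [hF (k + 1) hk, if_neg hv, ih]

end Visits

section Values

lemma Q_succ_le (hh : h ∈ Icc 1 M.H) (hk : k ∈ Icc 1 K) (s : S) (a : A) :
    al.Q (k + 1) h s a ≤ al.Q k h s a := by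
  rw [al.Q_upd k hk h hh s a]
  split_ifs
  · exact (min_le_right _ _).trans (min_le_right _ _)
  · exact le_rfl

lemma Q_le_QR (hh : h ∈ Icc 1 M.H) (hk : k ∈ Icc 1 (K + 1)) (s : S) (a : A) :
    al.Q k h s a ≤ al.QR k h s a := by
  obtain ⟨hk₁, hk₂⟩ := mem_Icc.1 hk
  clear hk
  induction k, hk₁ using Nat.le_induction with
  | base => rw [al.Q_init h hh, al.QR_init h hh]
  | succ k hk₁ ih =>
    have hk : k ∈ Icc 1 K := mem_Icc.2 ⟨hk₁, by omega⟩
    rw [al.Q_upd k hk h hh s a]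
    split_ifs with hv
    · exact min_le_left _ _
    · rw [al.QR_upd k hk h hh s a, if_neg hv]
      exact ih (by omega)

lemma V_eq_sup' (hh : h ∈ Icc 1 M.H) (hk : k ∈ Icc 1 (K + 1)) (s : S) :
    al.V k h s = univ.sup' univ_nonempty fun a => al.Q k h s a := by
  obtain ⟨hk₁, hk₂⟩ := mem_Icc.1 hk
  clear hk
  induction k, hk₁ using Nat.le_induction with
  | base => simp [al.V_init h hh, al.Q_init h hh]
  | succ k hk₁ ih =>
    have hk : k ∈ Icc 1 K := mem_Icc.2 ⟨hk₁, by omega⟩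
    rw [al.V_upd k hk h hh s]
    split_ifs with hs
    · rfl
    · rw [ih (by omega)]
      congr 1 with a
      rw [al.Q_upd k hk h hh s a, if_neg fun hv => hs hv.1]

lemma V_st_eq_Q (hh : h ∈ Icc 1 M.H) (hk : k ∈ Icc 1 (K + 1)) :
    al.V k h (al.st k h) = al.Q k h (al.st k h) (al.ac k h) := by
  rw [al.V_eq_sup' hh hk, al.act_eq]
  exact le_antisymm (sup'_le _ _ fun a _ => al.greedy k h _ a)
    (le_sup' (fun a => al.Q k h (al.st k h) a) (mem_univ _))

lemma V_succ_le (hh : h ∈ Icc 1 (M.H + 1)) (hk : k ∈ Icc 1 K) (s : S) :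
    al.V (k + 1) h s ≤ al.V k h s := by
  obtain ⟨hk₁, hk₂⟩ := mem_Icc.1 hk
  rcases eq_or_mem_Icc_of_mem_Icc_succ hh with rfl | hh
  · rw [(al.V_terminal _ s).1, (al.V_terminal _ s).1]
  · rw [al.V_eq_sup' hh (mem_Icc.2 ⟨by omega, by omega⟩) s,
      al.V_eq_sup' hh (mem_Icc.2 ⟨by omega, by omega⟩) s]
    exact sup'_mono_fun fun a _ => al.Q_succ_le hh hk s a

lemma VR_succ_eq (hh : h ∈ Icc 1 M.H) (hk : k ∈ Icc 1 K) (s : S) :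
    al.VR (k + 1) h s = al.VR k h s ∨ al.VR (k + 1) h s = al.V (k + 1) h s := by
  by_cases hs : s = al.st k h
  · subst hs
    by_cases hsettled : 1 < al.V (k + 1) h (al.st k h) - al.VLCB (k + 1) h (al.st k h) ∨
        al.uref k h (al.st k h)
    · exact .inr (al.VR_upd_pos k hk h hh hsettled)
    · exact .inl (al.VR_upd_neg k hk h hh hsettled)
  · exact .inl (al.VR_upd_other k hk h hh s hs)

lemma V_le_VR (hh : h ∈ Icc 1 (M.H + 1)) (hk : k ∈ Icc 1 (K + 1)) (s : S) :
    al.V k h s ≤ al.VR k h s := by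
  obtain ⟨hk₁, hk₂⟩ := mem_Icc.1 hk
  clear hk
  rcases eq_or_mem_Icc_of_mem_Icc_succ hh with rfl | hh'
  · rw [(al.V_terminal _ s).1, (al.V_terminal _ s).2.1]
  induction k, hk₁ using Nat.le_induction with
  | base => rw [al.V_init h hh', al.VR_init h hh']
  | succ k hk₁ ih =>
    have hk : k ∈ Icc 1 K := mem_Icc.2 ⟨hk₁, by omega⟩
    rcases al.VR_succ_eq hh' hk s with heq | heq
    · exact heq ▸ (al.V_succ_le hh hk s).trans (ih (by omega))
    · exact heq.ge

lemma VR_succ_le (hh : h ∈ Icc 1 (M.H + 1)) (hk : k ∈ Icc 1 K) (s : S) :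
    al.VR (k + 1) h s ≤ al.VR k h s := by
  have hk' := mem_Icc.1 hk
  rcases eq_or_mem_Icc_of_mem_Icc_succ hh with rfl | hh'
  · rw [(al.V_terminal _ s).2.1, (al.V_terminal _ s).2.1]
  · rcases al.VR_succ_eq hh' hk s with heq | heq
    · exact heq.le
    · exact heq.trans_le
        ((al.V_succ_le hh hk s).trans (al.V_le_VR hh (mem_Icc.2 ⟨by omega, by omega⟩) s))

lemma VR_anti (hh : h ∈ Icc 1 (M.H + 1)) (s : S) {j : ℕ} (hj : 1 ≤ j) (hjk : j ≤ k)
    (hk : k ≤ K + 1) : al.VR k h s ≤ al.VR j h s := by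
  induction k, hjk using Nat.le_induction with
  | base => exact le_rfl
  | succ k _ ih =>
    exact (al.VR_succ_le hh (mem_Icc.2 ⟨by omega, by omega⟩) s).trans (ih (by omega))

lemma VR_le (hh : h ∈ Icc 1 (M.H + 1)) (hk : k ∈ Icc 1 (K + 1)) (s : S) :
    al.VR k h s ≤ M.H := by
  have hk' := mem_Icc.1 hk
  refine (al.VR_anti hh s le_rfl hk'.1 hk'.2).trans ?_
  rcases eq_or_mem_Icc_of_mem_Icc_succ hh with rfl | hh
  · exact (al.V_terminal _ s).2.1.trans_le M.H.cast_nonneg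
  · exact (al.VR_init h hh s).le

end Values

end QLAlg

section LogFactor

variable {S A : Type} [Fintype S] [Fintype A] {K H : ℕ} {δ : ℝ}

lemma le_card_mul_div [Nonempty A] (hK : 1 ≤ K) (hH : 1 ≤ H) (hδ₀ : 0 < δ) (hδ₁ : δ < 1) :
    (Fintype.card S : ℝ) ≤ (Fintype.card S : ℝ) * Fintype.card A * (K * H) / δ := by
  have hA : (1 : ℝ) ≤ Fintype.card A := by exact_mod_cast Fintype.card_pos
  have hK' : (1 : ℝ) ≤ K := by exact_mod_cast hK
  have hH' : (1 : ℝ) ≤ H := by exact_mod_cast hH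
  rw [mul_assoc, mul_div_assoc]
  refine le_mul_of_one_le_right (Nat.cast_nonneg _) ((one_le_div hδ₀).2 (hδ₁.le.trans ?_))
  exact one_le_mul_of_one_le_of_one_le hA (one_le_mul_of_one_le_of_one_le hK' hH')

lemma iota_nonneg [Nonempty S] [Nonempty A] (hK : 1 ≤ K) (hH : 1 ≤ H) (hδ₀ : 0 < δ) (hδ₁ : δ < 1) :
    0 ≤ iota S A K H δ :=
  Real.log_nonneg ((by exact_mod_cast Fintype.card_pos : (1 : ℝ) ≤ Fintype.card S).trans
    (le_card_mul_div hK hH hδ₀ hδ₁))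

lemma half_le_iota [Nontrivial S] [Nonempty A] (hK : 1 ≤ K) (hH : 1 ≤ H) (hδ₀ : 0 < δ)
    (hδ₁ : δ < 1) : 1 / 2 ≤ iota S A K H δ := by
  have hS : (2 : ℝ) ≤ Fintype.card S := by exact_mod_cast Fintype.one_lt_card
  calc (1 : ℝ) / 2 ≤ Real.log 2 := by linarith [Real.log_two_gt_d9]
    _ ≤ iota S A K H δ :=
      Real.log_le_log two_pos (hS.trans (le_card_mul_div hK hH hδ₀ hδ₁))

end LogFactor

/-- The two ways in which the algorithm averages over the visits to a state-action pair: with the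
learning-rate weights `η_j^n` (advantage part), or uniformly (reference part). -/
inductive Averaging
  | learning
  | uniform
  deriving DecidableEq

namespace Averaging

instance : Fintype Averaging where
  elems := {learning, uniform}
  complete t := by cases t <;> simp

variable {H n j : ℕ}

/-- The weight of the `j`-th of `n` visits, extended by zero to `j > n`. -/
noncomputable def weight (H : ℕ) (t : Averaging) (n j : ℕ) : ℝ :=
  match t with
  | learning => lrProd H j n
  | uniform => if j ≤ n then 1 / n else 0

/-- An upper bound on each of the weights `weight H t n j`. -/
noncomputable def maxWeight (H : ℕ) (t : Averaging) (n : ℕ) : ℝ :=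
  match t with
  | learning => 2 * H / n
  | uniform => 1 / n

lemma weight_nonneg (H : ℕ) (t : Averaging) (n j : ℕ) : 0 ≤ weight H t n j := by
  cases t
  · exact lrProd_nonneg _ _ _
  · exact ite_nonneg (Nat.one_div_cast_nonneg n) le_rfl

lemma weight_eq_zero (t : Averaging) (hj : n < j) : weight H t n j = 0 := by
  cases t
  · exact lrProd_of_lt H hj
  · exact if_neg hj.not_ge

lemma sum_weight (H : ℕ) (t : Averaging) (hn : 1 ≤ n) : ∑ j ∈ Icc 1 n, weight H t n j = 1 := by
  cases t
  · exact sum_lrProd H hn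
  · have : (n : ℝ) ≠ 0 := by positivity
    calc ∑ j ∈ Icc 1 n, weight H uniform n j = ∑ j ∈ Icc 1 n, 1 / (n : ℝ) :=
          sum_congr rfl fun j hj => if_pos (mem_Icc.1 hj).2
      _ = 1 := by
        rw [sum_const, Nat.card_Icc, Nat.add_sub_cancel, nsmul_eq_mul, mul_one_div_cancel this]

lemma one_div_le_maxWeight (hH : 1 ≤ H) (t : Averaging) (n : ℕ) :
    1 / (n : ℝ) ≤ maxWeight H t n := by
  cases t
  · have : (1 : ℝ) ≤ H := by exact_mod_cast hH
    exact div_le_div_of_nonneg_right (by linarith) n.cast_nonneg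
  · exact le_rfl

lemma weight_le_maxWeight (hH : 1 ≤ H) (t : Averaging) (hj : 1 ≤ j) :
    weight H t n j ≤ maxWeight H t n := by
  rcases lt_or_ge n j with hnj | hjn
  · exact (weight_eq_zero t hnj).trans_le
      ((Nat.one_div_cast_nonneg n).trans (one_div_le_maxWeight hH t n))
  · cases t
    · exact lrProd_le hH hj hjn
    · exact (if_pos hjn).le

lemma maxWeight_pos (hH : 1 ≤ H) (t : Averaging) (hn : 1 ≤ n) : 0 < maxWeight H t n :=
  (Nat.one_div_cast_pos (by omega)).trans_le (one_div_le_maxWeight hH t n)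

end Averaging

/-- Index of the functions of the next state to which concentration is applied. The `cross`
functions are rescaled by their own expectation; they control the cross term between the
empirical and the true variance. -/
inductive TestFn
  | optimal
  | advantage
  | advantageCross
  | reference
  | referenceCross
  deriving DecidableEq

instance : Fintype TestFn where
  elems := {.optimal, .advantage, .advantageCross, .reference, .referenceCross}
  complete i := by cases i <;> simp

namespace QLAlg

variable {S A : Type} [Fintype S] [Fintype A] [Nonempty S] [Nonempty A]
  [DecidableEq S] [DecidableEq A] {M : MDP S A} {K : ℕ} {cb δ : ℝ} (al : QLAlg M K cb δ)
  {h k n : ℕ} {s : S} {a : A}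

/-- The reference value at the next step. It is clipped at zero in order to be bounded
regardless of optimism. -/
noncomputable def clippedRef (h k : ℕ) (x : S) : ℝ := max (al.VR k (h + 1) x) 0

/-- The advantage over the reference value at the next step, with both values clipped at zero. -/
noncomputable def clippedAdv (h k : ℕ) (x : S) : ℝ :=
  max (al.V k (h + 1) x) 0 - max (al.VR k (h + 1) x) 0

/-- The test function in episode `k` with index `i`. -/
noncomputable def testFn (h : ℕ) (s : S) (a : A) (i : TestFn) (k : ℕ) (x : S) : ℝ :=
  match i with
  | .optimal => M.Vstar (h + 1) x
  | .advantage => al.clippedAdv h k x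
  | .advantageCross => M.expect h s a (al.clippedAdv h k) / M.H * al.clippedAdv h k x
  | .reference => al.clippedRef h k x
  | .referenceCross => M.expect h s a (al.clippedRef h k) / M.H * al.clippedRef h k x

/-- The deviation of `f k` at the next state of episode `k` from its expectation under
`P_{h,s,a}`; a martingale difference along the episodes visiting `(s, a)` at step `h`. -/
noncomputable def deviation (h : ℕ) (s : S) (a : A) (f : ℕ → S → ℝ) (k : ℕ) : ℝ :=
  f k (al.st k (h + 1)) - M.expect h s a (f k)

/-- The summand contributed by episode `k` to the average of the deviations of a signed test
function over the first `n` visits, scaled by `1 / (4 H ω √m)` with `ω` the maximal weight. -/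
noncomputable def scaledDeviation (h : ℕ) (s : S) (a : A) (n m : ℕ) (i : TestFn) (sg : ℤˣ)
    (t : Averaging) (k : ℕ) : ℝ :=
  if al.Visits k h s a then
    1 / (2 * (2 * M.H) * t.maxWeight M.H n * √m) * t.weight M.H n (al.N k h s a)
      * (sg * al.deviation h s a (al.testFn h s a i) k)
  else 0

/-- The event on which the regret decomposition holds: the exponential concentration inequality
for every averaged deviation. -/
def GoodEvent : Prop :=
  ∀ h ∈ Icc 1 M.H, ∀ s a, ∀ n ∈ Icc 1 K, ∀ m ∈ Icc 1 K, ∀ i sg t,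
    ∑ k ∈ Icc 1 K, al.scaledDeviation h s a n m i sg t k ≤
      ∑ k ∈ Icc 1 K, al.scaledDeviation h s a n m i sg t k ^ 2 + 7 * iota S A K M.H δ

section TestFunctions

lemma clippedRef_nonneg (h k : ℕ) (x : S) : 0 ≤ al.clippedRef h k x := le_max_right _ _

lemma clippedRef_le (hh : h ∈ Icc 1 M.H) (hk : k ∈ Icc 1 (K + 1)) (x : S) :
    al.clippedRef h k x ≤ M.H :=
  have := mem_Icc.1 hh
  max_le (al.VR_le (mem_Icc.2 ⟨by omega, by omega⟩) hk x) M.H.cast_nonneg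

lemma abs_clippedRef_le (hh : h ∈ Icc 1 M.H) (hk : k ∈ Icc 1 (K + 1)) (x : S) :
    |al.clippedRef h k x| ≤ M.H :=
  (abs_of_nonneg (al.clippedRef_nonneg h k x)).trans_le (al.clippedRef_le hh hk x)

lemma abs_clippedAdv_le (hh : h ∈ Icc 1 M.H) (hk : k ∈ Icc 1 (K + 1)) (x : S) :
    |al.clippedAdv h k x| ≤ M.H := by
  have := mem_Icc.1 hh
  have hle : max (al.V k (h + 1) x) 0 ≤ al.clippedRef h k x :=
    max_le_max_right _ (al.V_le_VR (mem_Icc.2 ⟨by omega, by omega⟩) hk x)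
  exact abs_sub_le_of_nonneg_of_le (le_max_right _ _) (hle.trans (al.clippedRef_le hh hk x))
    (al.clippedRef_nonneg h k x) (al.clippedRef_le hh hk x)

lemma abs_testFn_le (hh : h ∈ Icc 1 M.H) (hk : k ∈ Icc 1 (K + 1)) (s : S) (a : A) (i : TestFn)
    (x : S) : |al.testFn h s a i k x| ≤ M.H := by
  have hcross : ∀ f : S → ℝ, (∀ x, |f x| ≤ M.H) → |M.expect h s a f / M.H * f x| ≤ M.H := by
    intro f hf
    rw [abs_mul, abs_div, Nat.abs_cast]
    exact (mul_le_of_le_one_left (abs_nonneg _)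
      (div_le_one_of_le₀ (M.abs_expect_le h s a hf) M.H.cast_nonneg)).trans (hf x)
  cases i with
  | optimal =>
    obtain ⟨hnonneg, hle⟩ := M.Vstar_mem_Icc (Nat.le_add_left 1 h) x
    exact (abs_of_nonneg hnonneg).trans_le hle
  | advantage => exact al.abs_clippedAdv_le hh hk x
  | advantageCross => exact hcross _ (al.abs_clippedAdv_le hh hk)
  | reference => exact al.abs_clippedRef_le hh hk x
  | referenceCross => exact hcross _ (al.abs_clippedRef_le hh hk)

lemma abs_deviation_le {f : ℕ → S → ℝ} {c : ℝ} (hf : ∀ x, |f k x| ≤ c) :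
    |al.deviation h s a f k| ≤ 2 * c := by
  rw [two_mul]
  exact (abs_sub _ _).trans (add_le_add (hf _) (M.abs_expect_le h s a hf))

lemma deviation_of_subsingleton [Subsingleton S] (f : ℕ → S → ℝ) :
    al.deviation h s a f k = 0 :=
  sub_eq_zero.2 (M.expect_of_subsingleton h s a (f k) _).symm

lemma deviation_smul (c : ℕ → ℝ) (f : ℕ → S → ℝ) :
    al.deviation h s a (fun k x => c k * f k x) k = c k * al.deviation h s a f k := by
  rw [deviation, deviation, M.expect_mul, mul_sub]

end TestFunctions

section Concentration

lemma N_le (hh : h ∈ Icc 1 M.H) (s : S) (a : A) (hk : k ≤ K) : al.N k h s a ≤ k :=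
  al.visit_induction hh s a (p := fun k N => N ≤ k) le_rfl
    (fun _ _ _ _ _ _ ih => Nat.succ_le_succ ih) (fun _ _ _ _ ih => Nat.le_succ_of_le ih) hk

lemma sum_visits_weight_eq (hh : h ∈ Icc 1 M.H) (hnN : n ≤ al.N K h s a) (φ : ℕ → ℕ → ℝ)
    (hφ : ∀ j k, n < j → φ j k = 0) :
    ∑ k ∈ Icc 1 K, (if al.Visits k h s a then φ (al.N k h s a) k else 0) =
      ∑ j ∈ Icc 1 n, φ j (al.kvis j h s a) := by
  rw [al.sum_visits_eq hh s a φ le_rfl]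
  refine (sum_subset (Icc_subset_Icc_right hnN) fun j hj hjn => hφ _ _ ?_).symm
  simp only [mem_Icc] at hj hjn
  omega

variable {al}

lemma GoodEvent.freedman [Nontrivial S] (hgood : al.GoodEvent) (hK : 1 ≤ K) (hδ₀ : 0 < δ)
    (hδ₁ : δ < 1) (hh : h ∈ Icc 1 M.H) (i : TestFn) (sg : ℤˣ) (t : Averaging) (hn : 1 ≤ n)
    (hnN : n ≤ al.N K h s a) :
    ∑ j ∈ Icc 1 n, t.weight M.H n j *
        (sg * al.deviation h s a (al.testFn h s a i) (al.kvis j h s a))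
      ≤ 2 * √((∑ j ∈ Icc 1 n, t.weight M.H n j *
            (sg * al.deviation h s a (al.testFn h s a i) (al.kvis j h s a)) ^ 2) *
          (t.maxWeight M.H n * (7 * iota S A K M.H δ)))
        + 2 * (2 * M.H) * (t.maxWeight M.H n * (7 * iota S A K M.H δ)) := by
  have hι := half_le_iota (S := S) (A := A) hK M.H_pos hδ₀ hδ₁
  have hH : (0 : ℝ) < M.H := by exact_mod_cast M.H_pos
  have hnK : n ≤ K := hnN.trans (al.N_le hh s a le_rfl)
  have hω := t.maxWeight_pos M.H_pos hn
  have hKω : 1 ≤ K * t.maxWeight M.H n := by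
    have : (n : ℝ) ≠ 0 := by positivity
    calc (1 : ℝ) = n * (1 / n) := (mul_one_div_cancel this).symm
      _ ≤ K * t.maxWeight M.H n := by
        gcongr
        exact t.one_div_le_maxWeight M.H_pos n
  refine freedman_of_forall_exponential (K := K) (by positivity) hω (by linarith) (by nlinarith)
    (fun j _ => t.weight_nonneg _ _ _) (t.sum_weight _ hn)
    (fun j hj => t.weight_le_maxWeight M.H_pos (mem_Icc.1 hj).1)
    (fun j hj => ?_) fun m hm => ?_
  · have hj' := mem_Icc.1 hj
    have hkvis := mem_Icc.1 (al.kvis_spec h hh s a j hj'.1 (hj'.2.trans hnN)).1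
    rw [abs_mul, ← Int.cast_abs, Int.isUnit_iff_abs_eq.1 sg.isUnit, Int.cast_one, one_mul]
    exact al.abs_deviation_le (al.abs_testFn_le hh (mem_Icc.2 ⟨hkvis.1, by omega⟩) s a i)
  · have hgood_m := hgood h hh s a n (mem_Icc.2 ⟨hn, hnK⟩) m hm i sg t
    simp only [scaledDeviation, ite_pow, ne_eq, OfNat.ofNat_ne_zero, not_false_eq_true,
      zero_pow] at hgood_m
    rwa [al.sum_visits_weight_eq hh hnN (fun j k => 1 / (2 * (2 * M.H) * t.maxWeight M.H n * √m) *
        t.weight M.H n j * (sg * al.deviation h s a (al.testFn h s a i) k))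
        fun j k hj => by rw [t.weight_eq_zero hj, mul_zero, zero_mul],
      al.sum_visits_weight_eq hh hnN (fun j k => (1 / (2 * (2 * M.H) * t.maxWeight M.H n * √m) *
        t.weight M.H n j * (sg * al.deviation h s a (al.testFn h s a i) k)) ^ 2)
        fun j k hj => by rw [t.weight_eq_zero hj, mul_zero, zero_mul, sq, zero_mul]] at hgood_m

lemma GoodEvent.hoeffding (hgood : al.GoodEvent) (hK : 1 ≤ K) (hδ₀ : 0 < δ)
    (hδ₁ : δ < 1) (hh : h ∈ Icc 1 M.H) (i : TestFn) (t : Averaging) (hn : 1 ≤ n)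
    (hnN : n ≤ al.N K h s a) :
    |∑ j ∈ Icc 1 n, t.weight M.H n j * al.deviation h s a (al.testFn h s a i) (al.kvis j h s a)| ≤
      8 * M.H * √(t.maxWeight M.H n * (7 * iota S A K M.H δ)) := by
  rcases subsingleton_or_nontrivial S with hS | hS
  · simp only [deviation_of_subsingleton, mul_zero, sum_const_zero, abs_zero]
    positivity
  have hsigned : ∀ sg : ℤˣ, ∑ j ∈ Icc 1 n, t.weight M.H n j *
      (sg * al.deviation h s a (al.testFn h s a i) (al.kvis j h s a)) ≤
      4 * (2 * M.H) * √(t.maxWeight M.H n * (7 * iota S A K M.H δ)) := fun sg => by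
    refine hoeffding_of_freedman (by positivity)
      (mul_nonneg (t.maxWeight_pos M.H_pos hn).le
        (mul_nonneg (by norm_num) (iota_nonneg hK M.H_pos hδ₀ hδ₁)))
      (fun j _ => t.weight_nonneg _ _ _) (t.sum_weight _ hn) (fun j hj => ?_)
      (hgood.freedman hK hδ₀ hδ₁ hh i sg t hn hnN)
    have hj' := mem_Icc.1 hj
    have hkvis := mem_Icc.1 (al.kvis_spec h hh s a j hj'.1 (hj'.2.trans hnN)).1
    rw [abs_mul, ← Int.cast_abs, Int.isUnit_iff_abs_eq.1 sg.isUnit, Int.cast_one, one_mul]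
    exact al.abs_deviation_le (al.abs_testFn_le hh (mem_Icc.2 ⟨hkvis.1, by omega⟩) s a i)
  have hpos := hsigned 1
  have hneg := hsigned (-1)
  simp only [Units.val_one, Units.val_neg, Int.cast_one, Int.cast_neg, neg_mul, one_mul, mul_neg,
    sum_neg_distrib] at hpos hneg
  exact abs_le.2 ⟨by linarith, by linarith⟩

lemma GoodEvent.empirical_freedman (hgood : al.GoodEvent) (hK : 1 ≤ K) (hδ₀ : 0 < δ)
    (hδ₁ : δ < 1) (hh : h ∈ Icc 1 M.H) {i cross : TestFn}
    (hcross : al.testFn h s a cross =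
      fun k x => M.expect h s a (al.testFn h s a i k) / M.H * al.testFn h s a i k x)
    (t : Averaging) (hn : 1 ≤ n) (hnN : n ≤ al.N K h s a) {y : ℝ}
    (hy : y = t.maxWeight M.H n * (7 * iota S A K M.H δ)) :
    -∑ j ∈ Icc 1 n, t.weight M.H n j *
        al.deviation h s a (al.testFn h s a i) (al.kvis j h s a)
      ≤ 2 * √(y * weightedVariance (Icc 1 n) (t.weight M.H n) fun j =>
            al.testFn h s a i (al.kvis j h s a) (al.st (al.kvis j h s a) (h + 1)))
        + 16 * M.H * √(y * √y) := by
  rcases subsingleton_or_nontrivial S with hS | hS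
  · simp only [deviation_of_subsingleton, mul_zero, sum_const_zero, neg_zero]
    positivity
  have hH : (0 : ℝ) < M.H := by exact_mod_cast M.H_pos
  have habs : ∀ j ∈ Icc 1 n, ∀ x, |al.testFn h s a i (al.kvis j h s a) x| ≤ M.H := fun j hj => by
    have hj' := mem_Icc.1 hj
    have hkvis := mem_Icc.1 (al.kvis_spec h hh s a j hj'.1 (hj'.2.trans hnN)).1
    exact al.abs_testFn_le hh (mem_Icc.2 ⟨hkvis.1, by omega⟩) s a i
  have hfreedman := hgood.freedman hK hδ₀ hδ₁ hh i (-1) t hn hnN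
  have hcross_le := (abs_le.1 (hgood.hoeffding hK hδ₀ hδ₁ hh cross t hn hnN)).1
  simp only [Units.val_neg, Units.val_one, Int.cast_neg, Int.cast_one, neg_mul, one_mul, mul_neg,
    sum_neg_distrib, neg_sq, ← hy, ← mul_assoc (2 : ℝ) 2, show (2 : ℝ) * 2 = 4 by norm_num]
    at hfreedman
  simp only [hcross, al.deviation_smul, ← hy] at hcross_le
  refine _root_.empirical_freedman hH.le (hy ▸ mul_nonneg (t.maxWeight_pos M.H_pos hn).le
      (mul_nonneg (by norm_num) (iota_nonneg hK M.H_pos hδ₀ hδ₁)))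
    (fun j _ => t.weight_nonneg _ _ _) (t.sum_weight _ hn) (fun j hj => habs j hj _)
    (fun j hj => M.abs_expect_le h s a (habs j hj)) hfreedman
    (hy ▸ hgood.hoeffding hK hδ₀ hδ₁ hh i t hn hnN) ?_
  calc -∑ j ∈ Icc 1 n, t.weight M.H n j * (M.expect h s a (al.testFn h s a i (al.kvis j h s a)) *
        al.deviation h s a (al.testFn h s a i) (al.kvis j h s a))
      = M.H * -∑ j ∈ Icc 1 n, t.weight M.H n j *
          (M.expect h s a (al.testFn h s a i (al.kvis j h s a)) / M.H *
            al.deviation h s a (al.testFn h s a i) (al.kvis j h s a)) := by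
        rw [mul_neg, mul_sum]
        congr 1
        refine sum_congr rfl fun j _ => ?_
        field_simp
    _ ≤ M.H * (8 * M.H * √y) := mul_le_mul_of_nonneg_left (by linarith) hH.le
    _ = 8 * M.H ^ 2 * √y := by ring

end Concentration

end QLAlg

section BonusDecay

variable {n N : ℕ}

/-- The decay `n^{-3/4}` of the lower-order term of the reference-advantage bonus, with
`bonusDecay 0 = 0`. -/
noncomputable def bonusDecay (n : ℕ) : ℝ := 1 / (n : ℝ) ^ ((3 : ℝ) / 4)

lemma bonusDecay_nonneg (n : ℕ) : 0 ≤ bonusDecay n := by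
  unfold bonusDecay
  positivity

lemma mul_bonusDecay (n : ℕ) : n * bonusDecay n = (n : ℝ) ^ ((1 : ℝ) / 4) := by
  rcases n.eq_zero_or_pos with rfl | hn
  · simp
  · have : (0 : ℝ) < n := by exact_mod_cast hn
    rw [bonusDecay, mul_one_div, div_eq_iff (by positivity), ← Real.rpow_add this]
    norm_num

lemma monotone_mul_bonusDecay : Monotone fun n : ℕ => n * bonusDecay n := fun m n hmn => by
  simp only [mul_bonusDecay]
  gcongr

lemma bonusDecay_le (hn : 1 ≤ n) (hnN : n ≤ N) : bonusDecay N ≤ bonusDecay n := by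
  have : (0 : ℝ) < n := by exact_mod_cast hn
  unfold bonusDecay
  gcongr

lemma sqrt_mul_sqrt {x : ℝ} (hx : 0 ≤ x) : √(x * √x) = x ^ ((3 : ℝ) / 4) := by
  rw [Real.sqrt_mul hx, Real.sqrt_eq_rpow, Real.sqrt_eq_rpow, ← Real.rpow_mul hx,
    ← Real.rpow_add_of_nonneg hx (by norm_num) (by norm_num)]
  norm_num

lemma sqrt_div_mul_sqrt_div_le {z : ℝ} (hz : 1 ≤ z) (N : ℕ) :
    √(z / N * √(z / N)) ≤ z * bonusDecay N := by
  rw [sqrt_mul_sqrt (by positivity), Real.div_rpow (by positivity) N.cast_nonneg, bonusDecay,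
    mul_one_div]
  gcongr
  exact Real.rpow_le_self_of_one_le hz (by norm_num)

end BonusDecay

namespace Averaging

variable {n N : ℕ}

lemma sum_uniform_weight_mul (H n : ℕ) (g : ℕ → ℝ) :
    ∑ j ∈ Icc 1 n, weight H uniform n j * g j = (∑ j ∈ Icc 1 n, g j) / n := by
  rw [div_eq_mul_one_div, mul_comm, mul_sum]
  exact sum_congr rfl fun j hj => congrArg (· * g j) (if_pos (mem_Icc.1 hj).2)

lemma mul_weightedVariance_uniform (H n : ℕ) (x : ℕ → ℝ) :
    n * weightedVariance (Icc 1 n) (weight H uniform n) x =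
      ∑ j ∈ Icc 1 n, x j ^ 2 - (∑ j ∈ Icc 1 n, x j) ^ 2 / n := by
  rcases n.eq_zero_or_pos with rfl | hn
  · simp
  · rw [weightedVariance, sum_uniform_weight_mul, sum_uniform_weight_mul]
    field_simp

lemma monotone_mul_weightedVariance_uniform (H : ℕ) (x : ℕ → ℝ) :
    Monotone fun n : ℕ => n * weightedVariance (Icc 1 n) (weight H uniform n) x := by
  refine monotone_nat_of_le_succ fun n => ?_
  rcases n.eq_zero_or_pos with rfl | hn
  · rw [Nat.cast_zero, zero_mul]
    exact mul_nonneg (Nat.cast_nonneg _) (weightedVariance_nonneg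
      (fun j _ => weight_nonneg _ _ _ _) (sum_weight _ _ le_rfl) x)
  simp only [mul_weightedVariance_uniform]
  rw [sum_Icc_succ_top (by omega), sum_Icc_succ_top (by omega), ← sub_nonneg]
  generalize ∑ j ∈ Icc 1 n, x j = X
  have hincrement : ∑ j ∈ Icc 1 n, x j ^ 2 + x (n + 1) ^ 2 - (X + x (n + 1)) ^ 2 / (n + 1 : ℕ)
      - (∑ j ∈ Icc 1 n, x j ^ 2 - X ^ 2 / n)
      = (n * x (n + 1) - X) ^ 2 / (n * (n + 1)) := by
    push_cast
    field_simp
    ring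
  rw [hincrement]
  positivity

lemma sqrt_div_mul_weightedVariance_uniform_le (H : ℕ) (x : ℕ → ℝ) {z : ℝ} (hz : 0 ≤ z)
    (hn : 1 ≤ n) (hnN : n ≤ N) :
    √(z / n * weightedVariance (Icc 1 n) (weight H uniform n) x) ≤
      N * (√(z / N) * √(weightedVariance (Icc 1 N) (weight H uniform N) x)) * (1 / n) := by
  have : (0 : ℝ) < n := by exact_mod_cast hn
  have : (0 : ℝ) < N := by exact_mod_cast hn.trans hnN
  have hmono := monotone_mul_weightedVariance_uniform H x hnN
  simp only at hmono
  rw [← Real.sqrt_mul (by positivity), ← div_eq_mul_one_div]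
  generalize weightedVariance (Icc 1 N) (weight H uniform N) x = v at *
  calc √(z / n * weightedVariance (Icc 1 n) (weight H uniform n) x)
      = √(z / n ^ 2 * (n * weightedVariance (Icc 1 n) (weight H uniform n) x)) := by
        congr 1
        field_simp
    _ ≤ √(z / n ^ 2 * (N * v)) := by gcongr
    _ = √((N / n) ^ 2 * (z / N * v)) := by
        congr 1
        field_simp
    _ = N * √(z / N * v) / n := by
        rw [Real.sqrt_mul (by positivity), Real.sqrt_sq (by positivity), div_mul_eq_mul_div]

lemma sum_lrProd_mul_sqrt_weightedVariance_le {H : ℕ} (hH : 1 ≤ H) (hN : 1 ≤ N) (x : ℕ → ℝ)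
    {z : ℝ} (hz : 0 ≤ z) :
    ∑ n ∈ Icc 1 N, lrProd H n N *
        √(z / n * weightedVariance (Icc 1 n) (weight H uniform n) x) ≤
      2 * (√(z / N) * √(weightedVariance (Icc 1 N) (weight H uniform N) x)) := by
  have hN₀ : (N : ℝ) ≠ 0 := by positivity
  obtain ⟨c, hc⟩ : ∃ c, c = N * (√(z / N) *
    √(weightedVariance (Icc 1 N) (weight H uniform N) x)) := ⟨_, rfl⟩
  have hc₀ : 0 ≤ c := hc ▸ by positivity
  have hmono : Monotone fun n : ℕ => n * (c * (1 / n : ℝ)) := fun m n hmn => by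
    rcases m.eq_zero_or_pos with rfl | hm
    · simp only [Nat.cast_zero, zero_mul]
      positivity
    · have hm₀ : (m : ℝ) ≠ 0 := by positivity
      have hn₀ : (n : ℝ) ≠ 0 := by
        have := hm.trans_le hmn
        positivity
      simp only
      field_simp
      exact le_rfl
  calc _ ≤ ∑ n ∈ Icc 1 N, lrProd H n N * (c * (1 / n)) :=
        sum_le_sum fun n hn => mul_le_mul_of_nonneg_left
          (hc ▸ sqrt_div_mul_weightedVariance_uniform_le H x hz (mem_Icc.1 hn).1 (mem_Icc.1 hn).2)
          (lrProd_nonneg _ _ _)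
    _ ≤ 2 * (c * (1 / N)) := sum_lrProd_mul_le hH hN (fun n => by positivity) hmono
    _ = _ := by
        rw [hc]
        field_simp

end Averaging

namespace QLAlg

variable {S A : Type} [Fintype S] [Fintype A] [Nonempty S] [Nonempty A]
  [DecidableEq S] [DecidableEq A] {M : MDP S A} {K : ℕ} {cb δ : ℝ} (al : QLAlg M K cb δ)
  {h k n : ℕ} {s : S} {a : A}

section Expansion

lemma kvis_mem_Icc (hh : h ∈ Icc 1 M.H) (hk : k ≤ K) (hn : n ∈ Icc 1 (al.N k h s a)) :
    al.kvis n h s a ∈ Icc 1 k := by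
  obtain ⟨hn₁, hnk⟩ := mem_Icc.1 hn
  exact mem_Icc.2 ⟨(mem_Icc.1 (al.kvis_spec h hh s a n hn₁
    (hnk.trans (al.N_mono hh s a hk le_rfl))).1).1, al.kvis_le hh hk hn₁ hnk⟩

lemma N_kvis (hh : h ∈ Icc 1 M.H) (hk : k ≤ K) (hn : n ∈ Icc 1 (al.N k h s a)) :
    al.N (al.kvis n h s a) h s a = n :=
  (al.kvis_spec h hh s a n (mem_Icc.1 hn).1
    ((mem_Icc.1 hn).2.trans (al.N_mono hh s a hk le_rfl))).2.1

lemma N_mul_muRef (hh : h ∈ Icc 1 M.H) (s : S) (a : A) (hk : k ≤ K) :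
    (al.N k h s a : ℝ) * al.muRef (k + 1) h s a = ∑ n ∈ Icc 1 (al.N k h s a),
      al.VR (al.kvis n h s a) (h + 1) (al.st (al.kvis n h s a) (h + 1)) :=
  al.mul_eq_sum_of_mean_update hh s a (fun k => al.muRef k h s a)
    (fun k => al.VR k (h + 1) (al.st k (h + 1)))
    (fun k hk => al.muRef_upd k hk h hh s a) hk

lemma N_mul_sigRef (hh : h ∈ Icc 1 M.H) (s : S) (a : A) (hk : k ≤ K) :
    (al.N k h s a : ℝ) * al.sigRef (k + 1) h s a = ∑ n ∈ Icc 1 (al.N k h s a),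
      al.VR (al.kvis n h s a) (h + 1) (al.st (al.kvis n h s a) (h + 1)) ^ 2 :=
  al.mul_eq_sum_of_mean_update hh s a (fun k => al.sigRef k h s a)
    (fun k => al.VR k (h + 1) (al.st k (h + 1)) ^ 2)
    (fun k hk => al.sigRef_upd k hk h hh s a) hk

lemma muAdv_eq (hh : h ∈ Icc 1 M.H) (s : S) (a : A) (hk : k ≤ K) :
    al.muAdv (k + 1) h s a = ∑ n ∈ Icc 1 (al.N k h s a), lrProd M.H n (al.N k h s a) *
      (al.V (al.kvis n h s a) (h + 1) (al.st (al.kvis n h s a) (h + 1))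
        - al.VR (al.kvis n h s a) (h + 1) (al.st (al.kvis n h s a) (h + 1))) := by
  rw [al.eq_sum_lrProd_of_lr_update hh s a (fun k => al.muAdv k h s a)
    (fun k => al.V k (h + 1) (al.st k (h + 1)) - al.VR k (h + 1) (al.st k (h + 1)))
    (fun k hk => al.muAdv_upd k hk h hh s a) hk, (al.mom_init h s a).2.2.1, mul_zero, zero_add]

lemma sigAdv_eq (hh : h ∈ Icc 1 M.H) (s : S) (a : A) (hk : k ≤ K) :
    al.sigAdv (k + 1) h s a = ∑ n ∈ Icc 1 (al.N k h s a), lrProd M.H n (al.N k h s a) *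
      (al.V (al.kvis n h s a) (h + 1) (al.st (al.kvis n h s a) (h + 1))
        - al.VR (al.kvis n h s a) (h + 1) (al.st (al.kvis n h s a) (h + 1))) ^ 2 := by
  rw [al.eq_sum_lrProd_of_lr_update hh s a (fun k => al.sigAdv k h s a)
    (fun k => (al.V k (h + 1) (al.st k (h + 1)) - al.VR k (h + 1) (al.st k (h + 1))) ^ 2)
    (fun k hk => al.sigAdv_upd k hk h hh s a) hk, (al.mom_init h s a).2.2.2.1, mul_zero, zero_add]

-- The term `(1 - η) δ^R / η` in `b^R` is designed so that `QR - BR` follows a plain `η`-update.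
lemma QR_sub_BR_upd (hh : h ∈ Icc 1 M.H) (hk : k ∈ Icc 1 K) (s : S) (a : A) :
    al.QR (k + 1) h s a - al.BR (k + 1) h s a = if s = al.st k h ∧ a = al.ac k h then
      (1 - lr M.H (al.N k h s a)) * (al.QR k h s a - al.BR k h s a) + lr M.H (al.N k h s a) *
        (M.r h s a + al.V k (h + 1) (al.st k (h + 1)) - al.VR k (h + 1) (al.st k (h + 1))
          + al.muRef (k + 1) h s a
          + cb * (M.H : ℝ) ^ 2 * iota S A K M.H δ * bonusDecay (al.N k h s a))
      else al.QR k h s a - al.BR k h s a := by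
  rw [al.QR_upd k hk h hh s a]
  split_ifs with hv
  · have hbR := al.bR_def k hk h hh
    rw [← hv.1, ← hv.2, al.dR_upd k hk h hh s a, if_pos hv] at hbR
    have := lr_pos M.H (al.one_le_N hh hk hv)
    rw [hbR, bonusDecay]
    field_simp
    ring
  · rw [al.BR_upd k hk h hh s a, if_neg hv]

lemma QR_sub_BR_sub_Qstar_eq (hh : h ∈ Icc 1 M.H) (s : S) (a : A) (hk : k ≤ K) :
    al.QR (k + 1) h s a - al.BR (k + 1) h s a - M.Qstar h s a =
      lrProd M.H 0 (al.N k h s a) * (M.H - M.Qstar h s a)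
      + ∑ n ∈ Icc 1 (al.N k h s a), lrProd M.H n (al.N k h s a) *
        (al.V (al.kvis n h s a) (h + 1) (al.st (al.kvis n h s a) (h + 1))
          - al.VR (al.kvis n h s a) (h + 1) (al.st (al.kvis n h s a) (h + 1))
          + (∑ i ∈ Icc 1 n, al.VR (al.kvis i h s a) (h + 1) (al.st (al.kvis i h s a) (h + 1))) / n
          - M.expect h s a (M.Vstar (h + 1))
          + cb * (M.H : ℝ) ^ 2 * iota S A K M.H δ * bonusDecay n) := by
  have hexpand := al.eq_sum_lrProd_of_lr_update hh s a (fun k => al.QR k h s a - al.BR k h s a) _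
    (fun k hk => al.QR_sub_BR_upd hh hk s a) hk
  have hQstar : M.Qstar h s a = lrProd M.H 0 (al.N k h s a) * M.Qstar h s a +
      ∑ n ∈ Icc 1 (al.N k h s a), lrProd M.H n (al.N k h s a) * M.Qstar h s a := by
    rw [← sum_mul, ← add_mul, lrProd_zero_add_sum, one_mul]
  rw [hexpand, al.QR_init h hh, (al.mom_init h s a).2.2.2.2.1, sub_zero]
  nth_rw 1 [hQstar]
  rw [mul_sub, add_sub_add_comm, ← sum_sub_distrib]
  congr 1
  refine sum_congr rfl fun n hn => ?_
  have hmuRef := al.N_mul_muRef hh s a ((mem_Icc.1 (al.kvis_mem_Icc hh hk hn)).2.trans hk)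
  rw [al.N_kvis hh hk hn] at hmuRef ⊢
  have : (n : ℝ) ≠ 0 := by
    have := (mem_Icc.1 hn).1
    positivity
  rw [← hmuRef, M.Qstar_bellman hh s a]
  field_simp
  ring

end Expansion

section Clipping

lemma V_nonneg_of_Vstar_le (hV : ∀ x, M.Vstar (h + 1) x ≤ al.V k (h + 1) x) (x : S) :
    0 ≤ al.V k (h + 1) x :=
  (M.Vstar_mem_Icc (Nat.le_add_left 1 h) x).1.trans (hV x)

lemma clippedRef_eq (hh : h ∈ Icc 1 M.H) (hk : k ∈ Icc 1 (K + 1))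
    (hV : ∀ x, M.Vstar (h + 1) x ≤ al.V k (h + 1) x) :
    al.clippedRef h k = al.VR k (h + 1) := by
  have := mem_Icc.1 hh
  exact funext fun x => max_eq_left ((al.V_nonneg_of_Vstar_le hV x).trans
    (al.V_le_VR (mem_Icc.2 ⟨by omega, by omega⟩) hk x))

lemma clippedAdv_eq (hh : h ∈ Icc 1 M.H) (hk : k ∈ Icc 1 (K + 1))
    (hV : ∀ x, M.Vstar (h + 1) x ≤ al.V k (h + 1) x) :
    al.clippedAdv h k = fun x => al.V k (h + 1) x - al.VR k (h + 1) x :=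
  funext fun x => congrArg₂ (· - ·) (max_eq_left (al.V_nonneg_of_Vstar_le hV x))
    (congrFun (al.clippedRef_eq hh hk hV) x)

lemma weightedVariance_clippedAdv (hh : h ∈ Icc 1 M.H) (hk : k ≤ K)
    (hV : ∀ j ∈ Icc 1 k, ∀ x, M.Vstar (h + 1) x ≤ al.V j (h + 1) x) :
    weightedVariance (Icc 1 (al.N k h s a)) (Averaging.learning.weight M.H (al.N k h s a))
        (fun n => al.clippedAdv h (al.kvis n h s a) (al.st (al.kvis n h s a) (h + 1))) =
      al.sigAdv (k + 1) h s a - al.muAdv (k + 1) h s a ^ 2 := by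
  rw [al.sigAdv_eq hh s a hk, al.muAdv_eq hh s a hk]
  refine weightedVariance_congr fun n hn => ?_
  have hkvis := al.kvis_mem_Icc hh hk hn
  rw [al.clippedAdv_eq hh (Icc_subset_Icc_right (by omega) hkvis) (hV _ hkvis)]

lemma weightedVariance_clippedRef (hh : h ∈ Icc 1 M.H) (hk : k ≤ K) (hN : 1 ≤ al.N k h s a)
    (hV : ∀ j ∈ Icc 1 k, ∀ x, M.Vstar (h + 1) x ≤ al.V j (h + 1) x) :
    weightedVariance (Icc 1 (al.N k h s a)) (Averaging.uniform.weight M.H (al.N k h s a))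
        (fun n => al.clippedRef h (al.kvis n h s a) (al.st (al.kvis n h s a) (h + 1))) =
      al.sigRef (k + 1) h s a - al.muRef (k + 1) h s a ^ 2 := by
  have hN₀ : (al.N k h s a : ℝ) ≠ 0 := by positivity
  have hclipped : ∀ n ∈ Icc 1 (al.N k h s a),
      al.clippedRef h (al.kvis n h s a) (al.st (al.kvis n h s a) (h + 1)) =
        al.VR (al.kvis n h s a) (h + 1) (al.st (al.kvis n h s a) (h + 1)) := fun n hn => by
    have hkvis := al.kvis_mem_Icc hh hk hn
    rw [al.clippedRef_eq hh (Icc_subset_Icc_right (by omega) hkvis) (hV _ hkvis)]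
  rw [weightedVariance_congr hclipped, weightedVariance, Averaging.sum_uniform_weight_mul,
    Averaging.sum_uniform_weight_mul, ← al.N_mul_muRef hh s a hk, ← al.N_mul_sigRef hh s a hk,
    mul_div_cancel_left₀ _ hN₀, mul_div_cancel_left₀ _ hN₀]

end Clipping

section HoeffdingEstimate

variable {al}

lemma GoodEvent.optimal_deviation_le (hgood : al.GoodEvent) (hK : 1 ≤ K) (hδ₀ : 0 < δ)
    (hδ₁ : δ < 1) (hcb : 1000 ≤ cb) (hh : h ∈ Icc 1 M.H) (hk : k ≤ K) (hN : 1 ≤ al.N k h s a) :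
    -∑ n ∈ Icc 1 (al.N k h s a), lrProd M.H n (al.N k h s a) *
        al.deviation h s a (fun _ => M.Vstar (h + 1)) (al.kvis n h s a) ≤
      cb * √((M.H : ℝ) ^ 3 * iota S A K M.H δ / al.N k h s a) := by
  have := iota_nonneg (S := S) (A := A) hK M.H_pos hδ₀ hδ₁
  refine (neg_le.1 (neg_le_of_abs_le (hgood.hoeffding hK hδ₀ hδ₁ hh .optimal .learning hN
    (al.N_mono hh s a hk le_rfl)))).trans ?_
  have hmaxWeight : Averaging.learning.maxWeight M.H (al.N k h s a) * (7 * iota S A K M.H δ) =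
      14 * (M.H * iota S A K M.H δ / al.N k h s a) := by
    simp only [Averaging.maxWeight]
    ring
  have hcube : (M.H : ℝ) ^ 3 * iota S A K M.H δ / al.N k h s a =
      (M.H : ℝ) ^ 2 * (M.H * iota S A K M.H δ / al.N k h s a) := by ring
  have : √14 ≤ 4 := Real.sqrt_le_iff.2 ⟨by norm_num, by norm_num⟩
  rw [hmaxWeight, hcube, Real.sqrt_mul (by norm_num), Real.sqrt_mul (by positivity),
    Real.sqrt_sq (by positivity)]
  calc 8 * (M.H : ℝ) * (√14 * √(M.H * iota S A K M.H δ / al.N k h s a))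
      = 8 * √14 * (M.H * √(M.H * iota S A K M.H δ / al.N k h s a)) := by ring
    _ ≤ cb * (M.H * √(M.H * iota S A K M.H δ / al.N k h s a)) := by
      gcongr
      linarith

lemma GoodEvent.Qstar_le_QUCB (hgood : al.GoodEvent) (hK : 1 ≤ K) (hδ₀ : 0 < δ)
    (hδ₁ : δ < 1) (hcb : 1000 ≤ cb) (hh : h ∈ Icc 1 M.H) (hk : k ≤ K) (hN : 1 ≤ al.N k h s a)
    (hV : ∀ j ∈ Icc 1 k, ∀ x, M.Vstar (h + 1) x ≤ al.V j (h + 1) x) :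
    M.Qstar h s a ≤ al.QUCB (k + 1) h s a := by
  have := iota_nonneg (S := S) (A := A) hK M.H_pos hδ₀ hδ₁
  obtain ⟨bonus, hbonus⟩ : ∃ b : ℕ → ℝ,
      b = fun n : ℕ => cb * √((M.H : ℝ) ^ 3 * iota S A K M.H δ / (n : ℝ)) := ⟨_, rfl⟩
  have hdeviation := hgood.optimal_deviation_le hK hδ₀ hδ₁ hcb hh hk hN
  have hbonus_le : bonus (al.N k h s a) ≤
      ∑ n ∈ Icc 1 (al.N k h s a), lrProd M.H n (al.N k h s a) * bonus n := by
    refine le_sum_lrProd_mul M.H hN fun n hn => ?_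
    obtain ⟨hn₁, hnN⟩ := mem_Icc.1 hn
    have : (0 : ℝ) < n := by exact_mod_cast hn₁
    rw [hbonus]
    dsimp only
    gcongr
  have hsum : ∑ n ∈ Icc 1 (al.N k h s a), lrProd M.H n (al.N k h s a) * (M.Qstar h s a
      + al.deviation h s a (fun _ => M.Vstar (h + 1)) (al.kvis n h s a) + bonus n) ≤
      al.QUCB (k + 1) h s a := by
    rw [al.eq_sum_lrProd_of_lr_update hh s a (fun k => al.QUCB k h s a) _
      (fun k hk => al.QUCB_upd k hk h hh s a) hk, lrProd_zero_of_pos M.H hN, zero_mul, zero_add]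
    refine sum_le_sum fun n hn => mul_le_mul_of_nonneg_left ?_ (lrProd_nonneg _ _ _)
    have := hV _ (al.kvis_mem_Icc hh hk hn) (al.st (al.kvis n h s a) (h + 1))
    rw [al.N_kvis hh hk hn, M.Qstar_bellman hh, deviation, hbonus]
    linarith
  simp only [mul_add, sum_add_distrib, ← sum_mul, sum_lrProd M.H hN, one_mul] at hsum
  rw [hbonus] at hbonus_le hsum
  linarith

end HoeffdingEstimate

section ReferenceAdvantageEstimate

variable {al}

lemma GoodEvent.advantage_deviation_le (hgood : al.GoodEvent) (hK : 1 ≤ K) (hδ₀ : 0 < δ)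
    (hδ₁ : δ < 1) (hcb : 1000 ≤ cb) (hh : h ∈ Icc 1 M.H) (hk : k ≤ K) (hN : 1 ≤ al.N k h s a)
    (hV : ∀ j ∈ Icc 1 k, ∀ x, M.Vstar (h + 1) x ≤ al.V j (h + 1) x) :
    -∑ n ∈ Icc 1 (al.N k h s a), lrProd M.H n (al.N k h s a) *
        al.deviation h s a (al.clippedAdv h) (al.kvis n h s a) ≤
      cb * √(iota S A K M.H δ / al.N k h s a) *
          (√M.H * √(al.sigAdv (k + 1) h s a - al.muAdv (k + 1) h s a ^ 2))
        + 224 * (M.H : ℝ) ^ 2 * iota S A K M.H δ * bonusDecay (al.N k h s a) := by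
  have := iota_nonneg (S := S) (A := A) hK M.H_pos hδ₀ hδ₁
  have := bonusDecay_nonneg (al.N k h s a)
  rcases subsingleton_or_nontrivial S with hS | hS
  · simp only [deviation_of_subsingleton, mul_zero, sum_const_zero, neg_zero]
    positivity
  have hH : (1 : ℝ) ≤ M.H := by exact_mod_cast M.H_pos
  have hι := half_le_iota (S := S) (A := A) hK M.H_pos hδ₀ hδ₁
  obtain ⟨ι, hι_eq⟩ : ∃ ι, ι = iota S A K M.H δ := ⟨_, rfl⟩
  have hfreedman := hgood.empirical_freedman (i := .advantage) (cross := .advantageCross)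
    hK hδ₀ hδ₁ hh rfl .learning hN (al.N_mono hh s a hk le_rfl)
    (y := 14 * M.H * ι / al.N k h s a) (by
      simp only [Averaging.maxWeight, hι_eq]
      ring)
  refine hfreedman.trans ?_
  simp only [testFn, al.weightedVariance_clippedAdv hh hk hV]
  rw [← hι_eq] at hι ⊢
  generalize al.sigAdv (k + 1) h s a - al.muAdv (k + 1) h s a ^ 2 = v
  have hsqrt : √(14 * M.H * ι / al.N k h s a * v) =
      √14 * (√(ι / al.N k h s a) * (√M.H * √v)) := by
    rw [show 14 * M.H * ι / al.N k h s a * v = 14 * (ι / al.N k h s a * (M.H * v)) by ring,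
      Real.sqrt_mul (by norm_num), Real.sqrt_mul (by positivity), Real.sqrt_mul (by positivity)]
  have : √14 ≤ 4 := Real.sqrt_le_iff.2 ⟨by norm_num, by norm_num⟩
  calc _ ≤ 2 * √14 * (√(ι / al.N k h s a) * (√M.H * √v))
          + 16 * M.H * (14 * M.H * ι * bonusDecay (al.N k h s a)) := by
        rw [hsqrt, ← mul_assoc]
        gcongr
        exact sqrt_div_mul_sqrt_div_le (by nlinarith) _
    _ ≤ cb * (√(ι / al.N k h s a) * (√M.H * √v))
          + 16 * M.H * (14 * M.H * ι * bonusDecay (al.N k h s a)) := by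
        gcongr
        linarith
    _ = _ := by ring

lemma GoodEvent.reference_mean_deviation_le (hgood : al.GoodEvent) (hK : 1 ≤ K) (hδ₀ : 0 < δ)
    (hδ₁ : δ < 1) (hh : h ∈ Icc 1 M.H) (hn : 1 ≤ n) (hnN : n ≤ al.N K h s a) :
    -((∑ i ∈ Icc 1 n, al.deviation h s a (al.clippedRef h) (al.kvis i h s a)) / n) ≤
      2 * √(7 * iota S A K M.H δ / n *
          weightedVariance (Icc 1 n) (Averaging.uniform.weight M.H n) fun i =>
            al.clippedRef h (al.kvis i h s a) (al.st (al.kvis i h s a) (h + 1)))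
        + 112 * M.H * iota S A K M.H δ * bonusDecay n := by
  have := iota_nonneg (S := S) (A := A) hK M.H_pos hδ₀ hδ₁
  have := bonusDecay_nonneg n
  rcases subsingleton_or_nontrivial S with hS | hS
  · simp only [deviation_of_subsingleton, sum_const_zero, zero_div, neg_zero]
    positivity
  have hι := half_le_iota (S := S) (A := A) hK M.H_pos hδ₀ hδ₁
  have hfreedman := hgood.empirical_freedman (i := .reference) (cross := .referenceCross)
    hK hδ₀ hδ₁ hh rfl .uniform hn hnN (y := 7 * iota S A K M.H δ / n) (by
      simp only [Averaging.maxWeight]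
      ring)
  simp only [Averaging.sum_uniform_weight_mul, testFn] at hfreedman
  refine hfreedman.trans (add_le_add_right ?_ _)
  calc 16 * (M.H : ℝ) * √(7 * iota S A K M.H δ / n * √(7 * iota S A K M.H δ / n))
      ≤ 16 * M.H * (7 * iota S A K M.H δ * bonusDecay n) := by
        gcongr
        exact sqrt_div_mul_sqrt_div_le (by linarith) n
    _ = _ := by ring

lemma GoodEvent.reference_deviation_le_sqrt (hgood : al.GoodEvent) (hK : 1 ≤ K) (hδ₀ : 0 < δ)
    (hδ₁ : δ < 1) (hh : h ∈ Icc 1 M.H) (hk : k ≤ K) (hN : 1 ≤ al.N k h s a)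
    (hV : ∀ j ∈ Icc 1 k, ∀ x, M.Vstar (h + 1) x ≤ al.V j (h + 1) x) :
    -∑ n ∈ Icc 1 (al.N k h s a), lrProd M.H n (al.N k h s a) *
        ((∑ i ∈ Icc 1 n, al.deviation h s a (al.clippedRef h) (al.kvis i h s a)) / n) ≤
      4 * (√(7 * iota S A K M.H δ / al.N k h s a) *
          √(al.sigRef (k + 1) h s a - al.muRef (k + 1) h s a ^ 2))
        + 224 * M.H * iota S A K M.H δ * bonusDecay (al.N k h s a) := by
  have hι := iota_nonneg (S := S) (A := A) hK M.H_pos hδ₀ hδ₁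
  have hvariance := Averaging.sum_lrProd_mul_sqrt_weightedVariance_le M.H_pos hN (fun i =>
    al.clippedRef h (al.kvis i h s a) (al.st (al.kvis i h s a) (h + 1)))
    (z := 7 * iota S A K M.H δ) (by linarith)
  rw [al.weightedVariance_clippedRef hh hk hN hV] at hvariance
  have hdecay_sum := sum_lrProd_mul_le M.H_pos hN bonusDecay_nonneg monotone_mul_bonusDecay
  have hmean : ∀ n ∈ Icc 1 (al.N k h s a), _ := fun n hn =>
    hgood.reference_mean_deviation_le (s := s) (a := a) hK hδ₀ hδ₁ hh (mem_Icc.1 hn).1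
      ((mem_Icc.1 hn).2.trans (al.N_mono hh s a hk le_rfl))
  generalize iota S A K M.H δ = ι at hι hvariance hmean ⊢
  calc _ ≤ ∑ n ∈ Icc 1 (al.N k h s a), lrProd M.H n (al.N k h s a) *
          (2 * √(7 * ι / n * weightedVariance (Icc 1 n) (Averaging.uniform.weight M.H n) fun i =>
            al.clippedRef h (al.kvis i h s a) (al.st (al.kvis i h s a) (h + 1)))
          + 112 * M.H * ι * bonusDecay n) := by
        simp only [← sum_neg_distrib, ← mul_neg]
        exact sum_le_sum fun n hn => mul_le_mul_of_nonneg_left (hmean n hn) (lrProd_nonneg _ _ _)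
    _ = 2 * ∑ n ∈ Icc 1 (al.N k h s a), lrProd M.H n (al.N k h s a) *
          √(7 * ι / n * weightedVariance (Icc 1 n) (Averaging.uniform.weight M.H n) fun i =>
            al.clippedRef h (al.kvis i h s a) (al.st (al.kvis i h s a) (h + 1)))
          + 112 * M.H * ι * ∑ n ∈ Icc 1 (al.N k h s a),
              lrProd M.H n (al.N k h s a) * bonusDecay n := by
        simp only [mul_sum, ← sum_add_distrib]
        exact sum_congr rfl fun n _ => by ring
    _ ≤ _ := add_le_add (mul_le_mul_of_nonneg_left hvariance two_pos.le)
        (mul_le_mul_of_nonneg_left hdecay_sum (by positivity))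
    _ = _ := by ring

lemma GoodEvent.reference_deviation_le (hgood : al.GoodEvent) (hK : 1 ≤ K) (hδ₀ : 0 < δ)
    (hδ₁ : δ < 1) (hcb : 1000 ≤ cb) (hh : h ∈ Icc 1 M.H) (hk : k ≤ K) (hN : 1 ≤ al.N k h s a)
    (hV : ∀ j ∈ Icc 1 k, ∀ x, M.Vstar (h + 1) x ≤ al.V j (h + 1) x) :
    -∑ n ∈ Icc 1 (al.N k h s a), lrProd M.H n (al.N k h s a) *
        ((∑ i ∈ Icc 1 n, al.deviation h s a (al.clippedRef h) (al.kvis i h s a)) / n) ≤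
      cb * √(iota S A K M.H δ / al.N k h s a) *
          √(al.sigRef (k + 1) h s a - al.muRef (k + 1) h s a ^ 2)
        + 224 * (M.H : ℝ) ^ 2 * iota S A K M.H δ * bonusDecay (al.N k h s a) := by
  have hι := iota_nonneg (S := S) (A := A) hK M.H_pos hδ₀ hδ₁
  have hdecay := bonusDecay_nonneg (al.N k h s a)
  have hH : (1 : ℝ) ≤ M.H := by exact_mod_cast M.H_pos
  have hsqrt : 4 * √(7 * iota S A K M.H δ / al.N k h s a) ≤
      cb * √(iota S A K M.H δ / al.N k h s a) := by
    rw [mul_div_assoc, Real.sqrt_mul (by norm_num), ← mul_assoc]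
    have : √7 ≤ 3 := Real.sqrt_le_iff.2 ⟨by norm_num, by norm_num⟩
    gcongr
    linarith
  refine (hgood.reference_deviation_le_sqrt hK hδ₀ hδ₁ hh hk hN hV).trans ?_
  rw [← mul_assoc]
  gcongr
  exact le_self_pow₀ hH two_ne_zero

variable (al)

-- `VR` decreases in `k`, so the running mean of past references dominates the current one.
lemma deviation_add_mean_deviation_le (hh : h ∈ Icc 1 M.H) (hk : k ≤ K)
    (hn : n ∈ Icc 1 (al.N k h s a))
    (hV : ∀ j ∈ Icc 1 k, ∀ x, M.Vstar (h + 1) x ≤ al.V j (h + 1) x) :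
    al.deviation h s a (al.clippedAdv h) (al.kvis n h s a)
        + (∑ i ∈ Icc 1 n, al.deviation h s a (al.clippedRef h) (al.kvis i h s a)) / n ≤
      al.V (al.kvis n h s a) (h + 1) (al.st (al.kvis n h s a) (h + 1))
        - al.VR (al.kvis n h s a) (h + 1) (al.st (al.kvis n h s a) (h + 1))
        + (∑ i ∈ Icc 1 n, al.VR (al.kvis i h s a) (h + 1) (al.st (al.kvis i h s a) (h + 1))) / n
        - M.expect h s a (M.Vstar (h + 1)) := by
  obtain ⟨hn₁, hnN⟩ := mem_Icc.1 hn
  have hh' := mem_Icc.1 hh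
  have hkvis : ∀ i ∈ Icc 1 n, al.kvis i h s a ∈ Icc 1 k := fun i hi =>
    al.kvis_mem_Icc hh hk (Icc_subset_Icc_right hnN hi)
  have hkvis' : ∀ i ∈ Icc 1 n, al.kvis i h s a ∈ Icc 1 (K + 1) := fun i hi =>
    Icc_subset_Icc_right (by omega) (hkvis i hi)
  have hh₁ : h + 1 ∈ Icc 1 (M.H + 1) := mem_Icc.2 ⟨by omega, by omega⟩
  have hlast : n ∈ Icc 1 n := right_mem_Icc.2 hn₁
  have hmean : (∑ i ∈ Icc 1 n, al.deviation h s a (al.clippedRef h) (al.kvis i h s a)) / n ≤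
      (∑ i ∈ Icc 1 n, al.VR (al.kvis i h s a) (h + 1) (al.st (al.kvis i h s a) (h + 1))) / n
        - M.expect h s a (al.VR (al.kvis n h s a) (h + 1)) := by
    have : (0 : ℝ) < n := by exact_mod_cast hn₁
    rw [div_le_iff₀ this, sub_mul, div_mul_cancel₀ _ this.ne', mul_comm _ (n : ℝ)]
    calc _ ≤ ∑ i ∈ Icc 1 n, (al.VR (al.kvis i h s a) (h + 1) (al.st (al.kvis i h s a) (h + 1))
          - M.expect h s a (al.VR (al.kvis n h s a) (h + 1))) := by
          refine sum_le_sum fun i hi => ?_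
          obtain ⟨hi₁, hin⟩ := mem_Icc.1 hi
          rw [deviation, al.clippedRef_eq hh (hkvis' i hi) (hV _ (hkvis i hi))]
          exact sub_le_sub_left (M.expect_mono h s a fun x => al.VR_anti hh₁ x
            (mem_Icc.1 (hkvis i hi)).1
            (al.kvis_mono hh hi₁ hin (hnN.trans (al.N_mono hh s a hk le_rfl)))
            (mem_Icc.1 (hkvis' n hlast)).2) _
      _ = _ := by simp only [sum_sub_distrib, sum_const, Nat.card_Icc, Nat.add_sub_cancel,
          nsmul_eq_mul]
  have hVstar := M.expect_mono h s a (hV _ (hkvis n hlast))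
  rw [deviation, al.clippedAdv_eq hh (hkvis' n hlast) (hV _ (hkvis n hlast)), M.expect_sub]
  linarith

variable {al}

lemma GoodEvent.Qstar_le_QR (hgood : al.GoodEvent) (hK : 1 ≤ K) (hδ₀ : 0 < δ) (hδ₁ : δ < 1)
    (hcb : 1000 ≤ cb) (hh : h ∈ Icc 1 M.H) (hk : k ∈ Icc 1 K) (hv : al.Visits k h s a)
    (hV : ∀ j ∈ Icc 1 k, ∀ x, M.Vstar (h + 1) x ≤ al.V j (h + 1) x) :
    M.Qstar h s a ≤ al.QR (k + 1) h s a := by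
  have hι := iota_nonneg (S := S) (A := A) hK M.H_pos hδ₀ hδ₁
  have hkK := (mem_Icc.1 hk).2
  have hN := al.one_le_N hh hk hv
  have hadvantage := hgood.advantage_deviation_le hK hδ₀ hδ₁ hcb hh hkK hN hV
  have hreference := hgood.reference_deviation_le hK hδ₀ hδ₁ hcb hh hkK hN hV
  have hBR := al.BR_upd k hk h hh s a
  rw [if_pos hv] at hBR
  have hexpand := al.QR_sub_BR_sub_Qstar_eq hh s a hkK
  rw [lrProd_zero_of_pos M.H hN, zero_mul, zero_add] at hexpand
  have hsum : ∑ n ∈ Icc 1 (al.N k h s a), lrProd M.H n (al.N k h s a) *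
      (al.deviation h s a (al.clippedAdv h) (al.kvis n h s a)
        + (∑ i ∈ Icc 1 n, al.deviation h s a (al.clippedRef h) (al.kvis i h s a)) / n
        + cb * (M.H : ℝ) ^ 2 * iota S A K M.H δ * bonusDecay n) ≤
      al.QR (k + 1) h s a - al.BR (k + 1) h s a - M.Qstar h s a := by
    rw [hexpand]
    exact sum_le_sum fun n hn => mul_le_mul_of_nonneg_left (add_le_add_left
      (al.deviation_add_mean_deviation_le hh hkK hn hV) _) (lrProd_nonneg _ _ _)
  simp only [mul_add, sum_add_distrib, mul_left_comm _ (cb * (M.H : ℝ) ^ 2 * iota S A K M.H δ),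
    ← mul_sum] at hsum
  have hbonus : 448 * ((M.H : ℝ) ^ 2 * iota S A K M.H δ * bonusDecay (al.N k h s a)) ≤
      cb * (M.H : ℝ) ^ 2 * iota S A K M.H δ *
        ∑ n ∈ Icc 1 (al.N k h s a), lrProd M.H n (al.N k h s a) * bonusDecay n := by
    rw [← mul_assoc, ← mul_assoc]
    have := bonusDecay_nonneg (al.N k h s a)
    gcongr
    · linarith
    · exact le_sum_lrProd_mul M.H hN fun n hn => bonusDecay_le (mem_Icc.1 hn).1 (mem_Icc.1 hn).2
  linarith

end ReferenceAdvantageEstimate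

section Optimism

lemma Vstar_le_V_of_Qstar_le_Q (hk : k ∈ Icc 1 (K + 1))
    (hQ : ∀ h ∈ Icc 1 M.H, ∀ s a, M.Qstar h s a ≤ al.Q k h s a) (hh : h ∈ Icc 1 (M.H + 1)) (s : S) :
    M.Vstar h s ≤ al.V k h s := by
  rcases eq_or_mem_Icc_of_mem_Icc_succ hh with rfl | hh
  · rw [M.Vstar_terminal, (al.V_terminal k s).1]
  · rw [al.V_eq_sup' hh hk s]
    exact sup'_mono_fun fun a _ => hQ h hh s a

variable {al}

lemma GoodEvent.Qstar_le_Q (hgood : al.GoodEvent) (hK : 1 ≤ K) (hδ₀ : 0 < δ) (hδ₁ : δ < 1)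
    (hcb : 1000 ≤ cb) (hk : k ∈ Icc 1 (K + 1)) :
    ∀ h ∈ Icc 1 M.H, ∀ s a, M.Qstar h s a ≤ al.Q k h s a := by
  induction k using Nat.strong_induction_on with
  | _ k ih =>
    intro h hh s a
    have hh' := mem_Icc.1 hh
    obtain ⟨hk₁, hkK⟩ := mem_Icc.1 hk
    obtain rfl | ⟨k, rfl⟩ : k = 1 ∨ ∃ j, k = j + 1 + 1 := by
      obtain _ | _ | j := k
      · omega
      · exact .inl rfl
      · exact .inr ⟨j, rfl⟩
    · rw [al.Q_init h hh]
      exact (M.Qstar_mem_Icc hh'.1 s a).2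
    have hk : k + 1 ∈ Icc 1 K := mem_Icc.2 ⟨by omega, by omega⟩
    have hQ := ih (k + 1) (by omega) (mem_Icc.2 ⟨by omega, by omega⟩) h hh s a
    rw [al.Q_upd (k + 1) hk h hh s a]
    split_ifs with hv
    · have hV : ∀ j ∈ Icc 1 (k + 1), ∀ x, M.Vstar (h + 1) x ≤ al.V j (h + 1) x := fun j hj x => by
        obtain ⟨hj₁, hjk⟩ := mem_Icc.1 hj
        have hjK : j ∈ Icc 1 (K + 1) := mem_Icc.2 ⟨hj₁, by omega⟩
        exact al.Vstar_le_V_of_Qstar_le_Q hjK (ih j (by omega) hjK)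
          (mem_Icc.2 ⟨by omega, by omega⟩) x
      exact le_min (hgood.Qstar_le_QR hK hδ₀ hδ₁ hcb hh hk hv hV)
        (le_min (hgood.Qstar_le_QUCB hK hδ₀ hδ₁ hcb hh (mem_Icc.1 hk).2
          (al.one_le_N hh hk hv) hV) hQ)
    · exact hQ

lemma GoodEvent.Vstar_le_V (hgood : al.GoodEvent) (hK : 1 ≤ K) (hδ₀ : 0 < δ) (hδ₁ : δ < 1)
    (hcb : 1000 ≤ cb) (hk : k ∈ Icc 1 (K + 1)) (hh : h ∈ Icc 1 (M.H + 1)) (s : S) :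
    M.Vstar h s ≤ al.V k h s :=
  al.Vstar_le_V_of_Qstar_le_Q hk (hgood.Qstar_le_Q hK hδ₀ hδ₁ hcb hk) hh s

end Optimism

end QLAlg

section LearningRateTail

variable {H N : ℕ}

/-- The total learning-rate weight `∑_{n=i}^N η_i^n` received by the `i`-th visit in the updates
at the visits `i, …, N`. -/
noncomputable def lrTail (H N i : ℕ) : ℝ := ∑ n ∈ Icc i N, lrProd H i n

lemma lrTail_succ {i : ℕ} (hi : i ≤ N + 1) :
    lrTail H (N + 1) i = lrTail H N i + lrProd H i (N + 1) :=
  sum_Icc_succ_top hi _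

lemma sum_sum_lrProd_mul_eq_sum_lrTail_mul (H N : ℕ) (x : ℕ → ℝ) :
    ∑ n ∈ Icc 1 N, ∑ i ∈ Icc 1 (n - 1), lrProd H i (n - 1) * x i =
      ∑ i ∈ Icc 1 N, lrTail H (N - 1) i * x i := by
  induction N with
  | zero => simp
  | succ N ih =>
    rw [sum_Icc_succ_top (by omega), sum_Icc_succ_top (by omega), ih, Nat.add_sub_cancel,
      lrTail, Icc_eq_empty (Nat.not_succ_le_self N), sum_empty, zero_mul, add_zero,
      ← sum_add_distrib]
    refine sum_congr rfl fun i hi => ?_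
    obtain ⟨hi₁, hiN⟩ := mem_Icc.1 hi
    obtain ⟨N, rfl⟩ := Nat.exists_eq_add_of_le' (hi₁.trans hiN)
    rw [Nat.add_sub_cancel, lrTail_succ hiN, add_mul]

lemma sum_lrTail_mul_le_succ (hN : 1 ≤ N) {x : ℕ → ℝ} {c : ℝ} (hx : ∀ i ∈ Icc 1 N, -c ≤ x i) :
    ∑ i ∈ Icc 1 N, lrTail H (N - 1) i * x i ≤ ∑ i ∈ Icc 1 N, lrTail H N i * x i + c := by
  have hlast : -c ≤ ∑ i ∈ Icc 1 N, lrProd H i N * x i := by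
    calc -c = ∑ i ∈ Icc 1 N, lrProd H i N * -c := by rw [← sum_mul, sum_lrProd H hN, one_mul]
      _ ≤ _ := sum_le_sum fun i hi => mul_le_mul_of_nonneg_left (hx i hi) (lrProd_nonneg H i N)
  have hsplit : ∑ i ∈ Icc 1 N, lrTail H N i * x i =
      ∑ i ∈ Icc 1 N, lrTail H (N - 1) i * x i + ∑ i ∈ Icc 1 N, lrProd H i N * x i := by
    obtain ⟨N, rfl⟩ := Nat.exists_eq_add_of_le' hN
    rw [← sum_add_distrib]
    exact sum_congr rfl fun i hi => by
      rw [Nat.add_sub_cancel, lrTail_succ (mem_Icc.1 hi).2, add_mul]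
  linarith

lemma sum_bonusDecay_le (hN : 1 ≤ N) :
    ∑ n ∈ Icc 1 N, bonusDecay n ≤ 4 * (N : ℝ) ^ ((1 : ℝ) / 4) - 3 := by
  have hdecay : ∀ n : ℕ, (n : ℝ) ^ ((1 : ℝ) / 4 - 1) = bonusDecay n := fun n => by
    rw [bonusDecay, one_div ((n : ℝ) ^ _), ← Real.rpow_neg n.cast_nonneg]
    norm_num
  have hsum := mul_sum_rpow_sub_one_add_le (p := 1 / 4) (by norm_num) (by norm_num) hN
  simp only [hdecay] at hsum
  linarith

lemma sum_lrTail_mul_bonusDecay_le (hH : 1 ≤ H) (hN : 1 ≤ N) :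
    ∑ n ∈ Icc 1 N, lrTail H (N - 1) n * bonusDecay n ≤ 8 * (N : ℝ) ^ ((1 : ℝ) / 4) - 6 := by
  have hH' : 1 / (H : ℝ) ≤ 1 := (div_le_one (by positivity)).2 (by exact_mod_cast hH)
  calc ∑ n ∈ Icc 1 N, lrTail H (N - 1) n * bonusDecay n
      ≤ ∑ n ∈ Icc 1 N, 2 * bonusDecay n := sum_le_sum fun n hn =>
        mul_le_mul_of_nonneg_right
          ((sum_Icc_lrProd_le (N - 1) hH (mem_Icc.1 hn).1).trans (by linarith))
          (bonusDecay_nonneg n)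
    _ ≤ _ := by
      rw [← mul_sum]
      linarith [sum_bonusDecay_le hN]

end LearningRateTail

lemma le_pow_mul_add_sum_of_le_mul_succ_add (H : ℕ) {D T : ℕ → ℝ} {c : ℝ} (hc : 0 ≤ c)
    (hD : ∀ h ∈ Icc 1 H, D h ≤ c * D (h + 1) + T h) :
    D 1 ≤ c ^ H * D (H + 1) + ∑ h ∈ Icc 1 H, c ^ (h - 1) * T h := by
  induction H with
  | zero => simp
  | succ H ih =>
    have hlast := mul_le_mul_of_nonneg_left (hD (H + 1) (right_mem_Icc.2 (Nat.le_add_left 1 H)))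
      (pow_nonneg hc H)
    rw [sum_Icc_succ_top (Nat.le_add_left 1 H), Nat.add_sub_cancel, pow_succ]
    linarith [ih fun h hh => hD h (Icc_subset_Icc_right H.le_succ hh)]

namespace QLAlg

variable {S A : Type} [Fintype S] [Fintype A] [Nonempty S] [Nonempty A]
  [DecidableEq S] [DecidableEq A] {M : MDP S A} {K : ℕ} {cb δ : ℝ} (al : QLAlg M K cb δ)
  {h k n : ℕ} {s : S} {a : A}

/-- All value estimates dominate the optimal values. -/
def Optimistic : Prop :=
  ∀ k ∈ Icc 1 (K + 1), ∀ h ∈ Icc 1 (M.H + 1), ∀ s, M.Vstar h s ≤ al.V k h s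

/-- The bracket multiplying `λ_h^k` in `R₃`, with the two terms `P_{h,s,a} V_{h+1}^{R,k}`
cancelled. -/
noncomputable def refError (h k : ℕ) : ℝ :=
  M.Vstar (h + 1) (al.st k (h + 1)) - al.VR k (h + 1) (al.st k (h + 1))
    - M.expect h (al.st k h) (al.ac k h) (M.Vstar (h + 1))
    + (∑ i ∈ Icc 1 (al.N k h (al.st k h) (al.ac k h)),
        al.VR (al.kvis i h (al.st k h) (al.ac k h)) (h + 1)
          (al.st (al.kvis i h (al.st k h) (al.ac k h)) (h + 1)))
      / al.N k h (al.st k h) (al.ac k h)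

/-- The weight `λ_h^k` without its factor `(1 + 1/H)^(h-1)`. -/
noncomputable def visitWeight (h k : ℕ) : ℝ :=
  lrTail M.H (al.N (K - 1) h (al.st k h) (al.ac k h)) (al.N k h (al.st k h) (al.ac k h))

/-- The excess of the reference-advantage estimate, without its aggregated bonus, over `Q_h^⋆` at
the pair visited in step `h` of episode `k`. -/
noncomputable def refGap (h k : ℕ) : ℝ :=
  al.QR k h (al.st k h) (al.ac k h) - al.BR k h (al.st k h) (al.ac k h)
    - M.Qstar h (al.st k h) (al.ac k h)

/-- The excess of the value estimate over `V_h^⋆` at the state reached in step `h` of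
episode `k`. -/
noncomputable def valueGap (h k : ℕ) : ℝ :=
  al.V k h (al.st k h) - M.Vstar h (al.st k h)

lemma Optimistic.valueGap_nonneg {al : QLAlg M K cb δ} (hopt : al.Optimistic)
    (hk : k ∈ Icc 1 (K + 1)) (hh : h ∈ Icc 1 (M.H + 1)) : 0 ≤ al.valueGap h k :=
  sub_nonneg.2 (hopt k hk h hh _)

section ReferenceError

lemma refError_eq (hh : h ∈ Icc 1 M.H) (hk : k ∈ Icc 1 K) :
    (M.Vstar (h + 1) (al.st k (h + 1)) - al.VR k (h + 1) (al.st k (h + 1))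
          - M.expect h (al.st k h) (al.ac k h) fun x => M.Vstar (h + 1) x - al.VR k (h + 1) x)
        + (∑ i ∈ Icc 1 (al.N k h (al.st k h) (al.ac k h)),
            (al.VR (al.kvis i h (al.st k h) (al.ac k h)) (h + 1)
                (al.st (al.kvis i h (al.st k h) (al.ac k h)) (h + 1))
              - M.expect h (al.st k h) (al.ac k h) (al.VR k (h + 1))))
            / al.N k h (al.st k h) (al.ac k h) = al.refError h k := by
  have hN : (al.N k h (al.st k h) (al.ac k h) : ℝ) ≠ 0 :=
    Nat.cast_ne_zero.2 (Nat.one_le_iff_ne_zero.1 (al.one_le_N hh hk ⟨rfl, rfl⟩))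
  rw [M.expect_sub, sum_sub_distrib, sum_const, Nat.card_Icc, Nat.add_sub_cancel, nsmul_eq_mul,
    sub_div, mul_div_cancel_left₀ _ hN, refError]
  ring

lemma refError_nonneg_of_subsingleton [Subsingleton S] (hh : h ∈ Icc 1 M.H) (hk : k ∈ Icc 1 K) :
    0 ≤ al.refError h k := by
  have hh' := mem_Icc.1 hh
  have hkK := (mem_Icc.1 hk).2
  have hN := al.one_le_N hh hk ⟨rfl, rfl⟩
  have hmean : al.VR k (h + 1) (al.st k (h + 1)) ≤
      (∑ i ∈ Icc 1 (al.N k h (al.st k h) (al.ac k h)),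
        al.VR (al.kvis i h (al.st k h) (al.ac k h)) (h + 1)
          (al.st (al.kvis i h (al.st k h) (al.ac k h)) (h + 1)))
      / al.N k h (al.st k h) (al.ac k h) := by
    rw [le_div_iff₀ (by exact_mod_cast hN), mul_comm, ← nsmul_eq_mul]
    calc _ = #(Icc 1 (al.N k h (al.st k h) (al.ac k h))) •
          al.VR k (h + 1) (al.st k (h + 1)) := by rw [Nat.card_Icc, Nat.add_sub_cancel]
      _ ≤ _ := card_nsmul_le_sum _ _ _ fun i hi => by
        obtain ⟨hi₁, hik⟩ := mem_Icc.1 (al.kvis_mem_Icc hh hkK hi)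
        rw [Subsingleton.elim (al.st (al.kvis i h _ _) (h + 1)) (al.st k (h + 1))]
        exact al.VR_anti (mem_Icc.2 ⟨by omega, by omega⟩) _ hi₁ hik (by omega)
  rw [refError, M.expect_of_subsingleton _ _ _ _ (al.st k (h + 1))]
  linarith

variable {al}

lemma Optimistic.VR_nonneg (hopt : al.Optimistic) (hk : k ∈ Icc 1 (K + 1))
    (hh : h ∈ Icc 1 (M.H + 1)) (x : S) : 0 ≤ al.VR k h x :=
  ((M.Vstar_mem_Icc (mem_Icc.1 hh).1 x).1.trans (hopt k hk h hh x)).trans (al.V_le_VR hh hk x)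

lemma Optimistic.neg_le_refError (hopt : al.Optimistic) (hh : h ∈ Icc 1 M.H)
    (hk : k ∈ Icc 1 K) : -(2 * M.H : ℝ) ≤ al.refError h k := by
  have hh' := mem_Icc.1 hh
  have hkK := (mem_Icc.1 hk).2
  have hh₁ : h + 1 ∈ Icc 1 (M.H + 1) := mem_Icc.2 ⟨by omega, by omega⟩
  have hVstar := (M.Vstar_mem_Icc (mem_Icc.1 hh₁).1 (al.st k (h + 1))).1
  have hVR := al.VR_le hh₁ (Icc_subset_Icc_right K.le_succ hk) (al.st k (h + 1))
  have hexpect := M.expect_le h (al.st k h) (al.ac k h) fun x =>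
    (M.Vstar_mem_Icc (mem_Icc.1 hh₁).1 x).2
  have hmean : 0 ≤ (∑ i ∈ Icc 1 (al.N k h (al.st k h) (al.ac k h)),
      al.VR (al.kvis i h (al.st k h) (al.ac k h)) (h + 1)
        (al.st (al.kvis i h (al.st k h) (al.ac k h)) (h + 1)))
      / al.N k h (al.st k h) (al.ac k h) :=
    div_nonneg (sum_nonneg fun i hi => hopt.VR_nonneg
      (Icc_subset_Icc_right (by omega) (al.kvis_mem_Icc hh hkK hi)) hh₁ _) (Nat.cast_nonneg _)
  rw [refError]
  linarith

-- For a single state `ι` may vanish, but then there is no error at all.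
lemma Optimistic.neg_iota_le_refError (hopt : al.Optimistic) (hK : 1 ≤ K) (hδ₀ : 0 < δ)
    (hδ₁ : δ < 1) (hh : h ∈ Icc 1 M.H) (hk : k ∈ Icc 1 K) :
    -(4 * M.H * iota S A K M.H δ) ≤ al.refError h k := by
  rcases subsingleton_or_nontrivial S with hS | hS
  · have := iota_nonneg (S := S) (A := A) hK M.H_pos hδ₀ hδ₁
    exact (neg_nonpos.2 (by positivity)).trans (al.refError_nonneg_of_subsingleton hh hk)
  · have hι := half_le_iota (S := S) (A := A) hK M.H_pos hδ₀ hδ₁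
    have := mul_le_mul_of_nonneg_left hι (by positivity : 0 ≤ 4 * (M.H : ℝ))
    linarith [hopt.neg_le_refError hh hk]

end ReferenceError

section VisitSums

lemma refGap_of_visits (hv : al.Visits k h s a) :
    al.refGap h k = al.QR k h s a - al.BR k h s a - M.Qstar h s a := by
  rw [refGap, ← hv.1, ← hv.2]

lemma refError_of_visits (hv : al.Visits k h s a) :
    al.refError h k = M.Vstar (h + 1) (al.st k (h + 1)) - al.VR k (h + 1) (al.st k (h + 1))
      - M.expect h s a (M.Vstar (h + 1))
      + (∑ i ∈ Icc 1 (al.N k h s a), al.VR (al.kvis i h s a) (h + 1)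
          (al.st (al.kvis i h s a) (h + 1))) / al.N k h s a := by
  rw [refError, ← hv.1, ← hv.2]

lemma visitWeight_of_visits (hv : al.Visits k h s a) :
    al.visitWeight h k = lrTail M.H (al.N (K - 1) h s a) (al.N k h s a) := by
  rw [visitWeight, ← hv.1, ← hv.2]

lemma refGap_kvis_le (hh : h ∈ Icc 1 M.H) (hn : n ∈ Icc 1 (al.N K h s a)) :
    al.refGap h (al.kvis n h s a) ≤ (if n = 1 then (M.H : ℝ) else 0)
      + ∑ i ∈ Icc 1 (n - 1), lrProd M.H i (n - 1) *
        (al.valueGap (h + 1) (al.kvis i h s a) + al.refError h (al.kvis i h s a)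
          + cb * (M.H : ℝ) ^ 2 * iota S A K M.H δ * bonusDecay i) := by
  obtain ⟨hn₁, hnK⟩ := mem_Icc.1 hn
  have hkvis := al.kvis_mem_Icc hh le_rfl hn
  have hkvis' := mem_Icc.1 hkvis
  have hN : al.N (al.kvis n h s a - 1) h s a = n - 1 := by
    have := al.N_of_visits hh hkvis (al.visits_kvis hh hn₁ hnK)
    have := al.N_kvis hh le_rfl hn
    omega
  have hexpand := al.QR_sub_BR_sub_Qstar_eq hh s a
    (k := al.kvis n h s a - 1) (by omega)
  rw [Nat.sub_add_cancel hkvis'.1, hN] at hexpand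
  rw [al.refGap_of_visits (al.visits_kvis hh hn₁ hnK), hexpand]
  refine add_le_add ?_ (sum_le_sum fun i hi => ?_)
  · split_ifs with hn_one
    · subst hn_one
      rw [lrProd_zero_zero, one_mul, sub_le_self_iff]
      exact (M.Qstar_mem_Icc (mem_Icc.1 hh).1 s a).1
    · rw [lrProd_zero_of_pos _ (by omega), zero_mul]
  · obtain ⟨hi₁, hin⟩ := mem_Icc.1 hi
    have hiK : i ≤ al.N K h s a := by omega
    rw [al.refError_of_visits (al.visits_kvis hh hi₁ hiK),
      al.N_kvis hh le_rfl (mem_Icc.2 ⟨hi₁, hiK⟩), valueGap]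
    exact mul_le_mul_of_nonneg_left (by linarith) (lrProd_nonneg _ _ _)

lemma sum_refGap_kvis_le (hh : h ∈ Icc 1 M.H) (hN : 1 ≤ al.N K h s a) :
    ∑ n ∈ Icc 1 (al.N K h s a), al.refGap h (al.kvis n h s a) ≤ M.H
      + ∑ n ∈ Icc 1 (al.N K h s a), lrTail M.H (al.N K h s a - 1) n *
        (al.valueGap (h + 1) (al.kvis n h s a) + al.refError h (al.kvis n h s a)
          + cb * (M.H : ℝ) ^ 2 * iota S A K M.H δ * bonusDecay n) := by
  refine (sum_le_sum fun n hn => al.refGap_kvis_le hh hn).trans_eq ?_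
  rw [sum_add_distrib, sum_sum_lrProd_mul_eq_sum_lrTail_mul, sum_ite_eq',
    if_pos (mem_Icc.2 ⟨le_rfl, hN⟩)]

variable {al}

-- `λ_h^k` only counts visits up to episode `K - 1`; the last visit costs one reference error.
lemma Optimistic.sum_lrTail_mul_refError_le (hopt : al.Optimistic) (hK : 1 ≤ K) (hδ₀ : 0 < δ)
    (hδ₁ : δ < 1) (hh : h ∈ Icc 1 M.H) (hN : 1 ≤ al.N K h s a) :
    ∑ n ∈ Icc 1 (al.N K h s a), lrTail M.H (al.N K h s a - 1) n *
        al.refError h (al.kvis n h s a) ≤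
      ∑ n ∈ Icc 1 (al.N K h s a), al.visitWeight h (al.kvis n h s a) *
        al.refError h (al.kvis n h s a) + 4 * M.H * iota S A K M.H δ := by
  have hι := iota_nonneg (S := S) (A := A) hK M.H_pos hδ₀ hδ₁
  have hweight : ∑ n ∈ Icc 1 (al.N K h s a), al.visitWeight h (al.kvis n h s a) *
        al.refError h (al.kvis n h s a) =
      ∑ n ∈ Icc 1 (al.N K h s a), lrTail M.H (al.N (K - 1) h s a) n *
        al.refError h (al.kvis n h s a) := sum_congr rfl fun n hn => by
    rw [al.visitWeight_of_visits (al.visits_kvis hh (mem_Icc.1 hn).1 (mem_Icc.1 hn).2),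
      al.N_kvis hh le_rfl hn]
  rw [hweight]
  by_cases hv : al.Visits K h s a
  · rw [al.N_of_visits hh (right_mem_Icc.2 hK) hv, Nat.add_sub_cancel]
    exact le_add_of_nonneg_right (by positivity)
  · rw [← al.N_of_not_visits hh (right_mem_Icc.2 hK) hv]
    exact sum_lrTail_mul_le_succ hN fun n hn =>
      hopt.neg_iota_le_refError hK hδ₀ hδ₁ hh (al.kvis_mem_Icc hh le_rfl hn)

lemma Optimistic.sum_refGap_kvis_le (hopt : al.Optimistic) (hK : 1 ≤ K) (hδ₀ : 0 < δ)
    (hδ₁ : δ < 1) (hcb : 1000 ≤ cb) (hh : h ∈ Icc 1 M.H) (s : S) (a : A) :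
    ∑ n ∈ Icc 1 (al.N K h s a), al.refGap h (al.kvis n h s a) ≤
      M.H + 8 * cb * (M.H : ℝ) ^ 2 * iota S A K M.H δ * (al.N K h s a : ℝ) ^ ((1 : ℝ) / 4)
      + ∑ n ∈ Icc 1 (al.N K h s a),
        ((1 + 1 / (M.H : ℝ)) * al.valueGap (h + 1) (al.kvis n h s a)
          + al.visitWeight h (al.kvis n h s a) * al.refError h (al.kvis n h s a)) := by
  have hι := iota_nonneg (S := S) (A := A) hK M.H_pos hδ₀ hδ₁
  have hH : (1 : ℝ) ≤ M.H := by exact_mod_cast M.H_pos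
  rcases (al.N K h s a).eq_zero_or_pos with hN | hN
  · rw [hN]
    simp
  have hh₁ : h + 1 ∈ Icc 1 (M.H + 1) := by
    have := mem_Icc.1 hh
    exact mem_Icc.2 ⟨by omega, by omega⟩
  have hvalue : ∑ n ∈ Icc 1 (al.N K h s a), lrTail M.H (al.N K h s a - 1) n *
        al.valueGap (h + 1) (al.kvis n h s a) ≤
      ∑ n ∈ Icc 1 (al.N K h s a), (1 + 1 / (M.H : ℝ)) *
        al.valueGap (h + 1) (al.kvis n h s a) := sum_le_sum fun n hn =>
    mul_le_mul_of_nonneg_right (sum_Icc_lrProd_le _ M.H_pos (mem_Icc.1 hn).1)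
      (hopt.valueGap_nonneg (Icc_subset_Icc_right K.le_succ (al.kvis_mem_Icc hh le_rfl hn)) hh₁)
  have hdecay : cb * (M.H : ℝ) ^ 2 * iota S A K M.H δ * ∑ n ∈ Icc 1 (al.N K h s a),
        lrTail M.H (al.N K h s a - 1) n * bonusDecay n ≤
      cb * (M.H : ℝ) ^ 2 * iota S A K M.H δ * (8 * (al.N K h s a : ℝ) ^ ((1 : ℝ) / 4) - 6) :=
    mul_le_mul_of_nonneg_left (sum_lrTail_mul_bonusDecay_le M.H_pos hN) (by positivity)
  have hslack : 4 * M.H * iota S A K M.H δ ≤ cb * (M.H : ℝ) ^ 2 * iota S A K M.H δ * 6 := by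
    have : 4 * (M.H * iota S A K M.H δ) ≤ 6 * cb * M.H * (M.H * iota S A K M.H δ) :=
      mul_le_mul_of_nonneg_right (by nlinarith) (by positivity)
    linarith
  have hgap := al.sum_refGap_kvis_le hh hN
  simp only [mul_add, sum_add_distrib, mul_left_comm _ (cb * (M.H : ℝ) ^ 2 * iota S A K M.H δ),
    ← mul_sum] at hgap
  rw [sum_add_distrib]
  rw [← mul_sum] at hvalue ⊢
  linarith [hopt.sum_lrTail_mul_refError_le hK hδ₀ hδ₁ hh hN]

end VisitSums

section EpisodeSums

lemma sum_eq_sum_sum_visits (φ : ℕ → ℝ) (h : ℕ) :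
    ∑ k ∈ Icc 1 K, φ k =
      ∑ p : S × A, ∑ k ∈ Icc 1 K, if al.Visits k h p.1 p.2 then φ k else 0 := by
  rw [sum_comm]
  refine sum_congr rfl fun k _ => ?_
  have hvisits : ∀ p : S × A, al.Visits k h p.1 p.2 ↔ p = (al.st k h, al.ac k h) := fun p =>
    (Prod.ext_iff (x := p) (y := (al.st k h, al.ac k h))).symm
  simp only [hvisits, sum_ite_eq', mem_univ, if_true]

lemma sum_eq_sum_sum_kvis (hh : h ∈ Icc 1 M.H) (φ : ℕ → ℝ) :
    ∑ k ∈ Icc 1 K, φ k =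
      ∑ p : S × A, ∑ n ∈ Icc 1 (al.N K h p.1 p.2), φ (al.kvis n h p.1 p.2) := by
  rw [al.sum_eq_sum_sum_visits φ h]
  exact sum_congr rfl fun p _ => al.sum_visits_eq hh p.1 p.2 (fun _ k => φ k) le_rfl

lemma sum_N_eq (hh : h ∈ Icc 1 M.H) : ∑ p : S × A, (al.N K h p.1 p.2 : ℝ) = K := by
  simpa using (al.sum_eq_sum_sum_kvis hh fun _ => 1).symm

lemma sum_N_rpow_le (hh : h ∈ Icc 1 M.H) :
    ∑ p : S × A, (al.N K h p.1 p.2 : ℝ) ^ ((1 : ℝ) / 4) ≤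
      ((Fintype.card S : ℝ) * Fintype.card A) ^ ((3 : ℝ) / 4) * (K : ℝ) ^ ((1 : ℝ) / 4) := by
  have hholder := sum_rpow_le_card_rpow_mul_rpow_sum (univ : Finset (S × A))
    (x := fun p => (al.N K h p.1 p.2 : ℝ)) (fun p _ => Nat.cast_nonneg _) (p := 1 / 4)
    (by norm_num) (by norm_num)
  rw [al.sum_N_eq hh, card_univ, Fintype.card_prod, Nat.cast_mul] at hholder
  norm_num at hholder ⊢
  exact hholder

variable {al}

lemma Optimistic.sum_refGap_le (hopt : al.Optimistic) (hK : 1 ≤ K) (hδ₀ : 0 < δ) (hδ₁ : δ < 1)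
    (hcb : 1000 ≤ cb) (hh : h ∈ Icc 1 M.H) :
    ∑ k ∈ Icc 1 K, al.refGap h k ≤
      (M.H : ℝ) * Fintype.card S * Fintype.card A
      + 8 * cb * (M.H : ℝ) ^ 2 * ((Fintype.card S : ℝ) * Fintype.card A) ^ ((3 : ℝ) / 4)
          * (K : ℝ) ^ ((1 : ℝ) / 4) * iota S A K M.H δ
      + ∑ k ∈ Icc 1 K, ((1 + 1 / (M.H : ℝ)) * al.valueGap (h + 1) k
          + al.visitWeight h k * al.refError h k) := by
  have hι := iota_nonneg (S := S) (A := A) hK M.H_pos hδ₀ hδ₁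
  have hcount := mul_le_mul_of_nonneg_left (al.sum_N_rpow_le hh)
    (by positivity : 0 ≤ 8 * cb * (M.H : ℝ) ^ 2 * iota S A K M.H δ)
  rw [al.sum_eq_sum_sum_kvis hh fun k => al.refGap h k, al.sum_eq_sum_sum_kvis hh fun k =>
    (1 + 1 / (M.H : ℝ)) * al.valueGap (h + 1) k + al.visitWeight h k * al.refError h k]
  refine (sum_le_sum fun p _ =>
    hopt.sum_refGap_kvis_le hK hδ₀ hδ₁ hcb hh p.1 p.2).trans ?_
  rw [sum_add_distrib, sum_add_distrib, ← mul_sum, sum_const, card_univ, Fintype.card_prod,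
    nsmul_eq_mul, Nat.cast_mul]
  linarith

end EpisodeSums

section Regret

/-- The accumulated excess `∑_{k=1}^K (V_h^k - V_h^{π^k})(s_h^k)` of the value estimates over the
values of the executed policies. -/
noncomputable def stepRegret (h : ℕ) : ℝ :=
  ∑ k ∈ Icc 1 K, (al.V k h (al.st k h) - M.Vpol (al.pol k) h (al.st k h))

/-- The martingale difference `(P_{h,s,a} - P_h^k)(V_{h+1}^⋆ - V_{h+1}^{π^k})`. -/
noncomputable def policyNoise (h k : ℕ) : ℝ :=
  (M.expect h (al.st k h) (al.ac k h) fun x => M.Vstar (h + 1) x - M.Vpol (al.pol k) (h + 1) x)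
    - (M.Vstar (h + 1) (al.st k (h + 1)) - M.Vpol (al.pol k) (h + 1) (al.st k (h + 1)))

lemma stepRegret_terminal : al.stepRegret (M.H + 1) = 0 :=
  sum_eq_zero fun k _ => by rw [(al.V_terminal k _).1, M.Vpol_terminal, sub_zero]

lemma V_sub_Vpol_le (hh : h ∈ Icc 1 M.H) (hk : k ∈ Icc 1 K) :
    al.V k h (al.st k h) - M.Vpol (al.pol k) h (al.st k h) ≤
      al.refGap h k + al.BR k h (al.st k h) (al.ac k h) + al.policyNoise h k
        + (1 + 1 / (M.H : ℝ)) * (M.Vstar (h + 1) (al.st k (h + 1))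
          - M.Vpol (al.pol k) (h + 1) (al.st k (h + 1))) := by
  have hk' : k ∈ Icc 1 (K + 1) := Icc_subset_Icc_right K.le_succ hk
  have hQ := al.Q_le_QR hh hk' (al.st k h) (al.ac k h)
  have hVpol := M.Vpol_bellman (al.pol k) hh (al.st k h)
  have hslack : 0 ≤ 1 / (M.H : ℝ) * (M.Vstar (h + 1) (al.st k (h + 1))
      - M.Vpol (al.pol k) (h + 1) (al.st k (h + 1))) :=
    mul_nonneg (by positivity) (sub_nonneg.2 (M.Vpol_le_Vstar _ _ _))
  rw [← al.act_eq k h] at hVpol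
  rw [al.V_st_eq_Q hh hk', hVpol, refGap, policyNoise, M.Qstar_bellman hh, M.expect_sub]
  linarith

variable {al}

lemma Optimistic.stepRegret_le (hopt : al.Optimistic) (hK : 1 ≤ K) (hδ₀ : 0 < δ) (hδ₁ : δ < 1)
    (hcb : 1000 ≤ cb) (hh : h ∈ Icc 1 M.H) :
    al.stepRegret h ≤ (1 + 1 / (M.H : ℝ)) * al.stepRegret (h + 1)
      + (((M.H : ℝ) * Fintype.card S * Fintype.card A
          + 8 * cb * (M.H : ℝ) ^ 2 * ((Fintype.card S : ℝ) * Fintype.card A) ^ ((3 : ℝ) / 4)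
            * (K : ℝ) ^ ((1 : ℝ) / 4) * iota S A K M.H δ
          + ∑ k ∈ Icc 1 K, al.policyNoise h k)
        + ∑ k ∈ Icc 1 K, al.BR k h (al.st k h) (al.ac k h)
        + ∑ k ∈ Icc 1 K, al.visitWeight h k * al.refError h k) := by
  have hgap := hopt.sum_refGap_le hK hδ₀ hδ₁ hcb hh
  have hnext : (1 + 1 / (M.H : ℝ)) * al.stepRegret (h + 1) =
      ∑ k ∈ Icc 1 K, (1 + 1 / (M.H : ℝ)) * al.valueGap (h + 1) k
      + ∑ k ∈ Icc 1 K, (1 + 1 / (M.H : ℝ)) * (M.Vstar (h + 1) (al.st k (h + 1))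
          - M.Vpol (al.pol k) (h + 1) (al.st k (h + 1))) := by
    rw [stepRegret, mul_sum, ← sum_add_distrib]
    exact sum_congr rfl fun k _ => by rw [valueGap]; ring
  rw [sum_add_distrib] at hgap
  refine (sum_le_sum fun k hk => al.V_sub_Vpol_le hh hk).trans ?_
  rw [hnext, sum_add_distrib, sum_add_distrib, sum_add_distrib]
  linarith

variable (al)

lemma regR3_eq : regR3 M K cb δ al = ∑ h ∈ Icc 1 M.H, (1 + 1 / (M.H : ℝ)) ^ (h - 1) *
    ∑ k ∈ Icc 1 K, al.visitWeight h k * al.refError h k := by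
  refine sum_congr rfl fun h hh => ?_
  rw [mul_sum]
  refine sum_congr rfl fun k hk => ?_
  rw [← al.refError_eq hh hk, ← mul_assoc]
  rfl

variable {al}

lemma Optimistic.sum_V_sub_Vpol_le (hopt : al.Optimistic) (hK : 1 ≤ K) (hδ₀ : 0 < δ)
    (hδ₁ : δ < 1) (hcb : 1000 ≤ cb) :
    ∑ k ∈ Icc 1 K, (al.V k 1 (al.st k 1) - M.Vpol (al.pol k) 1 (al.st k 1)) ≤
      regR1 M K cb δ al + regR2 M K cb δ al + regR3 M K cb δ al := by
  have htelescope := le_pow_mul_add_sum_of_le_mul_succ_add M.H (D := al.stepRegret)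
    (by positivity : 0 ≤ 1 + 1 / (M.H : ℝ)) fun h hh => hopt.stepRegret_le hK hδ₀ hδ₁ hcb hh
  rw [al.stepRegret_terminal, mul_zero, zero_add] at htelescope
  refine htelescope.trans_eq ?_
  rw [regR1, regR2, al.regR3_eq, ← sum_add_distrib, ← sum_add_distrib]
  refine sum_congr rfl fun h _ => ?_
  rw [mul_add, mul_add]
  rfl

end Regret

end QLAlg

namespace QLAlg

variable {S A : Type} [Fintype S] [Fintype A] [Nonempty S] [Nonempty A]
  [DecidableEq S] [DecidableEq A] {M : MDP S A} {K : ℕ} {cb δ : ℝ} {al al' : QLAlg M K cb δ}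
  {h k : ℕ}

/-- The states and actions of the episodes before `k`. -/
def history (al : QLAlg M K cb δ) (k : ℕ) :
    (Ico 1 k → Icc 1 (M.H + 1) → S) × (Ico 1 k → Icc 1 M.H → A) :=
  (fun j h => al.st j h, fun j h => al.ac j h)

section Determinism

lemma st_eq_of_history_eq (hhist : al.history k = al'.history k) {j : ℕ} (hj : j ∈ Ico 1 k)
    (hh : h ∈ Icc 1 (M.H + 1)) : al.st j h = al'.st j h :=
  congrFun₂ (congrArg Prod.fst hhist) ⟨j, hj⟩ ⟨h, hh⟩

lemma ac_eq_of_history_eq (hhist : al.history k = al'.history k) {j : ℕ} (hj : j ∈ Ico 1 k)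
    (hh : h ∈ Icc 1 M.H) : al.ac j h = al'.ac j h :=
  congrFun₂ (congrArg Prod.snd hhist) ⟨j, hj⟩ ⟨h, hh⟩

lemma history_eq_of_le (hhist : al.history k = al'.history k) {j : ℕ} (hjk : j ≤ k) :
    al.history j = al'.history j :=
  Prod.ext
    (funext₂ fun i h => al.st_eq_of_history_eq hhist (Ico_subset_Ico_right hjk i.2) h.2)
    (funext₂ fun i h => al.ac_eq_of_history_eq hhist (Ico_subset_Ico_right hjk i.2) h.2)

/-- The two runs hold the same value estimates for step `h` at the beginning of episode `k`. -/
structure SameValues (al al' : QLAlg M K cb δ) (k h : ℕ) : Prop where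
  V : al.V k h = al'.V k h
  VR : al.VR k h = al'.VR k h
  VLCB : al.VLCB k h = al'.VLCB k h

/-- The two runs hold the same visit counts and bonus statistics for step `h` at the beginning of
episode `k`. -/
structure SameStatistics (al al' : QLAlg M K cb δ) (k h : ℕ) : Prop where
  N : al.N (k - 1) h = al'.N (k - 1) h
  muRef : al.muRef k h = al'.muRef k h
  sigRef : al.sigRef k h = al'.sigRef k h
  muAdv : al.muAdv k h = al'.muAdv k h
  sigAdv : al.sigAdv k h = al'.sigAdv k h
  BR : al.BR k h = al'.BR k h
  dR : al.dR k h = al'.dR k h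

/-- The two runs hold the same estimates of the Q-function for step `h` at the beginning of
episode `k`. -/
structure SameQ (al al' : QLAlg M K cb δ) (k h : ℕ) : Prop where
  QUCB : al.QUCB k h = al'.QUCB k h
  QLCB : al.QLCB k h = al'.QLCB k h
  QR : al.QR k h = al'.QR k h
  Q : al.Q k h = al'.Q k h

/-- The two runs are in the same internal state for step `h` at the beginning of episode `k`. -/
structure SameMemory (al al' : QLAlg M K cb δ) (k h : ℕ) : Prop where
  values : SameValues al al' k h
  statistics : SameStatistics al al' k h
  actionValues : SameQ al al' k h
  uref : al.uref k h = al'.uref k h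

/-- The two runs make the same transition at step `h` of episode `k`. -/
structure SameTransition (al al' : QLAlg M K cb δ) (k h : ℕ) : Prop where
  st : al.st k h = al'.st k h
  ac : al.ac k h = al'.ac k h
  next : al.st k (h + 1) = al'.st k (h + 1)

lemma sameTransition_of_history_eq (hhist : al.history k = al'.history k) {j : ℕ}
    (hj : j ∈ Ico 1 k) (hh : h ∈ Icc 1 M.H) : SameTransition al al' j h := by
  have := mem_Icc.1 hh
  exact ⟨st_eq_of_history_eq hhist hj (mem_Icc.2 ⟨by omega, by omega⟩),
    ac_eq_of_history_eq hhist hj hh,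
    st_eq_of_history_eq hhist hj (mem_Icc.2 ⟨by omega, by omega⟩)⟩

lemma sameValues_terminal (al al' : QLAlg M K cb δ) (k : ℕ) :
    SameValues al al' k (M.H + 1) where
  V := funext fun s => (al.V_terminal k s).1.trans (al'.V_terminal k s).1.symm
  VR := funext fun s => (al.V_terminal k s).2.1.trans (al'.V_terminal k s).2.1.symm
  VLCB := funext fun s => (al.V_terminal k s).2.2.trans (al'.V_terminal k s).2.2.symm

lemma sameMemory_one (al al' : QLAlg M K cb δ) (hh : h ∈ Icc 1 M.H) :
    SameMemory al al' 1 h where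
  values :=
    { V := funext fun s => by rw [al.V_init h hh, al'.V_init h hh]
      VR := funext fun s => by rw [al.VR_init h hh, al'.VR_init h hh]
      VLCB := funext fun s => by rw [al.VLCB_init h hh, al'.VLCB_init h hh] }
  statistics := by
    constructor <;> ext s a <;> simp only [Nat.sub_self, N_init, mom_init]
  actionValues :=
    { QUCB := funext₂ fun s a => by rw [al.QUCB_init h hh, al'.QUCB_init h hh]
      QLCB := funext₂ fun s a => by rw [al.QLCB_init h hh, al'.QLCB_init h hh]
      QR := funext₂ fun s a => by rw [al.QR_init h hh, al'.QR_init h hh]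
      Q := funext₂ fun s a => by rw [al.Q_init h hh, al'.Q_init h hh] }
  uref := funext fun s => propext (iff_of_true (al.uref_init h s) (al'.uref_init h s))

open Classical in
lemma VR_succ (al : QLAlg M K cb δ) (hk : k ∈ Icc 1 K) (hh : h ∈ Icc 1 M.H) (s : S) :
    al.VR (k + 1) h s =
      if s = al.st k h ∧ (1 < al.V (k + 1) h s - al.VLCB (k + 1) h s ∨ al.uref k h s)
      then al.V (k + 1) h s else al.VR k h s := by
  by_cases hs : s = al.st k h
  · subst hs
    simp only [true_and]
    split_ifs with hupdate
    · exact al.VR_upd_pos k hk h hh hupdate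
    · exact al.VR_upd_neg k hk h hh hupdate
  · rw [al.VR_upd_other k hk h hh s hs, if_neg fun hupdate => hs hupdate.1]

lemma uref_succ_iff (al : QLAlg M K cb δ) (hk : k ∈ Icc 1 K) (hh : h ∈ Icc 1 M.H) (s : S) :
    al.uref (k + 1) h s ↔
      if s = al.st k h then 1 < al.V (k + 1) h s - al.VLCB (k + 1) h s else al.uref k h s := by
  split_ifs with hs
  · subst hs
    exact ⟨not_imp_not.1 (al.uref_upd_neg k hk h hh), al.uref_upd_pos k hk h hh⟩
  · exact al.uref_upd_other k hk h hh s hs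

lemma N_eq_of_visit (hk : k ∈ Icc 1 K) (hh : h ∈ Icc 1 M.H)
    (hN : al.N (k - 1) h = al'.N (k - 1) h) (hst : al.st k h = al'.st k h)
    (hac : al.ac k h = al'.ac k h) : al.N k h = al'.N k h := by
  ext s a
  simp only [al.N_upd k hk h hh, al'.N_upd k hk h hh, hN, hst, hac]

lemma SameStatistics.succ (hk : k ∈ Icc 1 K) (hh : h ∈ Icc 1 M.H)
    (hstat : SameStatistics al al' k h) (hnext : SameValues al al' k (h + 1))
    (htrans : SameTransition al al' k h) : SameStatistics al al' (k + 1) h := by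
  have hN := N_eq_of_visit hk hh hstat.N htrans.st htrans.ac
  have hmuRef : al.muRef (k + 1) h = al'.muRef (k + 1) h := by
    ext s a
    simp only [al.muRef_upd k hk h hh, al'.muRef_upd k hk h hh, hN, htrans.st, htrans.ac,
      htrans.next, hstat.muRef, hnext.VR]
  have hsigRef : al.sigRef (k + 1) h = al'.sigRef (k + 1) h := by
    ext s a
    simp only [al.sigRef_upd k hk h hh, al'.sigRef_upd k hk h hh, hN, htrans.st, htrans.ac,
      htrans.next, hstat.sigRef, hnext.VR]
  have hmuAdv : al.muAdv (k + 1) h = al'.muAdv (k + 1) h := by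
    ext s a
    simp only [al.muAdv_upd k hk h hh, al'.muAdv_upd k hk h hh, hN, htrans.st, htrans.ac,
      htrans.next, hstat.muAdv, hnext.V, hnext.VR]
  have hsigAdv : al.sigAdv (k + 1) h = al'.sigAdv (k + 1) h := by
    ext s a
    simp only [al.sigAdv_upd k hk h hh, al'.sigAdv_upd k hk h hh, hN, htrans.st, htrans.ac,
      htrans.next, hstat.sigAdv, hnext.V, hnext.VR]
  have hBR : al.BR (k + 1) h = al'.BR (k + 1) h := by
    ext s a
    simp only [al.BR_upd k hk h hh, al'.BR_upd k hk h hh, hN, htrans.st, htrans.ac, hstat.BR,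
      hmuRef, hsigRef, hmuAdv, hsigAdv]
  refine ⟨hN, hmuRef, hsigRef, hmuAdv, hsigAdv, hBR, ?_⟩
  ext s a
  simp only [al.dR_upd k hk h hh, al'.dR_upd k hk h hh, htrans.st, htrans.ac, hstat.BR, hstat.dR,
    hBR]

lemma SameQ.succ (hk : k ∈ Icc 1 K) (hh : h ∈ Icc 1 M.H) (hQ : SameQ al al' k h)
    (hstat : SameStatistics al al' (k + 1) h) (hnext : SameValues al al' k (h + 1))
    (htrans : SameTransition al al' k h) : SameQ al al' (k + 1) h := by
  have hN : al.N k h = al'.N k h := hstat.N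
  have hQUCB : al.QUCB (k + 1) h = al'.QUCB (k + 1) h := by
    ext s a
    simp only [al.QUCB_upd k hk h hh, al'.QUCB_upd k hk h hh, hN, htrans.st, htrans.ac,
      htrans.next, hQ.QUCB, hnext.V]
  have hQLCB : al.QLCB (k + 1) h = al'.QLCB (k + 1) h := by
    ext s a
    simp only [al.QLCB_upd k hk h hh, al'.QLCB_upd k hk h hh, hN, htrans.st, htrans.ac,
      htrans.next, hQ.QLCB, hnext.VLCB]
  have hbonus : al.bR k h = al'.bR k h := by
    simp only [al.bR_def k hk h hh, al'.bR_def k hk h hh, hN, htrans.st, htrans.ac, hstat.BR,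
      hstat.dR]
  have hQR : al.QR (k + 1) h = al'.QR (k + 1) h := by
    ext s a
    simp only [al.QR_upd k hk h hh, al'.QR_upd k hk h hh, hN, htrans.st, htrans.ac, htrans.next,
      hQ.QR, hnext.V, hnext.VR, hstat.muRef, hbonus]
  refine ⟨hQUCB, hQLCB, hQR, ?_⟩
  ext s a
  simp only [al.Q_upd k hk h hh, al'.Q_upd k hk h hh, htrans.st, htrans.ac, hQ.Q, hQR, hQUCB]

open Classical in
lemma SameMemory.succ (hk : k ∈ Icc 1 K) (hh : h ∈ Icc 1 M.H) (hmem : SameMemory al al' k h)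
    (hnext : SameValues al al' k (h + 1)) (htrans : SameTransition al al' k h) :
    SameMemory al al' (k + 1) h := by
  have hstat := hmem.statistics.succ hk hh hnext htrans
  have hQ := hmem.actionValues.succ hk hh hstat hnext htrans
  have hV : al.V (k + 1) h = al'.V (k + 1) h := by
    ext s
    simp only [al.V_upd k hk h hh, al'.V_upd k hk h hh, htrans.st, hmem.values.V, hQ.Q]
  have hVLCB : al.VLCB (k + 1) h = al'.VLCB (k + 1) h := by
    ext s
    simp only [al.VLCB_upd k hk h hh, al'.VLCB_upd k hk h hh, htrans.st, hmem.values.VLCB, hQ.QLCB]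
  have hVR : al.VR (k + 1) h = al'.VR (k + 1) h := by
    ext s
    rw [al.VR_succ hk hh, al'.VR_succ hk hh]
    exact if_congr (by rw [htrans.st, hmem.uref, hV, hVLCB]) (by rw [hV]) (by rw [hmem.values.VR])
  refine ⟨⟨hV, hVR, hVLCB⟩, hstat, hQ, ?_⟩
  ext s
  rw [al.uref_succ_iff hk hh, al'.uref_succ_iff hk hh, htrans.st, hmem.uref, hV, hVLCB]

lemma sameMemory_of_history_eq (hk : k ∈ Icc 1 (K + 1))
    (hhist : al.history k = al'.history k) : ∀ h ∈ Icc 1 M.H, SameMemory al al' k h := by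
  obtain ⟨hk₁, hkK⟩ := mem_Icc.1 hk
  clear hk
  induction k, hk₁ using Nat.le_induction with
  | base => exact fun h hh => sameMemory_one al al' hh
  | succ k hk₁ ih =>
    intro h hh
    have hmem := ih (history_eq_of_le hhist k.le_succ) (by omega)
    have hnext : SameValues al al' k (h + 1) := by
      rcases (mem_Icc.1 hh).2.eq_or_lt with rfl | hlt
      · exact sameValues_terminal al al' k
      · exact (hmem (h + 1) (mem_Icc.2 ⟨by omega, hlt⟩)).values
    exact (hmem h hh).succ (mem_Icc.2 ⟨hk₁, by omega⟩) hh hnext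
      (sameTransition_of_history_eq hhist (mem_Ico.2 ⟨hk₁, k.lt_succ_self⟩) hh)

lemma sameValues_of_history_eq (hk : k ∈ Icc 1 (K + 1)) (hhist : al.history k = al'.history k)
    (hh : h ∈ Icc 1 (M.H + 1)) : SameValues al al' k h := by
  rcases (mem_Icc.1 hh).2.eq_or_lt with rfl | hlt
  · exact sameValues_terminal al al' k
  · exact (sameMemory_of_history_eq hk hhist h
      (mem_Icc.2 ⟨(mem_Icc.1 hh).1, Nat.lt_succ_iff.1 hlt⟩)).values

lemma testFn_eq_of_history_eq (hk : k ∈ Icc 1 (K + 1)) (hhist : al.history k = al'.history k)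
    (hh : h ∈ Icc 1 M.H) (s : S) (a : A) (i : TestFn) :
    al.testFn h s a i k = al'.testFn h s a i k := by
  have := mem_Icc.1 hh
  have hvalues := sameValues_of_history_eq hk hhist (mem_Icc.2 ⟨h.succ_pos, by omega⟩ :
    h + 1 ∈ Icc 1 (M.H + 1))
  have hRef : al.clippedRef h k = al'.clippedRef h k := by
    ext x
    rw [clippedRef, clippedRef, hvalues.VR]
  have hAdv : al.clippedAdv h k = al'.clippedAdv h k := by
    ext x
    rw [clippedAdv, clippedAdv, hvalues.V, hvalues.VR]
  ext x
  cases i <;> simp only [testFn, hRef, hAdv]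

end Determinism

section VisitFunction

variable {s : S} {a : A} {n m : ℕ} {i : TestFn} {sg : ℤˣ} {t : Averaging}

/-- The function of the next state whose deviation from its conditional expectation is
`scaledDeviation`; it is determined before the transition of episode `k` at step `h`. -/
noncomputable def scaledTestFn (al : QLAlg M K cb δ) (h : ℕ) (s : S) (a : A) (n m : ℕ)
    (i : TestFn) (sg : ℤˣ) (t : Averaging) (k : ℕ) (x : S) : ℝ :=
  if al.Visits k h s a then
    1 / (2 * (2 * M.H) * t.maxWeight M.H n * √m) * t.weight M.H n (al.N k h s a)
      * (sg * al.testFn h s a i k x)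
  else 0

lemma scaledDeviation_eq_sub_expect (al : QLAlg M K cb δ) :
    al.scaledDeviation h s a n m i sg t k =
      al.scaledTestFn h s a n m i sg t k (al.st k (h + 1))
        - M.expect h (al.st k h) (al.ac k h) (al.scaledTestFn h s a n m i sg t k) := by
  unfold scaledDeviation scaledTestFn
  split_ifs with hvisit
  · obtain ⟨rfl, rfl⟩ := hvisit
    rw [M.expect_mul, M.expect_mul, deviation, mul_sub, mul_sub]
  · rw [M.expect_const, sub_self]

lemma scaledTestFn_eq_of_history_eq (hk : k ∈ Icc 1 K) (hhist : al.history k = al'.history k)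
    (hh : h ∈ Icc 1 M.H) (hst : al.st k h = al'.st k h) (hac : al.ac k h = al'.ac k h) (s : S)
    (a : A) (n m : ℕ) (i : TestFn) (sg : ℤˣ) (t : Averaging) :
    al.scaledTestFn h s a n m i sg t k = al'.scaledTestFn h s a n m i sg t k := by
  have hk' : k ∈ Icc 1 (K + 1) := Icc_subset_Icc_right K.le_succ hk
  have hN := N_eq_of_visit hk hh (sameMemory_of_history_eq hk' hhist h hh).statistics.N hst hac
  ext x
  simp only [scaledTestFn, Visits, hst, hac, hN, testFn_eq_of_history_eq hk' hhist hh]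

lemma scaledDeviation_eq_of_history_eq (hk : k ∈ Icc 1 K)
    (hhist : al.history (k + 1) = al'.history (k + 1)) (hh : h ∈ Icc 1 M.H) (s : S) (a : A)
    (n m : ℕ) (i : TestFn) (sg : ℤˣ) (t : Averaging) :
    al.scaledDeviation h s a n m i sg t k = al'.scaledDeviation h s a n m i sg t k := by
  have htrans := sameTransition_of_history_eq hhist
    (mem_Ico.2 ⟨(mem_Icc.1 hk).1, k.lt_succ_self⟩) hh
  rw [scaledDeviation_eq_sub_expect, scaledDeviation_eq_sub_expect, htrans.next, htrans.st,
    htrans.ac, scaledTestFn_eq_of_history_eq hk (history_eq_of_le hhist k.le_succ) hh htrans.st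
      htrans.ac]

lemma abs_scaledDeviation_le (al : QLAlg M K cb δ) (hh : h ∈ Icc 1 M.H) (hn : 1 ≤ n) (hm : 1 ≤ m)
    (hk : k ∈ Icc 1 K) : |al.scaledDeviation h s a n m i sg t k| ≤ 1 / 2 := by
  unfold scaledDeviation
  split_ifs with hvisit
  · have hH : (0 : ℝ) < M.H := by exact_mod_cast M.H_pos
    have hω := t.maxWeight_pos M.H_pos hn
    have hsqrt : 1 ≤ √(m : ℝ) := Real.one_le_sqrt.2 (by exact_mod_cast hm)
    have hdev : |(sg : ℝ) * al.deviation h s a (al.testFn h s a i) k| ≤ 2 * M.H := by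
      rw [abs_mul, ← Int.cast_abs, Int.isUnit_iff_abs_eq.1 sg.isUnit, Int.cast_one, one_mul]
      exact al.abs_deviation_le (al.abs_testFn_le hh (Icc_subset_Icc_right K.le_succ hk) s a i)
    rw [abs_mul, abs_mul, abs_of_nonneg (t.weight_nonneg _ _ _), abs_of_nonneg (by positivity),
      mul_assoc, one_div_mul_eq_div, div_le_iff₀ (by positivity)]
    calc t.weight M.H n (al.N k h s a) * |(sg : ℝ) * al.deviation h s a (al.testFn h s a i) k|
        ≤ t.maxWeight M.H n * (2 * M.H) :=
          mul_le_mul (t.weight_le_maxWeight M.H_pos (al.one_le_N hh hk hvisit)) hdev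
            (abs_nonneg _) hω.le
      _ ≤ t.maxWeight M.H n * (2 * M.H) * √(m : ℝ) := le_mul_of_one_le_right (by positivity) hsqrt
      _ = 1 / 2 * (2 * (2 * M.H) * t.maxWeight M.H n * √(m : ℝ)) := by ring
  · norm_num

end VisitFunction

end QLAlg

section FiniteRange

variable {Ω β E : Type*} [Finite β] [MeasurableSpace β] [MeasurableSingletonClass β]
  [Nonempty E] {X : Ω → β} {F : Ω → E}

lemma measurable_of_factorsThrough {_ : MeasurableSpace Ω} [MeasurableSpace E] (hX : Measurable X)
    (hF : F.FactorsThrough X) : Measurable F := by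
  rw [← hF.extend_comp fun _ => Classical.arbitrary E]
  exact (measurable_of_finite _).comp hX

end FiniteRange

lemma integrable_of_factorsThrough {Ω β : Type*} [Finite β] [MeasurableSpace β]
    [MeasurableSingletonClass β] [MeasurableSpace Ω] {μ : Measure Ω} [IsFiniteMeasure μ]
    {X : Ω → β} {F : Ω → ℝ} (hX : Measurable X) (hF : F.FactorsThrough X) : Integrable F μ := by
  rw [← hF.extend_comp fun _ => 0]
  exact Integrable.of_finite.comp_measurable hX

section ConditionalLaw

variable {Ω S : Type*} [MeasurableSpace S] [MeasurableSingletonClass S]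
  {m m0 : MeasurableSpace Ω} {μ : Measure Ω} {X : Ω → S} {p : S → Ω → ℝ} {G : Ω → S → ℝ}

lemma integrable_ite_eq [DecidableEq S] (hX : Measurable X) {f : Ω → ℝ} (hf : Integrable f μ)
    (x : S) : Integrable (fun ω => if X ω = x then f ω else 0) μ := by
  have hind : (fun ω => if X ω = x then f ω else 0) = (X ⁻¹' {x}).indicator f := by
    ext ω
    simp only [Set.indicator, Set.mem_preimage, Set.mem_singleton_iff]
  rw [hind]
  exact hf.indicator (hX (measurableSet_singleton x))

lemma integrable_apply [Finite S] (hX : Measurable X) (hG : ∀ x, Integrable (G · x) μ) :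
    Integrable (fun ω => G ω (X ω)) μ := by
  classical
  cases nonempty_fintype S
  have hsplit : (fun ω => G ω (X ω)) = fun ω => ∑ x, if X ω = x then G ω x else 0 :=
    funext fun ω => by rw [sum_ite_eq, if_pos (mem_univ _)]
  rw [hsplit]
  exact integrable_finsetSum _ fun x _ => integrable_ite_eq hX (hG x) x

variable [Fintype S] [DecidableEq S] [IsFiniteMeasure μ]

lemma condExp_apply_eq_sum (hX : Measurable X)
    (hp : ∀ x, μ[(fun ω => if X ω = x then (1 : ℝ) else 0) | m] =ᵐ[μ] p x)
    (hGm : ∀ x, StronglyMeasurable[m] (G · x)) (hG : ∀ x, Integrable (G · x) μ) :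
    μ[(fun ω => G ω (X ω)) | m] =ᵐ[μ] fun ω => ∑ x, p x ω * G ω x := by
  have hsplit : (fun ω => G ω (X ω)) = ∑ x, fun ω => if X ω = x then G ω x else 0 := by
    ext ω
    rw [Finset.sum_apply, sum_ite_eq, if_pos (mem_univ _)]
  have hterm : ∀ x, μ[(fun ω => if X ω = x then G ω x else 0) | m]
      =ᵐ[μ] fun ω => p x ω * G ω x := fun x => by
    have hmul : (fun ω => if X ω = x then G ω x else 0) =
        (G · x) * fun ω => if X ω = x then (1 : ℝ) else 0 := by
      ext ω
      rw [Pi.mul_apply, mul_ite, mul_one, mul_zero]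
    have hintegrable := integrable_ite_eq hX (hG x) x
    rw [hmul] at hintegrable ⊢
    filter_upwards [condExp_mul_of_stronglyMeasurable_left (hGm x) hintegrable
      (integrable_ite_eq hX (integrable_const 1) x), hp x] with ω hpull hω
    rw [hpull, Pi.mul_apply, hω, mul_comm]
  rw [hsplit]
  filter_upwards [condExp_finsetSum (s := univ) (fun x _ => integrable_ite_eq hX (hG x) x) m,
    ae_all_iff.2 hterm] with ω hsum hω
  simp only [hsum, Finset.sum_apply, hω]

lemma condExp_apply_sub_sum_eq_zero (hm : m ≤ m0) (hX : Measurable X)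
    (hp : ∀ x, μ[(fun ω => if X ω = x then (1 : ℝ) else 0) | m] =ᵐ[μ] p x)
    (hGm : ∀ x, StronglyMeasurable[m] (G · x)) (hG : ∀ x, Integrable (G · x) μ) :
    μ[(fun ω => G ω (X ω) - ∑ x, p x ω * G ω x) | m] =ᵐ[μ] 0 :=
  calc μ[(fun ω => G ω (X ω) - ∑ x, p x ω * G ω x) | m]
      =ᵐ[μ] μ[(fun ω => G ω (X ω)) - μ[(fun ω => G ω (X ω)) | m] | m] :=
        condExp_congr_ae (.sub .rfl (condExp_apply_eq_sum hX hp hGm hG).symm)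
    _ =ᵐ[μ] μ[(fun ω => G ω (X ω)) | m] - μ[μ[(fun ω => G ω (X ω)) | m] | m] :=
        condExp_sub (integrable_apply hX hG) integrable_condExp m
    _ = 0 := by
        rw [condExp_of_stronglyMeasurable hm stronglyMeasurable_condExp integrable_condExp,
          sub_self]

end ConditionalLaw

lemma exp_sub_sq_le {x : ℝ} (hx : |x| ≤ 1 / 2) : Real.exp (x - x ^ 2) ≤ 1 + x := by
  obtain ⟨hlo, _⟩ := abs_le.1 hx
  rcases le_or_gt 0 x with hx₀ | hx₀
  · have hquad : Real.exp x ≤ 1 + x + x ^ 2 := by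
      have := (abs_le.1 (Real.abs_exp_sub_one_sub_id_le (hx.trans (by norm_num)))).2
      linarith
    rw [Real.exp_sub, div_le_iff₀ (Real.exp_pos _)]
    calc Real.exp x ≤ (1 + x) * (x ^ 2 + 1) := by nlinarith [pow_nonneg hx₀ 3]
      _ ≤ (1 + x) * Real.exp (x ^ 2) :=
        mul_le_mul_of_nonneg_left (Real.add_one_le_exp _) (by linarith)
  · have hquad := Real.quadratic_le_exp_of_nonneg (by nlinarith : 0 ≤ x ^ 2 - x)
    rw [← neg_sub, Real.exp_neg, inv_le_comm₀ (Real.exp_pos _) (by linarith)]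
    refine le_trans ?_ hquad
    rw [inv_le_iff_one_le_mul₀' (by linarith)]
    nlinarith [sq_nonneg x, mul_nonneg (sq_nonneg x) (by linarith : 0 ≤ 1 + 2 * x),
      sq_nonneg (x^2)]

section Supermartingale

variable {Ω : Type*} {m0 : MeasurableSpace Ω} {μ : Measure Ω} [IsProbabilityMeasure μ]
  {𝓖 : Filtration ℕ m0} {Y : ℕ → Ω → ℝ} {n : ℕ}

lemma stronglyMeasurable_exp_sum_sub_sq
    (hY : ∀ k ∈ Icc 1 n, StronglyMeasurable[𝓖 k] (Y k)) :
    StronglyMeasurable[𝓖 n] fun ω => Real.exp (∑ k ∈ Icc 1 n, (Y k ω - Y k ω ^ 2)) :=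
  Real.continuous_exp.comp_stronglyMeasurable <| Finset.stronglyMeasurable_fun_sum _ fun k hk =>
    have hYk := (hY k hk).mono (𝓖.mono (mem_Icc.1 hk).2)
    hYk.sub (hYk.pow 2)

lemma integral_mul_eq_zero_of_condExp_eq_zero {m : MeasurableSpace Ω} (hm : m ≤ m0) {f g : Ω → ℝ}
    (hf : StronglyMeasurable[m] f) (hg : Integrable g μ) (hfg : Integrable (f * g) μ)
    (hcond : μ[g | m] =ᵐ[μ] 0) : ∫ ω, f ω * g ω ∂μ = 0 :=
  calc ∫ ω, f ω * g ω ∂μ = ∫ ω, (μ[f * g | m]) ω ∂μ := (integral_condExp hm).symm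
    _ = ∫ _, (0 : ℝ) ∂μ := integral_congr_ae <| by
        filter_upwards [condExp_mul_of_stronglyMeasurable_left hf hfg hg, hcond] with ω hpull hω
        rw [hpull, Pi.mul_apply, hω, Pi.zero_apply, mul_zero]
    _ = 0 := integral_zero _ _

lemma exp_sum_sub_sq_le {x : ℕ → ℝ} (hx : ∀ k ∈ Icc 1 n, |x k| ≤ 1 / 2) :
    Real.exp (∑ k ∈ Icc 1 n, (x k - x k ^ 2)) ≤ (3 / 2) ^ n := by
  rw [Real.exp_sum]
  calc ∏ k ∈ Icc 1 n, Real.exp (x k - x k ^ 2) ≤ ∏ _k ∈ Icc 1 n, (3 / 2 : ℝ) :=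
        prod_le_prod (fun k _ => (Real.exp_pos _).le) fun k hk =>
          (exp_sub_sq_le (hx k hk)).trans (by linarith [(abs_le.1 (hx k hk)).2])
    _ = (3 / 2) ^ n := by rw [prod_const, Nat.card_Icc, Nat.add_sub_cancel]

lemma integrable_exp_sum_sub_sq (hY : ∀ k ∈ Icc 1 n, StronglyMeasurable[𝓖 k] (Y k))
    (hbound : ∀ k ∈ Icc 1 n, ∀ ω, |Y k ω| ≤ 1 / 2) :
    Integrable (fun ω => Real.exp (∑ k ∈ Icc 1 n, (Y k ω - Y k ω ^ 2))) μ :=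
  .of_bound ((stronglyMeasurable_exp_sum_sub_sq hY).mono (𝓖.le n)).aestronglyMeasurable _
    (.of_forall fun ω => by
      rw [Real.norm_of_nonneg (Real.exp_pos _).le]
      exact exp_sum_sub_sq_le fun k hk => hbound k hk ω)

lemma integral_exp_sum_sub_sq_le_one (hY : ∀ k ∈ Icc 1 n, StronglyMeasurable[𝓖 k] (Y k))
    (hbound : ∀ k ∈ Icc 1 n, ∀ ω, |Y k ω| ≤ 1 / 2)
    (hcond : ∀ k ∈ Icc 1 n, μ[Y k | 𝓖 (k - 1)] =ᵐ[μ] 0) :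
    ∫ ω, Real.exp (∑ k ∈ Icc 1 n, (Y k ω - Y k ω ^ 2)) ∂μ ≤ 1 := by
  induction n with
  | zero => simp only [zero_lt_one, Icc_eq_empty_of_lt, sum_empty, Real.exp_zero, integral_const,
      probReal_univ, smul_eq_mul, mul_one, le_refl]
  | succ n ih =>
    have hsub : Icc 1 n ⊆ Icc 1 (n + 1) := Icc_subset_Icc_right n.le_succ
    have hlast : n + 1 ∈ Icc 1 (n + 1) := right_mem_Icc.2 n.succ_pos
    set E : Ω → ℝ := fun ω => Real.exp (∑ k ∈ Icc 1 n, (Y k ω - Y k ω ^ 2))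
    have hEint : Integrable E μ := integrable_exp_sum_sub_sq (fun k hk => hY k (hsub hk))
      fun k hk => hbound k (hsub hk)
    have hYm := ((hY _ hlast).mono (𝓖.le _)).aestronglyMeasurable (μ := μ)
    have hEY : Integrable (fun ω => E ω * Y (n + 1) ω) μ :=
      hEint.mul_bdd hYm (.of_forall (hbound _ hlast))
    have hzero : ∫ ω, E ω * Y (n + 1) ω ∂μ = 0 :=
      integral_mul_eq_zero_of_condExp_eq_zero (𝓖.le n)
        (stronglyMeasurable_exp_sum_sub_sq fun k hk => hY k (hsub hk))
        (.of_bound hYm _ (.of_forall (hbound _ hlast))) hEY (hcond _ hlast)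
    calc ∫ ω, Real.exp (∑ k ∈ Icc 1 (n + 1), (Y k ω - Y k ω ^ 2)) ∂μ
        ≤ ∫ ω, (E ω + E ω * Y (n + 1) ω) ∂μ :=
          integral_mono (integrable_exp_sum_sub_sq hY hbound) (hEint.add hEY) fun ω => by
            simp only [sum_Icc_succ_top n.succ_pos, Real.exp_add, ← mul_one_add]
            exact mul_le_mul_of_nonneg_left (exp_sub_sq_le (hbound _ hlast ω)) (Real.exp_pos _).le
      _ = ∫ ω, E ω ∂μ := by rw [integral_add hEint hEY, hzero, add_zero]
      _ ≤ 1 := ih (fun k hk => hY k (hsub hk)) (fun k hk => hbound k (hsub hk))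
          fun k hk => hcond k (hsub hk)

lemma measureReal_sum_sq_add_lt_sum_le (hY : ∀ k ∈ Icc 1 n, StronglyMeasurable[𝓖 k] (Y k))
    (hbound : ∀ k ∈ Icc 1 n, ∀ ω, |Y k ω| ≤ 1 / 2)
    (hcond : ∀ k ∈ Icc 1 n, μ[Y k | 𝓖 (k - 1)] =ᵐ[μ] 0) (x : ℝ) :
    μ.real {ω | ∑ k ∈ Icc 1 n, Y k ω ^ 2 + x < ∑ k ∈ Icc 1 n, Y k ω} ≤ Real.exp (-x) := by
  have hmarkov := mul_meas_ge_le_integral_of_nonneg (.of_forall fun ω => (Real.exp_pos _).le)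
    (integrable_exp_sum_sub_sq (μ := μ) hY hbound) (Real.exp x)
  have hsubset : {ω | ∑ k ∈ Icc 1 n, Y k ω ^ 2 + x < ∑ k ∈ Icc 1 n, Y k ω} ⊆
      {ω | Real.exp x ≤ Real.exp (∑ k ∈ Icc 1 n, (Y k ω - Y k ω ^ 2))} := fun ω hω => by
    rw [Set.mem_ofPred_eq] at hω ⊢
    rw [Real.exp_le_exp, sum_sub_distrib]
    linarith
  rw [Real.exp_neg, ← one_div, le_div_iff₀' (Real.exp_pos x)]
  exact (mul_le_mul_of_nonneg_left (measureReal_mono hsubset) (Real.exp_pos x).le).trans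
    (hmarkov.trans (integral_exp_sum_sub_sq_le_one hY hbound hcond))

end Supermartingale

/-- The information available at the beginning of each episode: along a filtration indexed by the
`H` steps of each episode, the first state of episode `k + 1` is revealed at time `k * H + 1`. -/
def episodeFiltration {Ω : Type*} {m0 : MeasurableSpace Ω} (𝓕 : Filtration ℕ m0) (H : ℕ) :
    Filtration ℕ m0 where
  seq k := 𝓕 (k * H + 1)
  mono' _ _ hjk := 𝓕.mono (Nat.succ_le_succ (Nat.mul_le_mul_right H hjk))
  le' _ := 𝓕.le _

lemma QLAlg.measurable_history {S A : Type} [Fintype S] [Fintype A] [Nonempty S] [Nonempty A]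
    [DecidableEq S] [DecidableEq A] [MeasurableSpace S] [MeasurableSpace A] {M : MDP S A} {K : ℕ}
    {cb δ : ℝ} {Ω : Type*} {_ : MeasurableSpace Ω} {alg : Ω → QLAlg M K cb δ} {k : ℕ}
    (hst : ∀ j ∈ Ico 1 k, ∀ h ∈ Icc 1 (M.H + 1), Measurable fun ω => (alg ω).st j h)
    (hac : ∀ j ∈ Ico 1 k, ∀ h ∈ Icc 1 M.H, Measurable fun ω => (alg ω).ac j h) :
    Measurable fun ω => (alg ω).history k :=
  .prodMk
    (measurable_pi_lambda _ fun j => measurable_pi_lambda _ fun h => hst j j.2 h h.2)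
    (measurable_pi_lambda _ fun j => measurable_pi_lambda _ fun h => hac j j.2 h h.2)

namespace IsMDPTrajectory

variable {S A : Type} [Fintype S] [Fintype A] [Nonempty S] [Nonempty A]
  [DecidableEq S] [DecidableEq A] [MeasurableSpace S] [MeasurableSpace A] {M : MDP S A} {K : ℕ}
  {cb δ : ℝ} {Ω : Type} {m0 : MeasurableSpace Ω} {μ : Measure Ω} {𝓕 : Filtration ℕ m0}
  {alg : Ω → QLAlg M K cb δ} {h k : ℕ}

lemma measurable_history
    (hT : IsMDPTrajectory μ M K 𝓕 (fun k h ω => (alg ω).st k h) fun k h ω => (alg ω).ac k h)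
    (hk : k ≤ K) : Measurable[episodeFiltration 𝓕 M.H k] fun ω => (alg ω).history (k + 1) := by
  have htime : ∀ j ∈ Ico 1 (k + 1), ∀ h ≤ M.H + 1, (j - 1) * M.H + h ≤ k * M.H + 1 :=
    fun j hj h hh => by
      obtain ⟨j, rfl⟩ := Nat.exists_eq_add_of_le' (mem_Ico.1 hj).1
      have := Nat.mul_le_mul_right M.H (Nat.lt_succ_iff.1 (mem_Ico.1 hj).2)
      rw [Nat.add_sub_cancel]
      linarith
  have hepisode : ∀ j ∈ Ico 1 (k + 1), j ∈ Icc 1 K := fun j hj =>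
    mem_Icc.2 ⟨(mem_Ico.1 hj).1, by have := (mem_Ico.1 hj).2; omega⟩
  exact QLAlg.measurable_history
    (fun j hj h hh => (hT.1 j (hepisode j hj) h hh).mono
      (𝓕.mono (htime j hj h (mem_Icc.1 hh).2)) le_rfl)
    fun j hj h hh => (hT.2.1 j (hepisode j hj) h hh).mono
      (𝓕.mono (htime j hj h ((mem_Icc.1 hh).2.trans M.H.le_succ))) le_rfl

lemma measurable_history_st_ac
    (hT : IsMDPTrajectory μ M K 𝓕 (fun k h ω => (alg ω).st k h) fun k h ω => (alg ω).ac k h)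
    (hk : k ∈ Icc 1 K) (hh : h ∈ Icc 1 M.H) :
    Measurable[𝓕 ((k - 1) * M.H + h)]
      fun ω => ((alg ω).history k, (alg ω).st k h, (alg ω).ac k h) := by
  have hk' := mem_Icc.1 hk
  have hh' := mem_Icc.1 hh
  have hhist := hT.measurable_history (k := k - 1) (by omega)
  rw [Nat.sub_add_cancel hk'.1] at hhist
  exact (hhist.mono (𝓕.mono (by omega)) le_rfl).prodMk
    ((hT.1 k hk h (mem_Icc.2 ⟨hh'.1, by omega⟩)).prodMk (hT.2.1 k hk h hh))

variable [MeasurableSingletonClass S] [MeasurableSingletonClass A]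

lemma stronglyMeasurable_scaledDeviation
    (hT : IsMDPTrajectory μ M K 𝓕 (fun k h ω => (alg ω).st k h) fun k h ω => (alg ω).ac k h)
    (hk : k ∈ Icc 1 K) (hh : h ∈ Icc 1 M.H) (s : S) (a : A) (n m : ℕ) (i : TestFn) (sg : ℤˣ)
    (t : Averaging) :
    StronglyMeasurable[episodeFiltration 𝓕 M.H k]
      fun ω => (alg ω).scaledDeviation h s a n m i sg t k :=
  (measurable_of_factorsThrough (hT.measurable_history (mem_Icc.1 hk).2) fun _ _ hhist =>
    QLAlg.scaledDeviation_eq_of_history_eq hk hhist hh s a n m i sg t).stronglyMeasurable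

lemma condExp_scaledDeviation_eq_zero [IsFiniteMeasure μ]
    (hT : IsMDPTrajectory μ M K 𝓕 (fun k h ω => (alg ω).st k h) fun k h ω => (alg ω).ac k h)
    (hk : k ∈ Icc 1 K) (hh : h ∈ Icc 1 M.H) (s : S) (a : A) (n m : ℕ) (i : TestFn) (sg : ℤˣ)
    (t : Averaging) :
    μ[(fun ω => (alg ω).scaledDeviation h s a n m i sg t k) | episodeFiltration 𝓕 M.H (k - 1)]
      =ᵐ[μ] 0 := by
  have hh' := mem_Icc.1 hh
  have hpast := hT.measurable_history_st_ac hk hh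
  have hfactors : ∀ x, (fun ω => (alg ω).scaledTestFn h s a n m i sg t k x).FactorsThrough
      fun ω => ((alg ω).history k, (alg ω).st k h, (alg ω).ac k h) := fun x ω ω' hω => by
    simp only [Prod.mk.injEq] at hω
    exact congrFun
      (QLAlg.scaledTestFn_eq_of_history_eq hk hω.1 hh hω.2.1 hω.2.2 s a n m i sg t) x
  have hstep : μ[(fun ω => (alg ω).scaledDeviation h s a n m i sg t k)
      | 𝓕 ((k - 1) * M.H + h)] =ᵐ[μ] 0 := by
    simp_rw [QLAlg.scaledDeviation_eq_sub_expect]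
    exact condExp_apply_sub_sum_eq_zero (𝓕.le _)
      ((hT.1 k hk (h + 1) (mem_Icc.2 ⟨by omega, by omega⟩)).mono (𝓕.le _) le_rfl)
      (hT.2.2 k hk h hh)
      (fun x => (measurable_of_factorsThrough hpast (hfactors x)).stronglyMeasurable)
      fun x => integrable_of_factorsThrough (hpast.mono (𝓕.le _) le_rfl) (hfactors x)
  calc μ[(fun ω => (alg ω).scaledDeviation h s a n m i sg t k) | episodeFiltration 𝓕 M.H (k - 1)]
      =ᵐ[μ] μ[μ[(fun ω => (alg ω).scaledDeviation h s a n m i sg t k)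
          | 𝓕 ((k - 1) * M.H + h)] | episodeFiltration 𝓕 M.H (k - 1)] :=
        (condExp_condExp_of_le (𝓕.mono (by omega)) (𝓕.le _)).symm
    _ =ᵐ[μ] μ[(0 : Ω → ℝ) | episodeFiltration 𝓕 M.H (k - 1)] := condExp_congr_ae hstep
    _ = 0 := condExp_zero

lemma measureReal_deviation_le [IsProbabilityMeasure μ]
    (hT : IsMDPTrajectory μ M K 𝓕 (fun k h ω => (alg ω).st k h) fun k h ω => (alg ω).ac k h)
    (hh : h ∈ Icc 1 M.H) (s : S) (a : A) {n m : ℕ} (hn : 1 ≤ n) (hm : 1 ≤ m) (i : TestFn)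
    (sg : ℤˣ) (t : Averaging) (x : ℝ) :
    μ.real {ω | ∑ k ∈ Icc 1 K, (alg ω).scaledDeviation h s a n m i sg t k ^ 2 + x <
      ∑ k ∈ Icc 1 K, (alg ω).scaledDeviation h s a n m i sg t k} ≤ Real.exp (-x) :=
  measureReal_sum_sq_add_lt_sum_le
    (fun _ hk => hT.stronglyMeasurable_scaledDeviation hk hh s a n m i sg t)
    (fun _ hk ω => (alg ω).abs_scaledDeviation_le hh hn hm hk)
    (fun _ hk => hT.condExp_scaledDeviation_eq_zero hk hh s a n m i sg t) x

end IsMDPTrajectory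

section UnionBound

variable {S A : Type} [Fintype S] [Fintype A] {K H : ℕ} {δ : ℝ}

lemma exp_neg_seven_mul_iota [Nonempty S] [Nonempty A] (hK : 1 ≤ K) (hH : 1 ≤ H) (hδ₀ : 0 < δ) :
    Real.exp (-(7 * iota S A K H δ)) =
      (δ / ((Fintype.card S : ℝ) * Fintype.card A * (K * H))) ^ 7 := by
  have : (0 : ℝ) < K := by exact_mod_cast hK
  have : (0 : ℝ) < H := by exact_mod_cast hH
  have : (0 : ℝ) < Fintype.card S * Fintype.card A := by positivity
  rw [iota, ← mul_neg, ← Real.log_inv, inv_div, ← Nat.cast_ofNat (n := 7), Real.exp_nat_mul,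
    Real.exp_log (by positivity)]

lemma twenty_mul_sq_mul_pow_le {y : ℝ} (hy : 2 ≤ y) (hδ₀ : 0 < δ) (hδ₁ : δ < 1) :
    20 * y ^ 2 * (δ / y) ^ 7 ≤ δ := by
  have : 0 < y := two_pos.trans_le hy
  have hy₅ : (20 : ℝ) ≤ y ^ 5 := by
    calc (20 : ℝ) ≤ 2 ^ 5 := by norm_num
      _ ≤ y ^ 5 := pow_le_pow_left₀ two_pos.le hy 5
  calc 20 * y ^ 2 * (δ / y) ^ 7 = δ * δ ^ 6 * (20 / y ^ 5) := by field_simp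
    _ ≤ δ * 1 * 1 := by
        gcongr
        · exact pow_le_one₀ hδ₀.le hδ₁.le
        · exact (div_le_one (by positivity)).2 hy₅
    _ = δ := by rw [mul_one, mul_one]

lemma card_mul_exp_neg_le [Nontrivial S] [Nonempty A] (hK : 1 ≤ K) (hH : 1 ≤ H) (hδ₀ : 0 < δ)
    (hδ₁ : δ < 1) :
    20 * ((H : ℝ) * (Fintype.card S * Fintype.card A) * K ^ 2) *
      Real.exp (-(7 * iota S A K H δ)) ≤ δ := by
  have hS : (2 : ℝ) ≤ Fintype.card S := by exact_mod_cast Fintype.one_lt_card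
  have hA : (1 : ℝ) ≤ Fintype.card A := by exact_mod_cast Fintype.card_pos
  have hK' : (1 : ℝ) ≤ K := by exact_mod_cast hK
  have hH' : (1 : ℝ) ≤ H := by exact_mod_cast hH
  have hKH : (1 : ℝ) ≤ K * H := one_le_mul_of_one_le_of_one_le hK' hH'
  have hSA : (2 : ℝ) ≤ Fintype.card S * Fintype.card A :=
    hS.trans (le_mul_of_one_le_right (by positivity) hA)
  have hindices : (H : ℝ) * (Fintype.card S * Fintype.card A) * K ^ 2 ≤
      ((Fintype.card S : ℝ) * Fintype.card A * (K * H)) ^ 2 := by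
    calc (H : ℝ) * (Fintype.card S * Fintype.card A) * K ^ 2
        ≤ H * (Fintype.card S * Fintype.card A) * K ^ 2 * (H * (Fintype.card S * Fintype.card A)) :=
          le_mul_of_one_le_right (by positivity)
            (one_le_mul_of_one_le_of_one_le hH' (one_le_two.trans hSA))
      _ = ((Fintype.card S : ℝ) * Fintype.card A * (K * H)) ^ 2 := by ring
  rw [exp_neg_seven_mul_iota hK hH hδ₀]
  exact (mul_le_mul_of_nonneg_right (mul_le_mul_of_nonneg_left hindices (by norm_num))
    (by positivity)).trans (twenty_mul_sq_mul_pow_le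
      (hSA.trans (le_mul_of_one_le_right (by positivity) hKH)) hδ₀ hδ₁)

end UnionBound

section Probability

variable {S A : Type} [Fintype S] [Fintype A]

/-- The parameters `(h, (s, a), n, m, i, sg, t)` of the concentration inequalities in
`QLAlg.GoodEvent`. -/
abbrev DeviationIndex (S A : Type) : Type :=
  ℕ × (S × A) × ℕ × ℕ × TestFn × ℤˣ × Averaging

/-- The parameters over which `QLAlg.GoodEvent` quantifies. -/
def deviationIndices (S A : Type) [Fintype S] [Fintype A] (K H : ℕ) :
    Finset (DeviationIndex S A) :=
  Icc 1 H ×ˢ univ ×ˢ Icc 1 K ×ˢ Icc 1 K ×ˢ univ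

lemma mem_deviationIndices {K H h n m : ℕ} {s : S} {a : A} {i : TestFn} {sg : ℤˣ}
    {t : Averaging} : (h, (s, a), n, m, i, sg, t) ∈ deviationIndices S A K H ↔
      h ∈ Icc 1 H ∧ n ∈ Icc 1 K ∧ m ∈ Icc 1 K := by
  simp only [deviationIndices, mem_product, mem_univ, and_true, true_and]

lemma card_deviationIndices (S A : Type) [Fintype S] [Fintype A] (K H : ℕ) :
    (#(deviationIndices S A K H) : ℝ) =
      20 * ((H : ℝ) * (Fintype.card S * Fintype.card A) * K ^ 2) := by
  have htests : Fintype.card (TestFn × ℤˣ × Averaging) = 20 := rfl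
  simp only [deviationIndices, card_product, Nat.card_Icc, card_univ, htests, Fintype.card_prod,
    Nat.add_sub_cancel]
  push_cast
  ring

variable [Nonempty S] [Nonempty A] [DecidableEq S] [DecidableEq A] {M : MDP S A} {K : ℕ}
  {cb δ : ℝ}

/-- The concentration inequality of `QLAlg.GoodEvent` with parameters `j` fails. -/
def QLAlg.DeviationExceeds (al : QLAlg M K cb δ) (j : DeviationIndex S A) : Prop :=
  let (h, (s, a), n, m, i, sg, t) := j
  ∑ k ∈ Icc 1 K, al.scaledDeviation h s a n m i sg t k ^ 2 + 7 * iota S A K M.H δ <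
    ∑ k ∈ Icc 1 K, al.scaledDeviation h s a n m i sg t k

lemma QLAlg.exists_deviationExceeds {al : QLAlg M K cb δ} (hbad : ¬al.GoodEvent) :
    ∃ j ∈ deviationIndices S A K M.H, al.DeviationExceeds j := by
  simp only [GoodEvent, not_forall, not_le] at hbad
  obtain ⟨h, hh, s, a, n, hn, m, hm, i, sg, t, hlt⟩ := hbad
  exact ⟨(h, (s, a), n, m, i, sg, t), mem_deviationIndices.2 ⟨hh, hn, hm⟩, hlt⟩

lemma QLAlg.goodEvent_of_subsingleton [Subsingleton S] (al : QLAlg M K cb δ) (hK : 1 ≤ K)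
    (hδ₀ : 0 < δ) (hδ₁ : δ < 1) : al.GoodEvent := fun h _ s a n _ m _ i sg t => by
  have := iota_nonneg (S := S) (A := A) hK M.H_pos hδ₀ hδ₁
  simp only [scaledDeviation, deviation_of_subsingleton, mul_zero, ite_self, sum_const_zero]
  positivity

lemma IsMDPTrajectory.measureReal_not_goodEvent_le [MeasurableSpace S]
    [MeasurableSingletonClass S] [MeasurableSpace A] [MeasurableSingletonClass A] {Ω : Type}
    {m0 : MeasurableSpace Ω} {μ : Measure Ω} [IsProbabilityMeasure μ] {𝓕 : Filtration ℕ m0}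
    {alg : Ω → QLAlg M K cb δ}
    (hT : IsMDPTrajectory μ M K 𝓕 (fun k h ω => (alg ω).st k h) fun k h ω => (alg ω).ac k h)
    (hK : 1 ≤ K) (hδ₀ : 0 < δ) (hδ₁ : δ < 1) : μ.real {ω | ¬(alg ω).GoodEvent} ≤ δ := by
  rcases subsingleton_or_nontrivial S with hS | hS
  · simp only [(alg _).goodEvent_of_subsingleton hK hδ₀ hδ₁, not_true_eq_false, Set.ofPred_false,
      measureReal_empty, hδ₀.le]
  have hcover : {ω | ¬(alg ω).GoodEvent} ⊆
      ⋃ j ∈ deviationIndices S A K M.H, {ω | (alg ω).DeviationExceeds j} := fun ω hω => by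
    obtain ⟨j, hj, hexceeds⟩ := QLAlg.exists_deviationExceeds hω
    exact Set.mem_biUnion hj hexceeds
  have hbad : ∀ j ∈ deviationIndices S A K M.H,
      μ.real {ω | (alg ω).DeviationExceeds j} ≤ Real.exp (-(7 * iota S A K M.H δ)) := by
    rintro ⟨h, ⟨s, a⟩, n, m, i, sg, t⟩ hj
    obtain ⟨hh, hn, hm⟩ := mem_deviationIndices.1 hj
    exact hT.measureReal_deviation_le hh s a (mem_Icc.1 hn).1 (mem_Icc.1 hm).1 i sg t _
  calc μ.real {ω | ¬(alg ω).GoodEvent}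
      ≤ μ.real (⋃ j ∈ deviationIndices S A K M.H, {ω | (alg ω).DeviationExceeds j}) :=
        measureReal_mono hcover (measure_ne_top _ _)
    _ ≤ ∑ j ∈ deviationIndices S A K M.H, μ.real {ω | (alg ω).DeviationExceeds j} :=
        measureReal_biUnion_finset_le _ _
    _ ≤ #(deviationIndices S A K M.H) • Real.exp (-(7 * iota S A K M.H δ)) :=
        sum_le_card_nsmul _ _ _ hbad
    _ ≤ δ := by
        rw [nsmul_eq_mul, card_deviationIndices]
        exact card_mul_exp_neg_le hK M.H_pos hδ₀ hδ₁

end Probability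

/-- **Regret decomposition** (Lemma 5 of the paper).
There is a universal constant `c₀ > 0` such that for any MDP, any `δ ∈ (0,1)` and any
bonus constant `cb ≥ c₀`, with probability at least `1 - δ` over the trajectories,
`∑_{k=1}^K (V_1^k(s_1^k) - V_1^{π^k}(s_1^k)) ≤ R₁ + R₂ + R₃`. -/
theorem regret_decomposition_of_QEarlySettledAdvantage :
    ∃ c₀ : ℝ, 0 < c₀ ∧
      ∀ (S A : Type) [Fintype S] [Fintype A] [Nonempty S] [Nonempty A]
        [DecidableEq S] [DecidableEq A]
        [MeasurableSpace S] [MeasurableSingletonClass S]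
        [MeasurableSpace A] [MeasurableSingletonClass A]
        (M : MDP S A) (K : ℕ) (cb δ : ℝ)
        (Ω : Type) (m0 : MeasurableSpace Ω) (μ : Measure Ω)
        (𝓕 : Filtration ℕ m0) (alg : Ω → QLAlg M K cb δ),
        IsProbabilityMeasure μ → 0 < δ → δ < 1 → 1 ≤ K → c₀ ≤ cb →
        IsMDPTrajectory μ M K 𝓕 (fun k h ω => (alg ω).st k h)
          (fun k h ω => (alg ω).ac k h) →
        1 - δ ≤ (μ {ω |
            ∑ k ∈ Icc 1 K,
                ((alg ω).V k 1 ((alg ω).st k 1)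
                  - M.Vpol ((alg ω).pol k) 1 ((alg ω).st k 1))
              ≤ regR1 M K cb δ (alg ω) + regR2 M K cb δ (alg ω)
                  + regR3 M K cb δ (alg ω)}).toReal := by
  refine ⟨1000, by norm_num, ?_⟩
  intro S A _ _ _ _ _ _ _ _ _ _ M K cb δ Ω m0 μ 𝓕 alg _ hδ₀ hδ₁ hK hcb hT
  have hbad : μ.real {ω | ¬(alg ω).GoodEvent} ≤ δ := hT.measureReal_not_goodEvent_le hK hδ₀ hδ₁
  have hregret : ∀ ω, (alg ω).GoodEvent → _ := fun ω hgood =>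
    have hopt : (alg ω).Optimistic := fun _ hk _ hh => hgood.Vstar_le_V hK hδ₀ hδ₁ hcb hk hh
    hopt.sum_V_sub_Vpol_le hK hδ₀ hδ₁ hcb
  have hcover : μ.real Set.univ ≤ _ :=
    (measureReal_mono fun ω _ => (em (alg ω).GoodEvent).imp (hregret ω) id).trans
      (measureReal_union_le _ {ω | ¬(alg ω).GoodEvent})
  rw [probReal_univ] at hcover
  exact sub_le_iff_le_add.2 (hcover.trans (add_le_add_right hbad _))
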